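/- There exist only finitely many pairs of integers (q, a₁) with q ≥ 2 and a₁² ≤ 4q such that the pair (q, a₁) is ordinary (i.e., β is not a root of unity) and −aₙ = ⌊2·q^{n/2}⌋ for some integer n ≥ 13. -/

import Mathlib

open Polynomial

namespace FMO

lemma coeff_prod_of_le {R ι : Type*} [CommRing R] (s : Finset ι) (f : ι → R[X]) (d : ι → ℕ)
    (h : ∀ i ∈ s, (f i).natDegree ≤ d i) :
    (∏ i ∈ s, f i).coeff (∑ i ∈ s, d i) = ∏ i ∈ s, (f i).coeff (d i) ∧
    (∏ i ∈ s, f i).natDegree ≤ ∑ i ∈ s, d i := by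
  classical
  induction s using Finset.induction_on with
  | empty => simp
  | insert a s ha ih =>
    have h1 := ih (fun i hi => h i (Finset.mem_insert_of_mem hi))
    have h2 := h a (Finset.mem_insert_self _ _)
    rw [Finset.prod_insert ha, Finset.sum_insert ha, Finset.prod_insert ha]
    refine ⟨?_, ?_⟩
    · rw [coeff_mul_add_eq_of_natDegree_le h2 h1.2, h1.1]
    · exact natDegree_mul_le_of_le h2 h1.2

lemma coeff_det {R n : Type*} [CommRing R] [Fintype n] [DecidableEq n] (M : Matrix n n R[X])
    (d : n → ℕ) (h : ∀ i j, (M i j).natDegree ≤ d j) :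
    M.det.coeff (∑ j, d j) = (Matrix.of fun i j => (M i j).coeff (d j)).det ∧
    M.det.natDegree ≤ ∑ j, d j := by
  rw [Matrix.det_apply, Matrix.det_apply]
  refine ⟨?_, ?_⟩
  · rw [finsetSum_coeff]
    refine Finset.sum_congr rfl fun σ _ => ?_
    rw [coeff_smul, (coeff_prod_of_le Finset.univ (fun i => M (σ i) i) d (fun i _ => h _ _)).1]
    rfl
  · refine natDegree_sum_le_of_forall_le _ _ fun σ _ => ?_
    refine (natDegree_smul_le _ _).trans ?_
    exact (coeff_prod_of_le Finset.univ (fun i => M (σ i) i) d (fun i _ => h _ _)).2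

lemma sn_sum_le {R ι : Type*} [CommRing R] (N : RingSeminorm R) (s : Finset ι) (f : ι → R) :
    N (∑ i ∈ s, f i) ≤ ∑ i ∈ s, N (f i) :=
  Finset.le_sum_of_subadditive N (map_zero N).le (map_add_le_add N) s f

/-- the l1 seminorm on polynomials -/
noncomputable def l1 {R : Type*} [CommRing R] (N : RingSeminorm R) : RingSeminorm R[X] where
  toFun p := p.sum fun _ c => N c
  map_zero' := by simp
  add_le' := by
    intro p q
    have hz : ∀ n : ℕ, (fun _ c => N c : ℕ → R → ℝ) n 0 = 0 := fun _ => map_zero N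
    set m := max (max p.natDegree q.natDegree) (p+q).natDegree + 1 with hm
    rw [sum_over_range' p hz m (by omega), sum_over_range' q hz m (by omega),
      sum_over_range' (p+q) hz m (by omega), ← Finset.sum_add_distrib]
    refine Finset.sum_le_sum fun i _ => ?_
    rw [coeff_add]; exact map_add_le_add N _ _
  neg' := by
    intro p
    simp only [sum_def, support_neg, coeff_neg, map_neg_eq_map]
  mul_le' := by
    intro p q
    have hz : ∀ n : ℕ, (fun _ c => N c : ℕ → R → ℝ) n 0 = 0 := fun _ => map_zero N
    have hn : (p*q).natDegree < p.natDegree + q.natDegree + 1 := by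
      have := natDegree_mul_le (p := p) (q := q); omega
    rw [sum_over_range' (p*q) hz _ hn]
    have hf : ∀ i, N ((p*q).coeff i) ≤
        ∑ x ∈ Finset.HasAntidiagonal.antidiagonal i, N (p.coeff x.1) * N (q.coeff x.2) := by
      intro i
      rw [coeff_mul]
      refine (sn_sum_le N _ _).trans (Finset.sum_le_sum fun x _ => map_mul_le_mul N _ _) 
    refine (Finset.sum_le_sum fun i _ => hf i).trans ?_
    rw [sum_def, sum_def, Finset.sum_mul_sum, ← Finset.sum_product', Finset.sum_sigma']
    refine (Finset.sum_subset (s₁ := (Finset.range (p.natDegree + q.natDegree+1)).sigma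
      (fun i => (Finset.HasAntidiagonal.antidiagonal i).filter
        (fun x => x.1 ∈ p.support ∧ x.2 ∈ q.support))) ?_ ?_).symm.le.trans ?_
    · exact Finset.sigma_mono subset_rfl (fun i => Finset.filter_subset _ _)
    · rintro ⟨i, x⟩ h1 h2
      by_contra h3
      apply h2
      simp only [Finset.mem_sigma, Finset.mem_filter] at h1 ⊢
      refine ⟨h1.1, h1.2, ?_, ?_⟩
      · rw [mem_support_iff]; intro h; apply h3; simp [h]
      · rw [mem_support_iff]; intro h; apply h3; simp [h]
    · refine le_of_eq (Finset.sum_bij (fun a _ => a.2) ?_ ?_ ?_ ?_)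
      · rintro ⟨i, x⟩ h
        simp only [Finset.mem_sigma, Finset.mem_filter] at h
        exact Finset.mem_product.2 h.2.2
      · rintro ⟨i, x⟩ h ⟨j, y⟩ h' hxy
        simp only [Finset.mem_sigma, Finset.mem_filter, Finset.HasAntidiagonal.mem_antidiagonal] at h h' hxy
        obtain rfl := hxy
        obtain rfl : i = j := by rw [← h.2.1, ← h'.2.1]
        rfl
      · rintro x hx
        have hx' := Finset.mem_product.1 hx
        refine ⟨⟨x.1 + x.2, x⟩, ?_, rfl⟩
        simp only [Finset.mem_sigma, Finset.mem_filter, Finset.HasAntidiagonal.mem_antidiagonal, Finset.mem_range]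
        refine ⟨?_, trivial, hx'⟩
        have := le_natDegree_of_mem_supp _ hx'.1
        have := le_natDegree_of_mem_supp _ hx'.2
        omega
      · intro _ _; rfl

lemma l1_def {R : Type*} [CommRing R] (N : RingSeminorm R) (p : R[X]) :
    l1 N p = p.sum fun _ c => N c := rfl

lemma l1_eq_range {R : Type*} [CommRing R] (N : RingSeminorm R) (p : R[X]) (n : ℕ)
    (h : p.natDegree < n) : l1 N p = ∑ i ∈ Finset.range n, N (p.coeff i) := by
  rw [l1_def, sum_over_range' p (fun _ => map_zero N) n h]

lemma coeff_le_l1 {R : Type*} [CommRing R] (N : RingSeminorm R) (p : R[X]) (i : ℕ) :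
    N (p.coeff i) ≤ l1 N p := by
  rw [l1_eq_range N p (max p.natDegree i + 1) (by omega)]
  exact Finset.single_le_sum (f := fun i => N (p.coeff i)) (fun i _ => apply_nonneg N _)
    (Finset.mem_range.2 (by omega))

lemma l1_monomial {R : Type*} [CommRing R] (N : RingSeminorm R) (i : ℕ) (c : R) :
    l1 N (monomial i c) = N c := by
  rw [l1_def, sum_monomial_index _ _ (map_zero N)]

lemma l1_C {R : Type*} [CommRing R] (N : RingSeminorm R) (c : R) :
    l1 N (C c) = N c := l1_monomial N 0 c

lemma sn_prod_le {R ι : Type*} [CommRing R] (N : RingSeminorm R) (h1 : N 1 ≤ 1) (s : Finset ι)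
    (f : ι → R) (B : ι → ℝ) (h : ∀ i ∈ s, N (f i) ≤ B i) : N (∏ i ∈ s, f i) ≤ ∏ i ∈ s, B i := by
  classical
  induction s using Finset.induction_on with
  | empty => simpa
  | insert a s ha ih =>
    rw [Finset.prod_insert ha, Finset.prod_insert ha]
    have h2 := h a (Finset.mem_insert_self _ _)
    refine (map_mul_le_mul N _ _).trans (mul_le_mul h2
      (ih (fun i hi => h i (Finset.mem_insert_of_mem hi))) (apply_nonneg N _)
      ((apply_nonneg N _).trans h2))

lemma sn_det_le {R n : Type*} [CommRing R] [Fintype n] [DecidableEq n] (N : RingSeminorm R)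
    (h1 : N 1 ≤ 1) (M : Matrix n n R) (B : ℝ) (h : ∀ i j, N (M i j) ≤ B) :
    N M.det ≤ (Fintype.card n).factorial * B ^ (Fintype.card n) := by
  rw [Matrix.det_apply]
  refine (sn_sum_le N _ _).trans ?_
  refine (Finset.sum_le_sum (g := fun _ => B ^ (Fintype.card n)) fun σ _ => ?_).trans ?_
  · have : N (Equiv.Perm.sign σ • ∏ i, M (σ i) i) = N (∏ i, M (σ i) i) := by
      rcases Int.units_eq_one_or (Equiv.Perm.sign σ) with h | h <;> simp [h]
    rw [this]
    refine (sn_prod_le N h1 _ _ (fun _ => B) (fun i _ => h _ _)).trans ?_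
    simp
  · simp [Fintype.card_perm]

end FMO

namespace FMO

lemma zero_est (x : ℂ) (hx : x ≠ 0) (hr : ∀ k : ℕ, 0 < k → x ^ k ≠ 1) (K L R2 S m n : ℕ)
    (p : Fin L → ℂ[X]) (hK : ∀ l, (p l).natDegree < K)
    (hinj : Set.InjOn (fun rs : ℕ × ℕ => rs.1 * m + rs.2 * n)
      (Finset.range R2 ×ˢ Finset.range S : Finset (ℕ × ℕ)))
    (hcard : K * L ≤ R2 * S)
    (hv : ∀ r < R2 + L, ∀ s < S, ∑ l : Fin L, (p l).eval ((r * m + s * n : ℕ) : ℂ) * x ^ (l.1 * r) = 0) :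
    p = 0 := by
  classical
  by_contra hp
  have hxinj : Function.Injective (fun k : ℕ => x ^ k) := by
    have key : ∀ i j : ℕ, i < j → x ^ i ≠ x ^ j := by
      intro i j hij h
      apply hr (j - i) (by omega)
      have : x ^ j = x ^ i * x ^ (j - i) := by rw [← pow_add]; congr 1; omega
      rw [this] at h
      have h2 : x ^ i ≠ 0 := pow_ne_zero _ hx
      exact mul_left_cancel₀ h2 (by rw [← h, mul_one])
    intro i j h
    rcases lt_trichotomy i j with h1 | h1 | h1
    · exact absurd h (key _ _ h1)
    · exact h1
    · exact absurd h.symm (key _ _ h1)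
  set Λ : Finset (Fin L) := Finset.univ.filter (fun l => p l ≠ 0) with hΛ
  set L' := Λ.card with hL'
  set e : Fin L' ↪o Fin L := Λ.orderEmbOfFin rfl with he
  have hpe : ∀ j, p (e j) ≠ 0 := by
    intro j
    have := Λ.orderEmbOfFin_mem rfl j
    exact (Finset.mem_filter.1 this).2
  have hL'L : L' ≤ L := by
    have := Finset.card_le_univ Λ
    simpa using this
  have hL'0 : 0 < L' := by
    rw [hL', Finset.card_pos]
    obtain ⟨l, hl⟩ := Function.ne_iff.1 hp
    exact ⟨l, by simp [hΛ]; exact hl⟩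
  set M : Matrix (Fin L') (Fin L') ℂ[X] := Matrix.of fun i j =>
    C (x ^ (i.1 * (e j).1)) * (p (e j)).comp (X + C ((i.1 * m : ℕ) : ℂ)) with hM
  have hcompdeg : ∀ (i j : Fin L'), ((p (e j)).comp (X + C ((i.1 * m : ℕ) : ℂ))).natDegree = (p (e j)).natDegree := by
    intro i j
    rw [natDegree_comp, natDegree_X_add_C, mul_one]
  have hdeg : ∀ i j, (M i j).natDegree ≤ (p (e j)).natDegree := by
    intro i j
    rw [hM, Matrix.of_apply]
    refine (natDegree_C_mul_le _ _).trans ?_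
    rw [hcompdeg]
  obtain ⟨h1, h2⟩ := coeff_det M (fun j => (p (e j)).natDegree) hdeg
  have hcoef : (Matrix.of fun i j => (M i j).coeff ((p (e j)).natDegree)).det ≠ 0 := by
    have h3 : (Matrix.of fun i j => (M i j).coeff ((p (e j)).natDegree)) =
        Matrix.of fun i j => (p (e j)).leadingCoeff * (Matrix.vandermonde (fun j : Fin L' => x ^ (e j).1)).transpose i j := by
      ext i j
      simp only [Matrix.of_apply, hM, coeff_C_mul, Matrix.transpose_apply, Matrix.vandermonde_apply]
      have h4 : ((p (e j)).comp (X + C ((i.1 * m : ℕ) : ℂ))).coeff ((p (e j)).natDegree)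
          = (p (e j)).leadingCoeff := by
        have := leadingCoeff_comp (p := p (e j)) (q := X + C ((i.1 * m : ℕ) : ℂ)) (by rw [natDegree_X_add_C]; exact one_ne_zero)
        rw [leadingCoeff_X_add_C, one_pow, mul_one] at this
        rw [← this, leadingCoeff, hcompdeg]
      rw [h4, ← pow_mul, mul_comm, mul_comm i.1]
    rw [h3, Matrix.det_mul_row, Matrix.det_transpose]
    refine mul_ne_zero (Finset.prod_ne_zero_iff.2 fun j _ => leadingCoeff_ne_zero.2 (hpe j)) ?_
    rw [Matrix.det_vandermonde_ne_zero_iff]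
    intro i j hij
    exact e.injective (Fin.ext (hxinj hij))
  have hdet : M.det = 0 := by
    have hN : ((Finset.range R2 ×ˢ Finset.range S).image (fun rs : ℕ × ℕ => ((rs.1 * m + rs.2 * n : ℕ) : ℂ))).card = R2 * S := by
      rw [Finset.card_image_of_injOn]
      · simp
      · intro a ha b hb hab
        exact hinj ha hb (Nat.cast_injective hab)
    refine eq_zero_of_natDegree_lt_card_of_eval_eq_zero' _ ((Finset.range R2 ×ˢ Finset.range S).image (fun rs : ℕ × ℕ => ((rs.1 * m + rs.2 * n : ℕ) : ℂ))) ?_ ?_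
    · intro t ht
      obtain ⟨⟨r, s⟩, hrs, rfl⟩ := Finset.mem_image.1 ht
      simp only [Finset.mem_product, Finset.mem_range] at hrs
      rw [← coe_evalRingHom, RingHom.map_det, ← Matrix.exists_mulVec_eq_zero_iff]
      refine ⟨fun j => x ^ ((e j).1 * r), ?_, ?_⟩
      · intro h
        have := congrFun h ⟨0, hL'0⟩
        exact pow_ne_zero _ hx this
      · ext i
        have h5 := hv (i.1 + r) (by have := i.2; omega) s hrs.2
        rw [Pi.zero_apply, ← h5, Matrix.mulVec, dotProduct]
        have h6 : ∑ l : Fin L, (p l).eval (((i.1 + r) * m + s * n : ℕ) : ℂ) * x ^ (l.1 * (i.1 + r))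
            = ∑ l ∈ Λ, (p l).eval (((i.1 + r) * m + s * n : ℕ) : ℂ) * x ^ (l.1 * (i.1 + r)) := by
          symm
          apply Finset.sum_subset (Finset.subset_univ _)
          intro l _ hl
          have : p l = 0 := by
            by_contra h; exact hl (by simp [hΛ, h])
          simp [this]
        rw [h6]
        have h7 : Λ = Finset.univ.map e.toEmbedding := by
          rw [he]; simp
        rw [h7, Finset.sum_map]
        refine Finset.sum_congr rfl fun j _ => ?_
        simp only [hM, RingHom.mapMatrix_apply, Matrix.map_apply, Matrix.of_apply, coe_evalRingHom, eval_mul, eval_C, eval_comp, eval_add, eval_X, RelEmbedding.coe_toEmbedding]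
        have h8 : (((r * m + s * n : ℕ) : ℂ) + ((i.1 * m : ℕ) : ℂ)) = (((i.1 + r) * m + s * n : ℕ) : ℂ) := by
          push_cast; ring
        rw [h8, mul_add, pow_add, mul_comm i.1]; ring
    · rw [hN]
      refine lt_of_le_of_lt h2 ?_
      refine lt_of_lt_of_le (Finset.sum_lt_sum_of_nonempty (g := fun _ => K) ⟨⟨0, hL'0⟩, Finset.mem_univ _⟩ fun j _ => hK _) ?_
      simp only [Finset.sum_const, Finset.card_univ, Fintype.card_fin, smul_eq_mul]
      rw [mul_comm]
      exact (Nat.mul_le_mul_left K hL'L).trans hcard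
  rw [hdet, coeff_zero] at h1
  exact hcoef h1.symm

end FMO

namespace FMO

lemma liouville (q a : ℤ) (hq : 0 < q) (α : ℂ) (hs : α + (starRingEnd ℂ) α = a)
    (hp : α * (starRingEnd ℂ) α = q) (P : ℤ[X]) (J : ℕ) (hJ : P.natDegree ≤ J)
    (h0 : aeval (α ^ 2 / q) P ≠ 0) : 1 ≤ ‖aeval (α ^ 2 / q) P‖ * (q : ℝ) ^ J := by
  have hqc : (q : ℂ) ≠ 0 := by exact_mod_cast hq.ne'
  have hα2 : α ^ 2 = a * α - q := by
    rw [← hs, ← hp]; ring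
  have hpow : ∀ i : ℕ, ∃ u v : ℤ, α ^ i = u + v * α := by
    intro i
    induction i with
    | zero => exact ⟨1, 0, by simp⟩
    | succ i ih =>
      obtain ⟨u, v, h⟩ := ih
      refine ⟨-(v * q), u + v * a, ?_⟩
      rw [pow_succ, h]; push_cast
      linear_combination (v : ℂ) * hα2
  have hz : ∃ u v : ℤ, aeval (α ^ 2 / q) P * (q : ℂ) ^ J = u + v * α := by
    rw [aeval_eq_sum_range, Finset.sum_mul]
    have : ∀ i ∈ Finset.range (P.natDegree + 1), ∃ u v : ℤ,
        (P.coeff i • (α ^ 2 / (q : ℂ)) ^ i) * (q : ℂ) ^ J = u + v * α := by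
      intro i hi
      rw [Finset.mem_range] at hi
      obtain ⟨u, v, h⟩ := hpow (2 * i)
      refine ⟨P.coeff i * q ^ (J - i) * u, P.coeff i * q ^ (J - i) * v, ?_⟩
      have h1 : (q : ℂ) ^ J = q ^ (J - i) * q ^ i := by rw [← pow_add]; congr 1; omega
      rw [h1, div_pow, ← pow_mul, h, zsmul_eq_mul]
      push_cast
      field_simp
    choose! u v h using this
    refine ⟨∑ i ∈ Finset.range (P.natDegree + 1), u i, ∑ i ∈ Finset.range (P.natDegree + 1), v i, ?_⟩
    rw [Finset.sum_congr rfl h, Finset.sum_add_distrib]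
    push_cast
    rw [Finset.sum_mul]
  obtain ⟨u, v, h⟩ := hz
  have hne : aeval (α ^ 2 / q) P * (q : ℂ) ^ J ≠ 0 := mul_ne_zero h0 (pow_ne_zero _ hqc)
  have hnorm : ‖aeval (α ^ 2 / q) P * (q : ℂ) ^ J‖ = ‖aeval (α ^ 2 / q) P‖ * (q : ℝ) ^ J := by
    rw [norm_mul, norm_pow, Complex.norm_intCast, abs_of_pos (by exact_mod_cast hq)]
  rw [← hnorm]
  have hsq : (Complex.normSq (aeval (α ^ 2 / q) P * (q : ℂ) ^ J) : ℂ) = ((u ^ 2 + u * v * a + v ^ 2 * q : ℤ) : ℂ) := by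
    rw [← Complex.mul_conj, h]
    push_cast
    simp only [map_add, map_mul, map_intCast]
    rw [← hs, ← hp]; ring
  have hsq' : Complex.normSq (aeval (α ^ 2 / q) P * (q : ℂ) ^ J) = ((u ^ 2 + u * v * a + v ^ 2 * q : ℤ) : ℝ) := by
    exact_mod_cast hsq
  have hpos := Complex.normSq_pos.2 hne
  rw [hsq'] at hpos
  have h1 : (1 : ℤ) ≤ u ^ 2 + u * v * a + v ^ 2 * q := by
    have : (0 : ℤ) < u ^ 2 + u * v * a + v ^ 2 * q := by exact_mod_cast hpos
    omega
  have h2 : (1 : ℝ) ≤ Complex.normSq (aeval (α ^ 2 / q) P * (q : ℂ) ^ J) := by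
    rw [hsq']; exact_mod_cast h1
  rw [Complex.normSq_eq_norm_sq] at h2
  nlinarith [norm_nonneg (aeval (α ^ 2 / q) P * (q : ℂ) ^ J)]

lemma pigeon {ι φ : Type*} [Fintype ι] [Fintype φ] [DecidableEq ι] (a : φ → ι → ℝ) (B : ℝ) (hB : 0 < B)
    (ha : ∀ f, ∑ i, |a f i| ≤ B) (A : ℕ) (hA : 1 ≤ A) (hN : 3 * Fintype.card φ ≤ Fintype.card ι)
    (hN0 : 0 < Fintype.card ι) :
    ∃ c : ι → ℤ, c ≠ 0 ∧ (∀ i, |c i| ≤ A) ∧ ∀ f, |∑ i, a f i * c i| ≤ B / A := by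
  classical
  have hA0 : (0 : ℝ) < A := by exact_mod_cast hA
  let s : Finset (ι → ℕ) := Fintype.piFinset fun _ => Finset.range (A + 1)
  let t : Finset (φ → ℤ) := Fintype.piFinset fun _ => Finset.Icc (-(A : ℤ) ^ 2) ((A : ℤ) ^ 2)
  let F : (ι → ℕ) → φ → ℤ := fun c f => ⌊(∑ i, a f i * c i) * (A / B)⌋
  have hst : t.card < s.card := by
    simp only [s, t, Fintype.card_piFinset, Finset.card_range, Int.card_Icc, Finset.prod_const, Finset.card_univ]
    have h1 : ((A : ℤ) ^ 2 + 1 - -(A : ℤ) ^ 2).toNat = 2 * A ^ 2 + 1 := by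
      have : ((A : ℤ) ^ 2 + 1 - -(A : ℤ) ^ 2) = ((2 * A ^ 2 + 1 : ℕ) : ℤ) := by push_cast; ring
      rw [this, Int.toNat_natCast]
    rw [h1]
    have h2 : 2 * A ^ 2 + 1 < (A + 1) ^ 3 := by nlinarith
    rcases Nat.eq_zero_or_pos (Fintype.card φ) with h | h
    · rw [h, pow_zero]
      exact Nat.one_lt_pow hN0.ne' (by omega)
    · calc (2 * A ^ 2 + 1) ^ Fintype.card φ < ((A + 1) ^ 3) ^ Fintype.card φ := Nat.pow_lt_pow_left h2 h.ne'
        _ = (A + 1) ^ (3 * Fintype.card φ) := by rw [← pow_mul]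
        _ ≤ _ := Nat.pow_le_pow_right (by omega) hN
  have hmap : ∀ c ∈ s, F c ∈ t := by
    intro c hc
    simp only [s, t, Fintype.mem_piFinset, Finset.mem_range, Finset.mem_Icc] at hc ⊢
    intro f
    have hv : |∑ i, a f i * c i| ≤ B * A := by
      calc |∑ i, a f i * c i| ≤ ∑ i, |a f i * c i| := Finset.abs_sum_le_sum_abs _ _
        _ ≤ ∑ i, |a f i| * A := by
            refine Finset.sum_le_sum fun i _ => ?_
            rw [abs_mul, Nat.abs_cast]
            refine mul_le_mul_of_nonneg_left ?_ (abs_nonneg _)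
            have := hc i
            exact_mod_cast Nat.lt_succ_iff.1 this
        _ ≤ B * A := by rw [← Finset.sum_mul]; exact mul_le_mul_of_nonneg_right (ha f) hA0.le
    have hv2 : |(∑ i, a f i * c i) * (A / B)| ≤ (A : ℝ) ^ 2 := by
      rw [abs_mul, abs_of_pos (div_pos hA0 hB)]
      calc _ ≤ B * A * (A / B) := mul_le_mul_of_nonneg_right hv (div_pos hA0 hB).le
        _ = _ := by field_simp
    rw [abs_le] at hv2
    constructor
    · apply Int.le_floor.2; push_cast; exact hv2.1
    · have : ((⌊(∑ i, a f i * c i) * (A / B)⌋ : ℤ) : ℝ) ≤ ((A ^ 2 : ℤ) : ℝ) := by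
        push_cast; exact (Int.floor_le _).trans hv2.2
      exact_mod_cast this
  obtain ⟨c, hc, c', hc', hne, heq⟩ := Finset.exists_ne_map_eq_of_card_lt_of_maps_to hst hmap
  refine ⟨fun i => (c i : ℤ) - c' i, ?_, ?_, ?_⟩
  · intro h
    apply hne
    funext i
    have := congrFun h i
    simp at this
    omega
  · intro i
    simp only [s, Fintype.mem_piFinset, Finset.mem_range] at hc hc'
    have := hc i; have := hc' i
    show |(c i : ℤ) - c' i| ≤ A
    rw [abs_le]; constructor <;> omega
  · intro f
    have h1 := congrFun heq f
    have h2 := Int.abs_sub_lt_one_of_floor_eq_floor h1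
    rw [← sub_mul, ← Finset.sum_sub_distrib, abs_mul, abs_of_pos (div_pos hA0 hB)] at h2
    have h3 : ∑ i, a f i * (((c i : ℤ) - c' i : ℤ) : ℝ) = ∑ i, (a f i * c i - a f i * c' i) := by
      refine Finset.sum_congr rfl fun i _ => ?_
      push_cast; ring
    rw [h3, le_div_iff₀ hA0]
    rw [← mul_div_assoc, div_lt_one hB] at h2
    exact h2.le

end FMO

namespace FMO

/-- binomial polynomial in scaled variable -/
noncomputable def Bp (T k : ℕ) : ℂ[X] :=
  C (1 / (k.factorial : ℂ)) * ∏ i ∈ Finset.range k, (C (T : ℂ) * X - C (i : ℂ))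

noncomputable def Ep (z : ℂ) (J : ℕ) : ℂ[X] :=
  ∑ j ∈ Finset.range J, monomial j (z ^ j / (j.factorial : ℂ))

lemma Bp_eval (T k t : ℕ) (hT : T ≠ 0) : (Bp T k).eval ((t : ℂ) / T) = (t.choose k : ℂ) := by
  have hT' : (T : ℂ) ≠ 0 := by exact_mod_cast hT
  have h1 : (∏ i ∈ Finset.range k, (C (T : ℂ) * X - C (i : ℂ))).eval ((t : ℂ) / T) = (t.descFactorial k : ℂ) := by
    rw [eval_prod, ← descPochhammer_eval_eq_descFactorial, descPochhammer_eval_eq_prod_range]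
    refine Finset.prod_congr rfl fun i _ => ?_
    simp
    field_simp
  rw [Bp, eval_mul, eval_C, h1, Nat.descFactorial_eq_factorial_mul_choose]
  have : (k.factorial : ℂ) ≠ 0 := by exact_mod_cast k.factorial_ne_zero
  push_cast
  field_simp

lemma Bp_deg (T k : ℕ) : (Bp T k).natDegree ≤ k := by
  refine (natDegree_C_mul_le _ _).trans ?_
  refine (natDegree_prod_le _ _).trans ?_
  refine (Finset.sum_le_sum (g := fun _ => 1) fun i _ => ?_).trans (by simp)
  compute_degree

lemma Bp_l1 (T k K : ℕ) (hk : k < K) : l1 (normRingSeminorm ℂ) (Bp T k) ≤ ((T + K : ℕ) : ℝ) ^ k / k.factorial := by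
  have hone : l1 (normRingSeminorm ℂ) (1 : ℂ[X]) ≤ 1 := by
    rw [← C_1, l1_C]
    show ‖(1 : ℂ)‖ ≤ 1
    simp
  rw [Bp]
  refine (map_mul_le_mul _ _ _).trans ?_
  rw [l1_C, div_eq_inv_mul (((T + K : ℕ) : ℝ) ^ k)]
  have h1 : normRingSeminorm ℂ (1 / (k.factorial : ℂ)) = ((k.factorial : ℝ))⁻¹ := by
    show ‖(1 / (k.factorial : ℂ))‖ = _
    simp
  rw [h1]
  refine mul_le_mul_of_nonneg_left ?_ (by positivity)
  refine (sn_prod_le _ hone _ _ (fun _ => ((T + K : ℕ) : ℝ)) ?_).trans (by simp)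
  intro i hi
  have hi' : i < k := Finset.mem_range.1 hi
  refine (map_sub_le_add _ _ _).trans ?_
  rw [l1_C]
  have h2 : C (T : ℂ) * X = monomial 1 (T : ℂ) := by rw [C_mul_X_eq_monomial]
  rw [h2, l1_monomial]
  show ‖(T : ℂ)‖ + ‖(i : ℂ)‖ ≤ _
  rw [Complex.norm_natCast, Complex.norm_natCast]
  exact_mod_cast (by omega : T + i ≤ T + K)

lemma Ep_deg (z : ℂ) (J : ℕ) (hJ : 0 < J) : (Ep z J).natDegree < J := by
  refine lt_of_le_of_lt (natDegree_sum_le_of_forall_le (n := J - 1) _ _ ?_) (by omega)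
  intro j hj
  have := Finset.mem_range.1 hj
  exact (natDegree_monomial_le _).trans (by omega)

lemma Ep_l1 (z : ℂ) (J : ℕ) : l1 (normRingSeminorm ℂ) (Ep z J) ≤ Real.exp ‖z‖ := by
  refine (sn_sum_le _ _ _).trans ?_
  refine le_trans (le_of_eq ?_) (Real.sum_le_exp_of_nonneg (norm_nonneg z) J)
  refine Finset.sum_congr rfl fun j _ => ?_
  rw [l1_monomial]
  show ‖z ^ j / (j.factorial : ℂ)‖ = _
  simp

lemma Ep_eval (z : ℂ) (J : ℕ) (u : ℂ) : (Ep z J).eval u = ∑ j ∈ Finset.range J, (z * u) ^ j / (j.factorial : ℂ) := by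
  rw [Ep, eval_finsetSum]
  refine Finset.sum_congr rfl fun j _ => ?_
  rw [eval_monomial, mul_pow]; ring

lemma fact_lb (K : ℕ) (k : ℕ) : (K : ℝ) ^ k / k.factorial ≤ 3 ^ K := by
  have h := Real.pow_div_factorial_le_exp (K : ℝ) (by positivity) k
  refine h.trans ?_
  rw [← mul_one (K : ℝ), Real.exp_nat_mul]
  exact pow_le_pow_left₀ (by positivity) (by linarith [Real.exp_one_lt_d9]) _

lemma pow_fact_le (y K k : ℕ) (n : ℝ) (hK : 0 < K) (hk : k < K) (hn : 1 ≤ n) (hy : (y : ℝ) ≤ n * K) :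
    (y : ℝ) ^ k / k.factorial ≤ (3 * n) ^ K := by
  calc (y : ℝ) ^ k / k.factorial ≤ (n * K) ^ k / k.factorial := by gcongr
    _ = n ^ k * ((K : ℝ) ^ k / k.factorial) := by rw [mul_pow]; ring
    _ ≤ n ^ K * 3 ^ K := by
        refine mul_le_mul (pow_le_pow_right₀ hn hk.le) (fact_lb K k) (by positivity) (by positivity)
    _ = _ := by rw [← mul_pow, mul_comm]

lemma aux_fun (D S n A : ℕ) (hD : 780 ≤ D) (hS : 0 < S) (hn : D ≤ n) (hA : 1 ≤ A) :
    ∃ c : Fin (D * S) × Fin 60 → ℤ, c ≠ 0 ∧ (∀ i, |c i| ≤ A) ∧ ∀ t : ℕ, t ≤ 2 * S * n →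
      (∀ k : Fin (D * S), (t.choose k : ℝ) ≤ (9 * n) ^ (D * S)) ∧
      ‖∑ i, (c i : ℂ) * (t.choose i.1 : ℂ) * Complex.exp (2 * Real.pi * Complex.I * (i.2 : ℕ) * t / n)‖ ≤
        2 * (10 * (D * S)) * (60 * (D * S)) * (27 * n) ^ (D * S) / A
          + A * (60 * (D * S)) * (9 * n) ^ (D * S) * (2 * (260 / D) ^ (9 * (D * S))) := by
  set K := D * S with hKdef
  have hK : 0 < K := by positivity
  set T := 2 * S * n with hT
  have hn0 : 0 < n := by omega
  have hT0 : 0 < T := by positivity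
  have hnR : (0 : ℝ) < n := by exact_mod_cast hn0
  have hSR : (0 : ℝ) < S := by exact_mod_cast hS
  have hDR : (780 : ℝ) ≤ D := by exact_mod_cast hD
  have hKR : (K : ℝ) = D * S := by rw [hKdef]; push_cast; ring
  set J := 9 * K with hJ
  let z : ℕ → ℂ := fun l => 2 * Real.pi * Complex.I * l * T / n
  have hz : ∀ l < 60, ‖z l‖ ≤ 780 * S := by
    intro l hl
    have : ‖z l‖ = 2 * Real.pi * l * T / n := by
      simp [z, abs_of_pos Real.pi_pos]
    rw [this, hT]
    push_cast
    have h1 : (l : ℝ) ≤ 60 := by exact_mod_cast hl.le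
    have h2 := Real.pi_lt_d2
    have h3 : 2 * Real.pi * l * (2 * S * n) / n = 4 * (Real.pi * l) * S := by field_simp; ring
    rw [h3]
    have h4 : Real.pi * l ≤ 3.15 * 60 := mul_le_mul h2.le h1 (by positivity) (by norm_num)
    nlinarith
  let G : Fin K × Fin 60 → ℂ[X] := fun i => Bp T i.1 * Ep (z i.2) J
  have hGl1 : ∀ i, l1 (normRingSeminorm ℂ) (G i) ≤ (9 * n) ^ K * 3 ^ K := by
    intro i
    refine (map_mul_le_mul _ _ _).trans ?_
    refine mul_le_mul ?_ ?_ (apply_nonneg _ _) (by positivity)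
    · refine (Bp_l1 T i.1 K i.1.2).trans ?_
      have := pow_fact_le (T + K) K i.1 (3 * n) hK i.1.2 (by
        have : (1 : ℝ) ≤ n := by exact_mod_cast hn0
        linarith) (by
        push_cast; rw [hKR, hT]; push_cast
        have h5 : (1 : ℝ) ≤ n := by exact_mod_cast hn0
        have h6 : (S : ℝ) * n * 1 ≤ S * n * D := mul_le_mul_of_nonneg_left (by linarith) (by positivity)
        have h7 : (D : ℝ) * S * 1 ≤ D * S * n := mul_le_mul_of_nonneg_left h5 (by positivity)
        nlinarith)
      refine this.trans (le_of_eq ?_)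
      ring
    · refine (Ep_l1 _ _).trans ?_
      have h1 : ‖z i.2‖ ≤ K := by
        refine (hz i.2 i.2.2).trans ?_
        rw [hKR]; nlinarith
      refine (Real.exp_le_exp.2 h1).trans ?_
      rw [← mul_one (K : ℝ), Real.exp_nat_mul]
      exact pow_le_pow_left₀ (by positivity) (by linarith [Real.exp_one_lt_d9]) _
  have hGdeg : ∀ i, (G i).natDegree < 10 * K := by
    intro i
    refine lt_of_le_of_lt natDegree_mul_le ?_
    have h1 := Bp_deg T i.1
    have h2 := Ep_deg (z i.2) J (by omega)
    have h3 := i.1.2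
    omega
  set B0 : ℝ := (27 * n) ^ K with hB0
  have hB0' : (9 * n : ℝ) ^ K * 3 ^ K = B0 := by rw [hB0, ← mul_pow]; ring
  have hcoef : ∀ i j, ‖(G i).coeff j‖ ≤ B0 := fun i j => by
    rw [← hB0']; exact (coeff_le_l1 (normRingSeminorm ℂ) (G i) j).trans (hGl1 i)
  have hB0pos : 0 < B0 := by positivity
  let a : Fin (10 * K) × Bool → Fin K × Fin 60 → ℝ := fun f i =>
    if f.2 then ((G i).coeff f.1).re else ((G i).coeff f.1).im
  have hKR0 : (0 : ℝ) < K := by exact_mod_cast hK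
  obtain ⟨c, hc0, hcA, hcf⟩ := pigeon a (60 * K * B0) (by positivity) (by
    intro f
    refine (Finset.sum_le_sum (g := fun _ => B0) fun i _ => ?_).trans ?_
    · rcases f with ⟨j, b⟩
      cases b
      · exact (Complex.abs_im_le_norm _).trans (hcoef i j)
      · exact (Complex.abs_re_le_norm _).trans (hcoef i j)
    · simp [mul_comm]) A hA (by simp; omega) (by simp; omega)
  refine ⟨c, hc0, hcA, ?_⟩
  intro t ht
  have hTR : (0 : ℝ) < T := by exact_mod_cast hT0
  have hAR : (0 : ℝ) < A := by exact_mod_cast hA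
  -- first part
  have hfirst : ‖∑ i, (c i : ℂ) * (G i).eval ((t : ℂ) / T)‖ ≤ 10 * K * (2 * (60 * K * B0 / A)) := by
    have h1 : ∑ i, (c i : ℂ) * (G i).eval ((t : ℂ) / T) =
        ∑ j ∈ Finset.range (10 * K), (∑ i, (c i : ℂ) * (G i).coeff j) * ((t : ℂ) / T) ^ j := by
      simp_rw [fun i => eval_eq_sum_range' (hGdeg i) ((t : ℂ) / T), Finset.mul_sum, Finset.sum_mul]
      rw [Finset.sum_comm]
      refine Finset.sum_congr rfl fun j _ => Finset.sum_congr rfl fun i _ => by ring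
    rw [h1]
    refine (norm_sum_le _ _).trans ?_
    refine (Finset.sum_le_sum (g := fun _ => 2 * (60 * K * B0 / A)) fun j hj => ?_).trans ?_
    · rw [norm_mul]
      have h2 : ‖((t : ℂ) / T) ^ j‖ ≤ 1 := by
        rw [norm_pow, norm_div, Complex.norm_natCast, Complex.norm_natCast]
        refine pow_le_one₀ (by positivity) ?_
        rw [div_le_one hTR]; exact_mod_cast ht
      refine (mul_le_of_le_one_right (norm_nonneg _) h2).trans ?_
      refine (Complex.norm_le_abs_re_add_abs_im _).trans ?_
      have h3 := hcf (⟨j, Finset.mem_range.1 hj⟩, true)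
      have h4 := hcf (⟨j, Finset.mem_range.1 hj⟩, false)
      have h5 : (∑ i, (c i : ℂ) * (G i).coeff j).re = ∑ i, a (⟨j, Finset.mem_range.1 hj⟩, true) i * c i := by
        rw [Complex.re_sum]
        refine Finset.sum_congr rfl fun i _ => ?_
        simp [a, mul_comm]
      have h6 : (∑ i, (c i : ℂ) * (G i).coeff j).im = ∑ i, a (⟨j, Finset.mem_range.1 hj⟩, false) i * c i := by
        rw [Complex.im_sum]
        refine Finset.sum_congr rfl fun i _ => ?_
        simp [a, mul_comm]
      rw [h5, h6]; linarith
    · simp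
  have htail : ∀ l < 60, ‖Complex.exp (2 * Real.pi * Complex.I * (l : ℕ) * t / n) - (Ep (z l) J).eval ((t : ℂ) / T)‖ ≤ 2 * (260 / D) ^ J := by
    intro l hl
    rw [Ep_eval]
    have h1 : z l * ((t : ℂ) / T) = 2 * Real.pi * Complex.I * (l : ℕ) * t / n := by
      have : (T : ℂ) ≠ 0 := by exact_mod_cast hT0.ne'
      simp only [z]; field_simp
    rw [← h1]
    have hw : ‖z l * ((t : ℂ) / T)‖ ≤ 780 * S := by
      rw [norm_mul, norm_div (t : ℂ), Complex.norm_natCast, Complex.norm_natCast]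
      refine (mul_le_of_le_one_right (norm_nonneg _) ?_).trans (hz l hl)
      rw [div_le_one hTR]; exact_mod_cast ht
    have hJR : (J : ℝ) = 9 * (D * S) := by rw [hJ]; push_cast; rw [hKR]
    have h2 : ‖z l * ((t : ℂ) / T)‖ / (J.succ : ℝ) ≤ 1 / 2 := by
      rw [div_le_div_iff₀ (by positivity) (by norm_num)]
      push_cast
      rw [hJR]
      nlinarith
    refine (Complex.exp_bound' h2).trans ?_
    rw [mul_comm]
    refine mul_le_mul_of_nonneg_left ?_ (by norm_num)
    calc ‖z l * ((t : ℂ) / T)‖ ^ J / J.factorial ≤ (780 * S) ^ J / J.factorial := by gcongr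
      _ = (260 / (3 * D)) ^ J * ((J : ℝ) ^ J / J.factorial) := by
          rw [hJR, ← mul_div_assoc, ← mul_pow]; congr 2; field_simp; norm_num
      _ ≤ (260 / (3 * D)) ^ J * 3 ^ J := mul_le_mul_of_nonneg_left (fact_lb J J) (by positivity)
      _ = _ := by rw [← mul_pow]; congr 1; field_simp
  have hchoose : ∀ k : Fin K, (t.choose k : ℝ) ≤ (9 * n) ^ K := by
    intro k
    have h1 : (t.choose k : ℝ) ≤ (t : ℝ) ^ (k : ℕ) / (k : ℕ).factorial := by
      have := Nat.choose_le_pow_div (α := ℝ) k t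
      exact this
    refine h1.trans ?_
    have := pow_fact_le t K k (3 * n) hK k.2 (by
        have : (1 : ℝ) ≤ n := by exact_mod_cast hn0
        linarith) (by
        have h2 : (t : ℝ) ≤ T := by exact_mod_cast ht
        refine h2.trans ?_
        rw [hKR, hT]; push_cast
        have h6 : (S : ℝ) * n * 1 ≤ S * n * D := mul_le_mul_of_nonneg_left (by linarith) (by positivity)
        nlinarith [mul_pos hSR hnR])
    refine this.trans (le_of_eq ?_)
    ring
  have hsplit : ∑ i : Fin K × Fin 60, (c i : ℂ) * (t.choose i.1 : ℂ) * Complex.exp (2 * Real.pi * Complex.I * (i.2 : ℕ) * t / n)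
      = ∑ i, (c i : ℂ) * (G i).eval ((t : ℂ) / T) + ∑ i : Fin K × Fin 60, (c i : ℂ) * (t.choose i.1 : ℂ) *
        (Complex.exp (2 * Real.pi * Complex.I * (i.2 : ℕ) * t / n) - (Ep (z i.2) J).eval ((t : ℂ) / T)) := by
    rw [← Finset.sum_add_distrib]
    refine Finset.sum_congr rfl fun i _ => ?_
    simp only [G, eval_mul, Bp_eval T _ t hT0.ne']
    ring
  refine ⟨hchoose, ?_⟩
  rw [hsplit]
  refine (norm_add_le _ _).trans (add_le_add (hfirst.trans (le_of_eq ?_)) ?_)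
  · rw [hKR]; ring
  · refine (norm_sum_le _ _).trans ?_
    refine (Finset.sum_le_sum (g := fun _ => (A : ℝ) * (9 * n) ^ K * (2 * (260 / D) ^ J)) fun i _ => ?_).trans ?_
    · rw [norm_mul, norm_mul, Complex.norm_intCast, Complex.norm_natCast]
      refine mul_le_mul (mul_le_mul ?_ (hchoose _) (by positivity) (by positivity)) (htail _ i.2.2) (norm_nonneg _) (by positivity)
      exact_mod_cast hcA i
    · simp only [Finset.sum_const, Finset.card_univ, Fintype.card_prod, Fintype.card_fin, nsmul_eq_mul]
      push_cast
      rw [hKR]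
      exact le_of_eq (by ring)

end FMO

namespace FMO

lemma num_T1 : ∃ D0 : ℕ, 780 ≤ D0 ∧ ∀ D ≥ D0, ∀ n : ℕ, D ^ 4 ≤ n → n ≤ 16 * D ^ 4 →
    ∀ q l : ℕ, 2 ≤ q → q ≤ 2 ^ l → 2 ^ l ≤ q ^ 2 → ∀ ε : ℝ, 0 ≤ ε → ε ^ 4 * (q : ℝ) ^ n ≤ 1 →
    ∀ R S K : ℕ, R = 60 * (D + 1) → S = R * l → K = D * S →
    4 * (10 * K) * (60 * K) ^ 2 * (243 * (n : ℝ) ^ 2) ^ K * ((q : ℝ) ^ (60 * R)) ^ 2 *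
      (2 * (260 / (D : ℝ)) ^ (9 * K) + 60 * R * ε) < 1 / 2 := by
  have hlim := tendsto_pow_const_div_const_pow_of_one_lt 8 (show (1 : ℝ) < 2 by norm_num)
  have hev := (hlim.eventually (gt_mem_nhds (show (0 : ℝ) < 1 / (8 * 3981312) by norm_num)))
  obtain ⟨D1, hD1⟩ := Filter.eventually_atTop.1 hev
  refine ⟨max D1 (16 * 3981312 * 260 ^ 9), ?_, ?_⟩
  · exact le_trans (by norm_num) (le_max_right _ _)
  intro D hD n hn1 hn2 q l hq hql hlq ε hε hεq R S K hR hS hK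
  have hDa : D1 ≤ D := le_trans (le_max_left _ _) hD
  have hDb : 16 * 3981312 * 260 ^ 9 ≤ D := le_trans (le_max_right _ _) hD
  have hD780 : 780 ≤ D := le_trans (by norm_num) hDb
  have hl : 1 ≤ l := by
    rcases Nat.eq_zero_or_pos l with h | h
    · rw [h] at hql; omega
    · exact h
  have hDbR : (16 * 3981312 * 260 ^ 9 : ℝ) ≤ D := by exact_mod_cast hDb
  have hDpos : (0 : ℝ) < D := by
    have : (780 : ℝ) ≤ D := by exact_mod_cast hD780
    linarith
  have hpow := hD1 D hDa
  have hpow2 : (8 * 3981312) * (D : ℝ) ^ 8 ≤ 2 ^ D := by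
    rw [div_lt_div_iff₀ (by positivity) (by norm_num)] at hpow
    linarith
  have hR1 : 1 ≤ R := by omega
  have hS1 : 1 ≤ S := by rw [hS]; exact Nat.mul_pos hR1 hl
  have hKS : 780 * S ≤ K := by rw [hK]; exact Nat.mul_le_mul_right _ hD780
  have hK18 : 18 ≤ K := by omega
  have hRS : R ≤ S := by rw [hS]; exact Nat.le_mul_of_pos_right _ hl
  have hK2 : (K : ℝ) ≤ 2 ^ K := by exact_mod_cast Nat.lt_two_pow_self.le
  have hc : (4 * 10 * 60 ^ 2 : ℝ) ≤ 2 ^ K := by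
    calc (4 * 10 * 60 ^ 2 : ℝ) ≤ 2 ^ 18 := by norm_num
      _ ≤ 2 ^ K := pow_le_pow_right₀ (by norm_num) hK18
  have hnn : (243 * (n : ℝ) ^ 2) ^ K ≤ (62208 * (D : ℝ) ^ 8) ^ K := by
    refine pow_le_pow_left₀ (by positivity) ?_ _
    have : (n : ℝ) ≤ 16 * D ^ 4 := by exact_mod_cast hn2
    have : (n : ℝ) ^ 2 ≤ (16 * D ^ 4) ^ 2 := pow_le_pow_left₀ (by positivity) this 2
    nlinarith
  have hth : ((q : ℝ) ^ (60 * R)) ^ 2 ≤ 4 ^ K := by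
    have : (q : ℝ) ≤ 2 ^ l := by exact_mod_cast hql
    calc ((q : ℝ) ^ (60 * R)) ^ 2 = (q : ℝ) ^ (120 * R) := by rw [← pow_mul]; congr 1; ring
      _ ≤ (2 ^ l) ^ (120 * R) := pow_le_pow_left₀ (by positivity) this _
      _ = 2 ^ (120 * S) := by rw [← pow_mul, hS]; congr 1; ring
      _ ≤ 2 ^ (2 * K) := pow_le_pow_right₀ (by norm_num) (by omega)
      _ = 4 ^ K := by rw [pow_mul]; norm_num
  set W : ℝ := 4 * (10 * K) * (60 * K) ^ 2 * (243 * (n : ℝ) ^ 2) ^ K * ((q : ℝ) ^ (60 * R)) ^ 2 with hW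
  have hWle : W ≤ (3981312 * (D : ℝ) ^ 8) ^ K := by
    calc W = (4 * 10 * 60 ^ 2) * (K : ℝ) ^ 3 * (243 * (n : ℝ) ^ 2) ^ K * ((q : ℝ) ^ (60 * R)) ^ 2 := by rw [hW]; ring
      _ ≤ 2 ^ K * (2 ^ K) ^ 3 * (62208 * (D : ℝ) ^ 8) ^ K * 4 ^ K := by gcongr
      _ = (3981312 * (D : ℝ) ^ 8) ^ K := by
        rw [← pow_mul, mul_comm K 3, pow_mul, ← mul_pow, ← mul_pow, ← mul_pow]
        congr 1; ring
  have hW0 : 0 ≤ W := by positivity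
  have h1 : W * (2 * (260 / (D : ℝ)) ^ (9 * K)) ≤ 1 / 8 := by
    calc W * (2 * (260 / (D : ℝ)) ^ (9 * K)) ≤ (3981312 * (D : ℝ) ^ 8) ^ K * (2 * (260 / (D : ℝ)) ^ (9 * K)) := by gcongr
      _ = 2 * (3981312 * 260 ^ 9 / D) ^ K := by
        rw [pow_mul, mul_left_comm, ← mul_pow]; congr 2; field_simp
      _ ≤ 2 * (1 / 16) ^ K := by
        refine mul_le_mul_of_nonneg_left (pow_le_pow_left₀ (by positivity) ?_ _) (by norm_num)
        rw [div_le_div_iff₀ hDpos (by norm_num)]; linarith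
      _ ≤ 2 * (1 / 16) ^ 1 := by
        refine mul_le_mul_of_nonneg_left (pow_le_pow_of_le_one (by norm_num) (by norm_num) (by omega)) (by norm_num)
      _ = 1 / 8 := by norm_num
  have h2 : W * (60 * R * ε) < 1 / 4 := by
    have hRK : (60 * R : ℝ) ≤ 2 ^ K := by
      refine le_trans ?_ hK2
      exact_mod_cast (by omega : 60 * R ≤ K)
    have h3 : W * (60 * R * ε) ≤ (2 * 3981312 * (D : ℝ) ^ 8) ^ K * ε := by
      calc W * (60 * R * ε) = (60 * R) * W * ε := by ring
        _ ≤ 2 ^ K * (3981312 * (D : ℝ) ^ 8) ^ K * ε := by gcongr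
        _ = _ := by rw [← mul_pow]; ring
    refine lt_of_le_of_lt h3 ?_
    have h4 : ((4 : ℝ) * ((2 * 3981312 * (D : ℝ) ^ 8) ^ K * ε)) < 1 := by
      by_contra hcon
      push Not at hcon
      have h5 : (1 : ℝ) ≤ 2 ^ (D * K) * ε := by
        calc (1 : ℝ) ≤ (4 : ℝ) * ((2 * 3981312 * (D : ℝ) ^ 8) ^ K * ε) := hcon
          _ ≤ 4 ^ K * ((2 * 3981312 * (D : ℝ) ^ 8) ^ K * ε) := by
            gcongr
            exact le_self_pow₀ (by norm_num) (by omega)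
          _ = ((8 * 3981312) * (D : ℝ) ^ 8) ^ K * ε := by rw [← mul_assoc, ← mul_pow]; ring
          _ ≤ (2 ^ D) ^ K * ε := by gcongr
          _ = _ := by rw [pow_mul]
      have h6 : (1 : ℝ) ≤ 2 ^ (8 * (D * K)) * ε ^ 8 := by
        calc (1 : ℝ) = 1 ^ 8 := by norm_num
          _ ≤ (2 ^ (D * K) * ε) ^ 8 := pow_le_pow_left₀ (by norm_num) h5 8
          _ = _ := by rw [mul_pow, ← pow_mul]; ring
      have h7 : ε ^ 8 * 2 ^ (l * n) ≤ 1 := by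
        have : (2 : ℝ) ^ l ≤ (q : ℝ) ^ 2 := by exact_mod_cast hlq
        calc ε ^ 8 * 2 ^ (l * n) = ε ^ 8 * (2 ^ l) ^ n := by rw [pow_mul]
          _ ≤ ε ^ 8 * ((q : ℝ) ^ 2) ^ n := by gcongr
          _ = (ε ^ 4 * (q : ℝ) ^ n) ^ 2 := by rw [mul_pow, ← pow_mul, ← pow_mul, ← pow_mul]; ring
          _ ≤ 1 := pow_le_one₀ (by positivity) hεq
      have h8 : 8 * (D * K) + 1 ≤ l * n := by
        have e1 : 8 * (D * K) = l * (D ^ 2 * (480 * (D + 1))) := by rw [hK, hS, hR]; ring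
        have e2 : 480 * (D + 1) + 1 ≤ D ^ 2 := by nlinarith
        have e3 : D ^ 2 * (480 * (D + 1)) + 1 ≤ n := by
          have : D ^ 2 * (480 * (D + 1) + 1) ≤ D ^ 2 * D ^ 2 := Nat.mul_le_mul_left _ e2
          have e4 : D ^ 2 * D ^ 2 = D ^ 4 := by ring
          have : 1 ≤ D ^ 2 := Nat.one_le_pow _ _ (by omega)
          nlinarith
        calc _ ≤ l * (D ^ 2 * (480 * (D + 1))) + l := by omega
          _ = l * (D ^ 2 * (480 * (D + 1)) + 1) := by ring
          _ ≤ _ := Nat.mul_le_mul_left _ e3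
      have h9 : (2 : ℝ) * 2 ^ (8 * (D * K)) ≤ 2 ^ (l * n) := by
        rw [← pow_succ']; exact pow_le_pow_right₀ (by norm_num) h8
      have h10 : (2 : ℝ) * (2 ^ (8 * (D * K)) * ε ^ 8) ≤ 1 := by
        have := mul_le_mul_of_nonneg_right h9 (by positivity : (0 : ℝ) ≤ ε ^ 8)
        linarith
      linarith
    rw [lt_div_iff₀ (by norm_num), mul_comm]
    exact h4
  rw [mul_add]
  linarith

end FMO

namespace FMO

lemma norm_pow_sub_le (x w : ℂ) (hx : ‖x‖ = 1) (hw : ‖w‖ = 1) (k : ℕ) : ‖w ^ k - x ^ k‖ ≤ k * ‖x - w‖ := by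
  induction k with
  | zero => simp
  | succ k ih =>
    have : w ^ (k + 1) - x ^ (k + 1) = w * (w ^ k - x ^ k) - (x - w) * x ^ k := by ring
    rw [this]
    refine (norm_sub_le _ _).trans ?_
    rw [norm_mul, norm_mul, hw, norm_pow, hx, one_pow]
    push_cast
    linarith

set_option maxHeartbeats 2000000 in
theorem T1 : ∃ N0 : ℕ, ∀ (q a : ℤ) (α : ℂ) (n m : ℕ), 2 ≤ q → α + (starRingEnd ℂ) α = a →
    α * (starRingEnd ℂ) α = q → N0 ≤ n → m ≤ n → (∀ k : ℕ, 0 < k → (α ^ 2 / q) ^ k ≠ 1) →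
    ‖α ^ 2 / q - Complex.exp (2 * Real.pi * Complex.I * m / n)‖ ^ 4 * (q : ℝ) ^ n ≤ 1 → False := by
  obtain ⟨D0, hD0, hnum⟩ := num_T1
  refine ⟨D0 ^ 4, ?_⟩
  intro q a α n m hq2 hs hp hn hmn hroot happ
  have hq0 : 0 < q := by omega
  have hliou := liouville q a hq0 α hs hp
  set x := α ^ 2 / (q : ℂ) with hx
  set ω := Complex.exp (2 * Real.pi * Complex.I * m / n) with hω
  have hqc : (q : ℂ) ≠ 0 := by exact_mod_cast hq0.ne'
  have hxn : ‖x‖ = 1 := by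
    rw [hx, norm_div, norm_pow, Complex.norm_intCast, ← Complex.normSq_eq_norm_sq]
    rw [Complex.mul_conj] at hp
    have h1 : Complex.normSq α = q := by exact_mod_cast hp
    have hqr : (0 : ℝ) < q := by exact_mod_cast hq0
    rw [h1, abs_of_pos hqr, div_self hqr.ne']
  have hωn : ‖ω‖ = 1 := by
    rw [hω, Complex.norm_exp]
    simp
  have hx0 : x ≠ 0 := by intro h; rw [h] at hxn; simp at hxn
  set ε := ‖x - ω‖ with hε
  have hε0 : 0 ≤ ε := norm_nonneg _
  have hpd := norm_pow_sub_le x ω hxn hωn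
  rw [← hε] at hpd
  set D := Nat.sqrt (Nat.sqrt n) with hD
  have hDD0 : D0 ≤ D := by
    rw [hD, Nat.le_sqrt, Nat.le_sqrt]
    calc _ = D0 ^ 4 := by ring
      _ ≤ n := hn
  have hD780 : 780 ≤ D := hD0.trans hDD0
  have hDn : D ^ 4 ≤ n := by
    have h1 : D * D ≤ Nat.sqrt n := Nat.sqrt_le _
    have h2 : Nat.sqrt n * Nat.sqrt n ≤ n := Nat.sqrt_le _
    calc D ^ 4 = (D * D) * (D * D) := by ring
      _ ≤ Nat.sqrt n * Nat.sqrt n := Nat.mul_le_mul h1 h1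
      _ ≤ n := h2
  have hDn2 : n ≤ 16 * D ^ 4 := by
    have h1 : Nat.sqrt n < (D + 1) * (D + 1) := Nat.lt_succ_sqrt _
    have h2 : n < (Nat.sqrt n + 1) * (Nat.sqrt n + 1) := Nat.lt_succ_sqrt _
    have h3 : Nat.sqrt n + 1 ≤ 4 * D ^ 2 := by nlinarith
    calc n ≤ (Nat.sqrt n + 1) * (Nat.sqrt n + 1) := h2.le
      _ ≤ (4 * D ^ 2) * (4 * D ^ 2) := Nat.mul_le_mul h3 h3
      _ = _ := by ring
  have hDle : D ≤ n := le_trans (Nat.le_self_pow (by norm_num) D) hDn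
  have hn0 : 0 < n := by omega
  have hn0c : (n : ℂ) ≠ 0 := by exact_mod_cast hn0.ne'
  obtain ⟨Q, hQ⟩ := Int.eq_ofNat_of_zero_le hq0.le
  have hQ2 : 2 ≤ Q := by omega
  have hqQ : (q : ℝ) = (Q : ℝ) := by rw [hQ]; simp
  rw [hqQ] at happ hliou
  set l := Nat.log 2 Q + 1 with hl
  have hQl : Q ≤ 2 ^ l := (Nat.lt_pow_succ_log_self (by norm_num) Q).le
  have hlQ : 2 ^ l ≤ Q ^ 2 := by
    have h1 : 2 ^ Nat.log 2 Q ≤ Q := Nat.pow_log_le_self 2 (by omega)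
    rw [hl, pow_succ]; nlinarith
  have hl1 : 1 ≤ l := by omega
  set R := 60 * (D + 1) with hR
  set S := R * l with hS
  set K := D * S with hK
  have hfin := hnum D hDD0 n hDn hDn2 Q l hQ2 hQl hlQ ε hε0 happ R S K hR hS hK
  have hRS : R ≤ S := Nat.le_mul_of_pos_right _ hl1
  have hS0 : 0 < S := by omega
  have hK0 : 0 < K := Nat.mul_pos (by omega) hS0
  set Θ : ℝ := (Q : ℝ) ^ (60 * R) with hΘ
  have hQR : (1 : ℝ) ≤ Q := by exact_mod_cast (by omega : 1 ≤ Q)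
  have hΘ1 : 1 ≤ Θ := one_le_pow₀ hQR
  have hnR : (1 : ℝ) ≤ n := by exact_mod_cast hn0
  have hKR : (1 : ℝ) ≤ K := by exact_mod_cast hK0
  -- small order
  have hsmall : 60 * R * ε * Θ < 1 := by
    set W : ℝ := 4 * (10 * K) * (60 * K) ^ 2 * (243 * (n : ℝ) ^ 2) ^ K with hW
    have hW1 : 1 ≤ W := by
      have h1 : (1 : ℝ) ≤ (243 * (n : ℝ) ^ 2) ^ K := one_le_pow₀ (by nlinarith)
      have h2 : (1 : ℝ) ≤ 4 * (10 * K) * (60 * K) ^ 2 := by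
        have : (1 : ℝ) ≤ (60 * K) ^ 2 := one_le_pow₀ (by linarith)
        nlinarith
      rw [hW]; nlinarith
    have h3 : 0 ≤ 2 * (260 / (D : ℝ)) ^ (9 * K) := by positivity
    have h4 : 60 * R * ε * Θ ≤ W * Θ ^ 2 * (2 * (260 / (D : ℝ)) ^ (9 * K) + 60 * R * ε) := by
      calc 60 * R * ε * Θ = 1 * Θ * (0 + 60 * R * ε) := by ring
        _ ≤ W * Θ ^ 2 * (2 * (260 / (D : ℝ)) ^ (9 * K) + 60 * R * ε) := by
          gcongr
          exact le_self_pow₀ hΘ1 (by norm_num)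
    linarith
  have hord : ∀ h : ℕ, 0 < h → h < 60 * D → ¬ n ∣ h * m := by
    rintro h h0 hlt ⟨w, hw⟩
    have h1 : ω ^ h = 1 := by
      rw [hω, ← Complex.exp_nat_mul, Complex.exp_eq_one_iff]
      refine ⟨w, ?_⟩
      have : (h : ℂ) * m = n * w := by exact_mod_cast hw
      field_simp
      push_cast
      linear_combination this
    have h2 := hliou (X ^ h - 1) (60 * R) (by
      refine (natDegree_sub_le _ _).trans ?_
      simp; omega) (by
      simp; exact sub_ne_zero.2 (hroot h h0))
    have h3 : aeval x (X ^ h - 1 : ℤ[X]) = x ^ h - 1 := by simp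
    rw [h3, ← h1, norm_sub_rev] at h2
    have h4 := hpd h
    have h5 : (h : ℝ) ≤ 60 * R := by exact_mod_cast (by omega : h ≤ 60 * R)
    have h6 : ‖ω ^ h - x ^ h‖ ≤ 60 * R * ε := h4.trans (by gcongr)
    have := mul_le_mul_of_nonneg_right h6 (by linarith : 0 ≤ Θ)
    linarith
  have hinj : Set.InjOn (fun rs : ℕ × ℕ => rs.1 * m + rs.2 * n)
      (Finset.range (60 * D) ×ˢ Finset.range S : Finset (ℕ × ℕ)) := by
    have key : ∀ r s r' s' : ℕ, r ≤ r' → r' < 60 * D → r * m + s * n = r' * m + s' * n → r = r' ∧ s = s' := by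
      intro r s r' s' hrr hr' h
      rcases Nat.eq_or_lt_of_le hrr with h1 | h1
      · subst h1
        refine ⟨rfl, ?_⟩
        have : s * n = s' * n := by omega
        exact Nat.eq_of_mul_eq_mul_right hn0 this
      · exfalso
        apply hord (r' - r) (by omega) (by omega)
        have : (r' - r) * m + s' * n = s * n := by
          rw [Nat.sub_mul]
          have : r * m ≤ r' * m := Nat.mul_le_mul_right _ hrr
          omega
        rw [Nat.dvd_add_iff_left (Dvd.intro_left s' rfl), this]
        exact Dvd.intro_left s rfl
    rintro ⟨r, s⟩ h1 ⟨r', s'⟩ h2 h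
    simp only [Finset.coe_product, Set.mem_prod, Finset.coe_range, Set.mem_Iio] at h1 h2
    simp only at h
    rcases le_total r r' with hle | hle
    · obtain ⟨e1, e2⟩ := key r s r' s' hle h2.1 h
      rw [e1, e2]
    · obtain ⟨e1, e2⟩ := key r' s' r s hle h1.1 h.symm
      rw [e1, e2]
  set A : ℕ := 4 * (10 * K) * (60 * K) * (27 * n) ^ K * Q ^ (60 * R) with hA
  have hA1 : 1 ≤ A := by
    have : 0 < A := by positivity
    omega
  obtain ⟨c, hc0, hcA, hct⟩ := aux_fun D S n A hD780 hS0 hDle hA1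
  apply hc0
  -- vanishing
  have hvan : ∀ r < 60 * D + 60, ∀ s < S, ∑ i : Fin (D * S) × Fin 60,
      (c i : ℂ) * ((r * m + s * n).choose i.1 : ℂ) * x ^ ((i.2 : ℕ) * r) = 0 := by
    intro r hr s hs
    set t := r * m + s * n with ht
    have htT : t ≤ 2 * S * n := by
      have h1 : r * m ≤ S * n := Nat.mul_le_mul (by omega) hmn
      have h2 : s * n ≤ S * n := Nat.mul_le_mul_right _ hs.le
      calc t ≤ S * n + S * n := by omega
        _ = _ := by ring
    obtain ⟨hch, hbd⟩ := hct t htT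
    have hexp : ∀ i : Fin (D * S) × Fin 60, Complex.exp (2 * Real.pi * Complex.I * (i.2 : ℕ) * t / n) = ω ^ ((i.2 : ℕ) * r) := by
      intro i
      rw [hω, ← Complex.exp_nat_mul, Complex.exp_eq_exp_iff_exists_int]
      refine ⟨(i.2 : ℕ) * s, ?_⟩
      rw [ht]
      push_cast
      field_simp
    simp_rw [hexp] at hbd
    by_contra hne
    let P : ℤ[X] := ∑ i : Fin (D * S) × Fin 60, monomial ((i.2 : ℕ) * r) (c i * (t.choose i.1 : ℤ))
    have hPx : aeval x P = ∑ i : Fin (D * S) × Fin 60,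
      (c i : ℂ) * (t.choose i.1 : ℂ) * x ^ ((i.2 : ℕ) * r) := by
      simp [P, aeval_monomial]
    have hPdeg : P.natDegree ≤ 60 * R := by
      refine natDegree_sum_le_of_forall_le _ _ fun i _ => (natDegree_monomial_le _).trans ?_
      exact Nat.mul_le_mul i.2.2.le (by omega)
    have h1 := hliou P (60 * R) hPdeg (by rw [hPx]; exact hne)
    rw [hPx] at h1
    have h2 : ‖∑ i : Fin (D * S) × Fin 60, (c i : ℂ) * (t.choose i.1 : ℂ) * x ^ ((i.2 : ℕ) * r)
       - ∑ i : Fin (D * S) × Fin 60, (c i : ℂ) * (t.choose i.1 : ℂ) * ω ^ ((i.2 : ℕ) * r)‖ ≤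
        A * (60 * K) * (9 * n) ^ K * (60 * R * ε) := by
      rw [← Finset.sum_sub_distrib]
      refine (norm_sum_le _ _).trans ?_
      refine (Finset.sum_le_sum (g := fun _ => (A : ℝ) * (9 * n) ^ K * (60 * R * ε)) fun i _ => ?_).trans ?_
      · rw [← mul_sub, norm_mul, norm_mul, Complex.norm_intCast, Complex.norm_natCast]
        refine mul_le_mul (mul_le_mul ?_ (hch _) (by positivity) (by positivity)) ?_ (norm_nonneg _) (by positivity)
        · exact_mod_cast hcA i
        · rw [norm_sub_rev]
          refine (hpd _).trans ?_
          gcongr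
          have : (i.2 : ℕ) * r ≤ 60 * R := Nat.mul_le_mul i.2.2.le (by omega)
          exact_mod_cast this
      · simp only [Finset.sum_const, Finset.card_univ, Fintype.card_prod, Fintype.card_fin, nsmul_eq_mul]
        rw [← hK]
        push_cast
        exact le_of_eq (by ring)
    have h3 := norm_sub_norm_le (∑ i : Fin (D * S) × Fin 60, (c i : ℂ) * (t.choose i.1 : ℂ) * x ^ ((i.2 : ℕ) * r))
       (∑ i : Fin (D * S) × Fin 60, (c i : ℂ) * (t.choose i.1 : ℂ) * ω ^ ((i.2 : ℕ) * r))
    set Y := ‖∑ i : Fin (D * S) × Fin 60, (c i : ℂ) * (t.choose i.1 : ℂ) * x ^ ((i.2 : ℕ) * r)‖ with hY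
    have hKK : (D : ℝ) * S = K := by rw [hK]; push_cast; ring
    rw [hKK] at hbd
    change ‖_‖ ≤ 2 * (10 * (K : ℝ)) * (60 * K) * (27 * n) ^ K / A + A * (60 * K) * (9 * n) ^ K * (2 * (260 / D) ^ (9 * K)) at hbd
    have h4 : Y ≤ 2 * (10 * K) * (60 * K) * (27 * n) ^ K / A
      + A * (60 * K) * (9 * n) ^ K * (2 * (260 / D) ^ (9 * K) + 60 * R * ε) := by
      rw [mul_add]; linarith
    have h5 : 2 * (10 * K) * (60 * K) * (27 * n : ℝ) ^ K / A * Θ = 1 / 2 := by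
      rw [hA, hΘ]; push_cast
      field_simp
      norm_num
    have h6 : A * (60 * K) * (9 * n) ^ K * (2 * (260 / D) ^ (9 * K) + 60 * R * ε) * Θ < 1 / 2 := by
      refine lt_of_eq_of_lt ?_ hfin
      have : (243 * (n : ℝ) ^ 2) ^ K = (27 * n) ^ K * (9 * n) ^ K := by rw [← mul_pow]; ring
      rw [this, hA]; push_cast; rw [← hΘ]; ring
    have h7 := mul_le_mul_of_nonneg_right h4 (by linarith : 0 ≤ Θ)
    rw [add_mul] at h7
    linarith
  let p : Fin 60 → ℂ[X] := fun l => ∑ k : Fin (D * S), C (c (k, l) : ℂ) * Bp 1 k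
  have hpe : ∀ l, ∀ t : ℕ, (p l).eval (t : ℂ) = ∑ k : Fin (D * S), (c (k, l) : ℂ) * (t.choose k : ℂ) := by
    intro l t
    simp only [p, eval_finsetSum, eval_mul, eval_C]
    refine Finset.sum_congr rfl fun k _ => ?_
    have := Bp_eval 1 k t one_ne_zero
    rw [Nat.cast_one, div_one] at this
    rw [this]
  have hp0 : p = 0 := by
    refine zero_est x hx0 hroot K 60 (60 * D) S m n p ?_ hinj (by rw [hK]; exact le_of_eq (by ring)) ?_
    · intro l
      refine lt_of_le_of_lt (natDegree_sum_le_of_forall_le (n := K - 1) _ _ fun k _ => ?_) (by omega)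
      refine (natDegree_C_mul_le _ _).trans ((Bp_deg _ _).trans ?_)
      have := k.2
      omega
    · intro r hr s hs
      rw [← hvan r hr s hs, Fintype.sum_prod_type_right]
      refine Finset.sum_congr rfl fun l _ => ?_
      rw [hpe, Finset.sum_mul]
  have hcl : ∀ (l : Fin 60) (k : ℕ) (hk : k < D * S), c (⟨k, hk⟩, l) = 0 := by
    intro l k
    induction k using Nat.strong_induction_on with
    | _ k ih =>
      intro hk
      have h1 := hpe l k
      rw [hp0] at h1
      rw [Finset.sum_eq_single ⟨k, hk⟩] at h1
      · simp at h1; exact_mod_cast h1.symm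
      · rintro ⟨j, hj⟩ _ hne
        rcases lt_trichotomy j k with h2 | h2 | h2
        · rw [ih j h2 hj]; simp
        · exact absurd (Fin.ext h2) hne
        · rw [Nat.choose_eq_zero_of_lt h2]; simp
      · simp
  funext i
  exact hcl i.2 i.1 i.1.2

end FMO

namespace FMO

noncomputable def hmat {k : ℕ} (f : Fin k → ℚ[X]) : Matrix (Fin k) (Fin k) ℚ[X] :=
  Matrix.of fun i j => hasseDeriv (j : ℕ) (f i)

lemma det_choose_ne_zero {k : ℕ} (v : Fin k → ℕ) (hv : Function.Injective v) :
    (Matrix.of fun i j : Fin k => ((v i).choose (j : ℕ) : ℚ)).det ≠ 0 := by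
  have h1 := Matrix.det_eval_matrixOfPolynomials_eq_det_vandermonde (R := ℚ) (fun i => (v i : ℚ))
    (fun j : Fin k => descPochhammer ℚ (j : ℕ)) (fun i => descPochhammer_natDegree ℚ i)
    (fun i => monic_descPochhammer ℚ i)
  have h2 : (Matrix.of fun i j : Fin k => (descPochhammer ℚ (j : ℕ)).eval (v i : ℚ)) =
      Matrix.of fun i j : Fin k => (((j : ℕ).factorial : ℕ) : ℚ) * (Matrix.of fun i j : Fin k => ((v i).choose (j : ℕ) : ℚ)) i j := by
    ext i j
    simp only [Matrix.of_apply]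
    rw [descPochhammer_eval_eq_descFactorial, Nat.descFactorial_eq_factorial_mul_choose]
    push_cast; rfl
  have h3 : (Matrix.vandermonde (fun i => (v i : ℚ))).det ≠ 0 := by
    rw [Matrix.det_vandermonde_ne_zero_iff]
    intro i j h
    exact hv (Nat.cast_injective (R := ℚ) h)
  rw [h1, h2, Matrix.det_mul_row] at h3
  exact right_ne_zero_of_mul h3

lemma hmat_inj {k : ℕ} (f : Fin k → ℚ[X]) (h0 : ∀ i, f i ≠ 0)
    (hinj : Function.Injective fun i => (f i).natDegree) : (hmat f).det ≠ 0 := by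
  set N : Matrix (Fin k) (Fin k) ℚ[X] := Matrix.of fun i j => X ^ (j : ℕ) * hmat f i j with hN
  have h1 : N.det = (∏ j : Fin k, (X : ℚ[X]) ^ (j : ℕ)) * (hmat f).det := Matrix.det_mul_row _ _
  have hdeg : ∀ i j, (N.transpose i j).natDegree ≤ (f j).natDegree := by
    intro i j
    simp only [hN, Matrix.transpose_apply, Matrix.of_apply, hmat]
    by_cases hij : (i : ℕ) ≤ (f j).natDegree
    · refine natDegree_mul_le.trans ?_
      have := natDegree_hasseDeriv_le (f j) (i : ℕ)
      rw [natDegree_X_pow]; omega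
    · rw [hasseDeriv_eq_zero_of_lt_natDegree _ _ (by omega), mul_zero]; simp
  obtain ⟨h2, -⟩ := coeff_det N.transpose (fun j => (f j).natDegree) hdeg
  rw [Matrix.det_transpose] at h2
  have h3 : (Matrix.of fun i j => (N.transpose i j).coeff (f j).natDegree) =
      Matrix.of fun i j => (f j).leadingCoeff *
        (Matrix.of fun i j : Fin k => (((f i).natDegree).choose (j : ℕ) : ℚ)).transpose i j := by
    ext i j
    simp only [hN, Matrix.transpose_apply, Matrix.of_apply, hmat]
    by_cases hij : (i : ℕ) ≤ (f j).natDegree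
    · rw [coeff_X_pow_mul', if_pos hij, hasseDeriv_coeff, Nat.sub_add_cancel hij, leadingCoeff]
      ring
    · rw [hasseDeriv_eq_zero_of_lt_natDegree _ _ (by omega), mul_zero, coeff_zero,
        Nat.choose_eq_zero_of_lt (by omega)]
      simp
  have h4 := Matrix.det_mul_row (fun j => (f j).leadingCoeff) (Matrix.of fun i j : Fin k => (((f i).natDegree).choose (j : ℕ) : ℚ)).transpose
  rw [Matrix.det_transpose] at h4
  rw [h3, h4] at h2
  intro h
  rw [h1, h, mul_zero, coeff_zero] at h2
  refine mul_ne_zero (Finset.prod_ne_zero_iff.2 fun j _ => leadingCoeff_ne_zero.2 (h0 j)) (det_choose_ne_zero _ hinj) h2.symm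

theorem wronskian_ne_zero {k : ℕ} (f : Fin k → ℚ[X]) (hf : LinearIndependent ℚ f) : (hmat f).det ≠ 0 := by
  induction hs : ∑ i, (f i).natDegree using Nat.strong_induction_on generalizing f with
  | _ s ih =>
    have h0 : ∀ i, f i ≠ 0 := fun i => hf.ne_zero i
    by_cases hinj : Function.Injective fun i => (f i).natDegree
    · exact hmat_inj f h0 hinj
    · rw [Function.Injective] at hinj
      push Not at hinj
      obtain ⟨a, b, hab, hne⟩ := hinj
      set r := (f a).leadingCoeff / (f b).leadingCoeff with hr
      have hlb : (f b).leadingCoeff ≠ 0 := leadingCoeff_ne_zero.2 (h0 b)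
      have hr0 : r ≠ 0 := div_ne_zero (leadingCoeff_ne_zero.2 (h0 a)) hlb
      set g := Function.update f a (f a - r • f b) with hg
      have hgind : LinearIndependent ℚ g := by
        rw [Fintype.linearIndependent_iff] at hf ⊢
        intro c hc
        have h1 : ∑ l, (c l - if l = b then c a * r else 0) • f l = 0 := by
          rw [← hc]
          simp only [sub_smul, Finset.sum_sub_distrib, ite_smul, zero_smul, Finset.sum_ite_eq', Finset.mem_univ, if_true]
          rw [← Finset.add_sum_erase _ _ (Finset.mem_univ a), ← Finset.add_sum_erase (a := a) _ (fun i => c i • g i) (Finset.mem_univ a)]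
          have h2 : ∑ x ∈ Finset.univ.erase a, c x • g x = ∑ x ∈ Finset.univ.erase a, c x • f x := by
            refine Finset.sum_congr rfl fun x hx => ?_
            rw [hg, Function.update_of_ne (Finset.ne_of_mem_erase hx)]
          rw [h2, hg, Function.update_self, smul_sub, smul_smul]
          abel
        have h2 := hf _ h1
        have ha : c a = 0 := by
          have := h2 a
          rwa [if_neg hne, sub_zero] at this
        intro l
        have := h2 l
        rw [ha] at this
        simpa using this
      have hga : g a ≠ 0 := hgind.ne_zero a
      have hga' : g a = f a - r • f b := by rw [hg, Function.update_self]
      have hlt : (g a).natDegree < (f a).natDegree := by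
        apply natDegree_lt_natDegree hga
        rw [hga']
        have hrb : (r • f b).leadingCoeff = (f a).leadingCoeff := by
          rw [smul_eq_C_mul, leadingCoeff_mul, leadingCoeff_C, hr, div_mul_cancel₀ _ hlb]
        apply degree_sub_lt_left _ (h0 a) hrb.symm
        rw [degree_eq_natDegree (h0 a), smul_eq_C_mul, degree_C_mul hr0, degree_eq_natDegree (h0 b)]
        exact_mod_cast hab
      have hsum : ∑ i, (g i).natDegree < s := by
        rw [← hs]
        refine Finset.sum_lt_sum (fun i _ => ?_) ⟨a, Finset.mem_univ _, hlt⟩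
        by_cases hi : i = a
        · rw [hi]; exact hlt.le
        · rw [hg, Function.update_of_ne hi]
      have h5 := ih _ hsum g hgind rfl
      have h6 : hmat g = (hmat f).updateRow a (hmat f a + C (-r) • hmat f b) := by
        ext1 i j
        by_cases hi : i = a
        · subst hi
          rw [Matrix.updateRow_self]
          simp only [hmat, Matrix.of_apply, hga', Pi.add_apply, Pi.smul_apply, map_sub, map_smul]
          rw [smul_eq_mul, map_neg, neg_mul, ← smul_eq_C_mul, sub_eq_add_neg]
        · rw [Matrix.updateRow_ne hi]
          simp only [hmat, Matrix.of_apply, hg, Function.update_of_ne hi]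
      rw [h6, Matrix.det_updateRow_add_smul_self _ hne] at h5
      exact h5

end FMO

namespace FMO

section tau
variable {R : Type*} [CommRing R]

/-- coefficientwise Hasse derivative (in the inner variable) -/
noncomputable def hX (i : ℕ) (P : R[X][X]) : R[X][X] :=
  ∑ b ∈ Finset.range (P.natDegree + 1), monomial b (hasseDeriv i (P.coeff b))

lemma hX_coeff (i : ℕ) (P : R[X][X]) (b : ℕ) : (hX i P).coeff b = hasseDeriv i (P.coeff b) := by
  rw [hX, finsetSum_coeff]
  simp only [coeff_monomial]
  rw [Finset.sum_ite_eq']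
  split_ifs with h
  · rfl
  · rw [coeff_eq_zero_of_natDegree_lt (by simpa using h), map_zero]

lemma hX_add (i : ℕ) (P Q : R[X][X]) : hX i (P + Q) = hX i P + hX i Q := by
  ext1 b; simp [hX_coeff]

lemma hX_zero (i : ℕ) : hX i (0 : R[X][X]) = 0 := by
  ext1 b; simp [hX_coeff]

lemma hX_sum {ι : Type*} (i : ℕ) (s : Finset ι) (f : ι → R[X][X]) :
    hX i (∑ l ∈ s, f l) = ∑ l ∈ s, hX i (f l) := by
  ext1 b; simp [hX_coeff, finsetSum_coeff]

lemma hX_hasse (i j : ℕ) (P : R[X][X]) : hX i (hasseDeriv j P) = hasseDeriv j (hX i P) := by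
  ext1 b
  rw [hX_coeff, hasseDeriv_coeff, hasseDeriv_coeff, hX_coeff]
  rw [← nsmul_eq_mul, ← nsmul_eq_mul, map_nsmul]

lemma hX_hX (i j : ℕ) (P : R[X][X]) : hX i (hX j P) = ((i + j).choose i) • hX (i + j) P := by
  ext1 b
  rw [hX_coeff, hX_coeff, coeff_smul, hX_coeff]
  have := congrArg (fun f => f (P.coeff b)) (hasseDeriv_comp (R := R) i j)
  simpa using this

lemma hX_natDegree (i : ℕ) (P : R[X][X]) : (hX i P).natDegree ≤ P.natDegree := by
  rw [natDegree_le_iff_coeff_eq_zero]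
  intro N hN
  rw [hX_coeff, coeff_eq_zero_of_natDegree_lt hN, map_zero]

noncomputable def tay (y : R) : R[X] →+* R[X] := (taylorAlgHom y).toRingHom

lemma tay_apply (y : R) (p : R[X]) : tay y p = taylor y p := rfl

noncomputable def tau (y z : R) : R[X][X] →+* R[X][X] :=
  (taylorAlgHom (C z)).toRingHom.comp (mapRingHom (tay y))

lemma tau_apply (y z : R) (P : R[X][X]) :
    tau y z P = taylor (C z) (P.map (tay y)) := rfl

lemma tau_coeff (y z : R) (P : R[X][X]) (j : ℕ) :
    (tau y z P).coeff j = taylor y ((hasseDeriv j P).eval (C z)) := by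
  rw [tau_apply, taylor_coeff]
  have h1 : hasseDeriv j (P.map (tay y)) =
      (hasseDeriv j P).map (tay y) := by
    ext1 n
    rw [coeff_map, hasseDeriv_coeff, hasseDeriv_coeff, coeff_map, map_mul, map_natCast]
  have h2 : (C z : R[X]) = (tay y) (C z) := by
    simp [tay_apply]
  rw [h1]
  conv_lhs => rw [h2]
  rw [eval_map, eval₂_hom]
  rfl

lemma hasse_eval_C (i : ℕ) (Q : R[X][X]) (z : R) :
    hasseDeriv i (Q.eval (C z)) = (hX i Q).eval (C z) := by
  rw [eval_eq_sum_range, eval_eq_sum_range' (Nat.lt_succ_of_le (hX_natDegree i Q)), map_sum]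
  refine Finset.sum_congr rfl fun n _ => ?_
  rw [hX_coeff, ← C_pow, mul_comm, ← smul_eq_C_mul, map_smul, smul_eq_C_mul, mul_comm]

lemma tau_coeff_coeff (y z : R) (P : R[X][X]) (i j : ℕ) :
    ((tau y z P).coeff j).coeff i = evalEval y z (hX i (hasseDeriv j P)) := by
  rw [tau_coeff, taylor_coeff, hasse_eval_C]

lemma tau_hX_hasse (y z : R) (P : R[X][X]) (i j a b : ℕ) :
    ((tau y z (hX i (hasseDeriv j P))).coeff b).coeff a =
      ((a + i).choose a : R) * ((b + j).choose b : R) * ((tau y z P).coeff (b + j)).coeff (a + i) := by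
  rw [tau_coeff_coeff, tau_coeff_coeff, ← hX_hasse, hX_hX]
  have := congrArg (fun f => f P) (hasseDeriv_comp (R := R[X]) b j)
  simp only [LinearMap.comp_apply, LinearMap.smul_apply] at this
  rw [this]
  have h3 : hX (a + i) (((b + j).choose b) • hasseDeriv (b + j) P) =
     ((b + j).choose b) • hX (a + i) (hasseDeriv (b + j) P) := by
    ext1 n; rw [coeff_smul, hX_coeff, hX_coeff, coeff_smul, map_nsmul]
  rw [h3, nsmul_eq_mul, nsmul_eq_mul, evalEval_mul, evalEval_mul, evalEval_natCast, evalEval_natCast]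
  ring

lemma tau_tau (y z h k : R) (P : R[X][X]) : tau h k (tau y z P) = tau (h + y) (k + z) P := by
  ext1 j
  ext1 i
  rw [tau_apply, tau_apply, map_taylor, taylor_taylor, tau_apply, Polynomial.map_map]
  have h1 : (tay h) (C z) = C z := by simp [tay_apply]
  rw [h1, C_add]
  congr 4
  refine Polynomial.ringHom_ext ?_ ?_
  · intro r; simp [tay_apply]
  · simp [tay_apply, add_comm, add_left_comm]

lemma tau_C (y z : R) (U : R[X]) : tau y z (C U) = C (taylor y U) := by
  rw [tau_apply, map_C, taylor_C]; rfl

lemma tau_mapC (y z : R) (V : R[X]) : tau y z (V.map C) = (taylor z V).map C := by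
  rw [tau_apply, Polynomial.map_map, map_taylor]
  congr 2
  ext1 r
  simp [tay_apply]

lemma tau_map {S : Type*} [CommRing S] (f : R →+* S) (y z : R) (P : R[X][X]) (i j : ℕ) :
    ((tau (f y) (f z) (P.map (mapRingHom f))).coeff j).coeff i = f (((tau y z P).coeff j).coeff i) := by
  have : tau (f y) (f z) (P.map (mapRingHom f)) = (tau y z P).map (mapRingHom f) := by
    rw [tau_apply, tau_apply, map_taylor, Polynomial.map_map, Polynomial.map_map]
    simp only [coe_mapRingHom, map_C]
    congr 2
    refine Polynomial.ringHom_ext ?_ ?_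
    · intro r; simp [tay_apply]
    · simp [tay_apply]
  rw [this, coeff_map, coe_mapRingHom, coeff_map]

/-- substitution -/
noncomputable def psi (r1 r2 : ℕ) : R[X][X] →+* R[X] :=
  eval₂RingHom (expand R r2).toRingHom (X ^ r1)

lemma psi_C (r1 r2 : ℕ) (U : R[X]) : psi r1 r2 (C U) = expand R r2 U := by
  simp [psi]

lemma psi_mapC (r1 r2 : ℕ) (V : R[X]) : psi r1 r2 (V.map C) = expand R r1 V := by
  rw [psi, coe_eval₂RingHom, eval₂_map, expand_eq_sum]
  have : ((expand R r2).toRingHom.comp C) = (C : R →+* R[X]) := by ext1; simp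
  rw [this, eval₂_def]

lemma psi_dvd (r1 r2 : ℕ) (hr2 : 0 < r2) (Q : R[X][X]) (e : ℕ)
    (h : ∀ a b, a * r2 + b * r1 < e → (Q.coeff b).coeff a = 0) : X ^ e ∣ psi r1 r2 Q := by
  rw [psi, coe_eval₂RingHom, eval₂_eq_sum_range]
  refine Finset.dvd_sum fun b _ => ?_
  have h1 : (X : R[X]) ^ (e - b * r1) ∣ (expand R r2).toRingHom (Q.coeff b) := by
    rw [X_pow_dvd_iff]
    intro d hd
    show (expand R r2 (Q.coeff b)).coeff d = 0
    rw [coeff_expand hr2]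
    split_ifs with h3
    · refine h _ _ ?_
      rw [Nat.div_mul_cancel h3]; omega
    · rfl
  rw [← pow_mul]
  refine (pow_dvd_pow (X : R[X]) (show e ≤ (e - b * r1) + r1 * b by rw [mul_comm r1]; omega)).trans ?_
  rw [pow_add]
  exact mul_dvd_mul_right h1 _

end tau
end FMO

namespace FMO

/-- Gauss lemma step -/
lemma gauss_pow (P : ℤ[X]) (hP : P ≠ 0) (y : ℚ) (u : ℕ)
    (h : (X - C y) ^ u ∣ P.map (Int.castRingHom ℚ)) :
    ∃ i, (y.den : ℝ) ^ u ≤ ‖P.coeff i‖ := by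
  have hden : (y.den : ℤ) ≠ 0 := by exact_mod_cast y.den_nz
  set L : ℤ[X] := C (y.den : ℤ) * X + C (-y.num) with hL
  have hLp : L.IsPrimitive := by
    intro r hr
    rw [C_dvd_iff_dvd_coeff] at hr
    have h0 := hr 0
    have h1 := hr 1
    rw [hL, coeff_add, coeff_C_mul, coeff_X_zero, coeff_C_zero, mul_zero, zero_add, dvd_neg] at h0
    rw [hL, coeff_add, coeff_C_mul, coeff_X_one, coeff_C_succ, mul_one, add_zero] at h1
    have hc : IsCoprime y.num (y.den : ℤ) := by
      rw [Int.isCoprime_iff_gcd_eq_one]; exact y.reduced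
    exact hc.isUnit_of_dvd' h0 h1
  have hLm : L.map (Int.castRingHom ℚ) = C (y.den : ℚ) * (X - C y) := by
    have : (y.den : ℚ) * y = y.num := by rw [mul_comm]; exact Rat.mul_den_eq_num y
    simp only [hL, Polynomial.map_add, Polynomial.map_mul, map_C, map_X, mul_sub, ← C_mul, this]
    simp [sub_eq_add_neg]
  have hLu : (L ^ u).IsPrimitive := by
    induction u with
    | zero => simp
    | succ n ih => 
      rw [pow_succ]; exact (ih ((pow_dvd_pow _ (Nat.le_succ n)).trans h)).mul hLp
  have hd : L ^ u ∣ P := by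
    rw [IsPrimitive.Int.dvd_iff_map_cast_dvd_map_cast _ _ hLu, Polynomial.map_pow, hLm, mul_pow, ← C_pow]
    have : IsUnit (C ((y.den : ℚ) ^ u)) := by
      rw [isUnit_C]; exact (pow_ne_zero _ (by exact_mod_cast y.den_nz)).isUnit
    rwa [IsUnit.mul_left_dvd this]
  have hl : L.leadingCoeff = y.den := by rw [hL, leadingCoeff_linear hden]
  have h2 := leadingCoeff_dvd_leadingCoeff hd
  rw [leadingCoeff_pow, hl] at h2
  refine ⟨P.natDegree, ?_⟩
  have h3 := Int.le_of_dvd (abs_pos.2 (leadingCoeff_ne_zero.2 hP)) ((dvd_abs _ _).2 h2)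
  rw [Int.norm_eq_abs]
  exact_mod_cast h3

lemma l1_hasse {R : Type*} [CommRing R] (N : RingSeminorm R) (p : R[X]) (j D : ℕ)
    (h : p.natDegree ≤ D) : l1 N (hasseDeriv j p) ≤ 2 ^ D * l1 N p := by
  rw [hasseDeriv_apply, sum_def, l1_def N p, sum_def, Finset.mul_sum]
  refine (sn_sum_le _ _ _).trans (Finset.sum_le_sum fun n hn => ?_)
  rw [l1_monomial, ← nsmul_eq_mul]
  have h1 : ∀ (m : ℕ) (r : R), N (m • r) ≤ m * N r := by
    intro m r
    induction m with
    | zero => simp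
    | succ k ih => 
      rw [succ_nsmul]; push_cast
      refine (map_add_le_add N _ _).trans ?_
      linarith
  refine (h1 _ _).trans ?_
  refine mul_le_mul_of_nonneg_right ?_ (apply_nonneg N _)
  have h2 : n.choose j ≤ 2 ^ n := Nat.choose_le_two_pow _ _
  have h3 : n ≤ D := (le_natDegree_of_mem_supp _ hn).trans h
  have h4 : n.choose j ≤ 2 ^ D := h2.trans (Nat.pow_le_pow_right (by norm_num) h3)
  exact_mod_cast h4

lemma l1_hX (N : RingSeminorm ℤ) (P : ℤ[X][X]) (i D : ℕ)
    (h : ∀ b, (P.coeff b).natDegree ≤ D) : l1 (l1 N) (hX i P) ≤ 2 ^ D * l1 (l1 N) P := by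
  rw [l1_eq_range _ _ (P.natDegree + 1) (Nat.lt_succ_of_le (hX_natDegree i P)),
    l1_eq_range _ _ (P.natDegree + 1) (Nat.lt_succ_self _), Finset.mul_sum]
  refine Finset.sum_le_sum fun b _ => ?_
  rw [hX_coeff]
  exact l1_hasse N _ _ _ (h b)

/-- rank decomposition -/
lemma decomp (W : ℚ[X][X]) (r : ℕ) (hW : W ≠ 0) (hr : W.natDegree < r) :
    ∃ (k : ℕ) (f g : Fin k → ℚ[X]), 0 < k ∧ k ≤ r ∧ LinearIndependent ℚ f ∧
      LinearIndependent ℚ g ∧ W = ∑ l, C (f l) * (g l).map C := by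
  set w : Fin r → ℚ[X] := fun j => W.coeff j with hw
  set V : Submodule ℚ ℚ[X] := Submodule.span ℚ (Set.range w) with hV
  have : Module.Finite ℚ V := FiniteDimensional.span_of_finite ℚ (Set.finite_range w)
  set b := Module.finBasis ℚ V with hb
  have hmem : ∀ j, W.coeff j ∈ V := by
    intro j
    by_cases hj : j < r
    · exact Submodule.subset_span ⟨⟨j, hj⟩, rfl⟩
    · rw [coeff_eq_zero_of_natDegree_lt (by omega)]; exact V.zero_mem
  set g : Fin (Module.finrank ℚ V) → ℚ[X] := fun l =>
    ∑ j ∈ Finset.range r, monomial j (b.repr ⟨W.coeff j, hmem j⟩ l) with hg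
  have hgc : ∀ l j, (g l).coeff j = b.repr ⟨W.coeff j, hmem j⟩ l := by
    intro l j
    rw [hg]; simp only [finsetSum_coeff, coeff_monomial]
    rw [Finset.sum_ite_eq']
    split_ifs with h
    · rfl
    · have : (⟨W.coeff j, hmem j⟩ : V) = 0 := by
        ext1; simp only [Finset.mem_range] at h
        exact coeff_eq_zero_of_natDegree_lt (by omega)
      rw [this]; simp
  have hWs : W = ∑ l, C (b l : ℚ[X]) * (g l).map C := by
    ext1 j
    rw [finsetSum_coeff]
    simp only [coeff_C_mul, coeff_map, hgc]
    have := congrArg (Subtype.val) (b.sum_repr ⟨W.coeff j, hmem j⟩)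
    simp only [AddSubmonoidClass.coe_finsetSum, Submodule.coe_smul] at this
    refine this.symm.trans ?_
    refine Finset.sum_congr rfl fun l _ => ?_
    rw [smul_eq_C_mul, mul_comm]
  refine ⟨Module.finrank ℚ V, fun l => b l, g, ?_, ?_, ?_, ?_, hWs⟩
  · rw [Nat.pos_iff_ne_zero]
    intro h0
    rw [Submodule.finrank_eq_zero] at h0
    apply hW
    ext1 j
    have := hmem j
    rw [h0, Submodule.mem_bot] at this
    rw [this]; rfl
  · have := finrank_range_le_card (R := ℚ) w
    simpa [Set.finrank] using this
  · exact b.linearIndependent.map' V.subtype (Submodule.ker_subtype V)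
  · rw [Fintype.linearIndependent_iff]
    intro c hc l
    set F : V →ₗ[ℚ] ℚ := ∑ l, c l • b.coord l with hF
    have hF0 : ∀ j, F ⟨W.coeff j, hmem j⟩ = 0 := by
      intro j
      have := congrArg (fun p => p.coeff j) hc
      simp only [finsetSum_coeff, coeff_smul, hgc, coeff_zero] at this
      rw [hF]; simpa using this
    have hF1 : F = 0 := by
      have h2 : ∀ x (hx : x ∈ V), F ⟨x, hx⟩ = 0 := by
        intro x hx
        induction hx using Submodule.span_induction with
        | mem x h => obtain ⟨j, rfl⟩ := h; exact hF0 j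
        | zero => exact map_zero F
        | add x y hx hy h1 h2 => 
          have : (⟨x + y, V.add_mem hx hy⟩ : V) = ⟨x, hx⟩ + ⟨y, hy⟩ := rfl
          rw [this, map_add, h1, h2, add_zero]
        | smul a x hx h1 => 
          have : (⟨a • x, V.smul_mem a hx⟩ : V) = a • ⟨x, hx⟩ := rfl
          rw [this, map_smul, h1, smul_zero]
      ext1 x; exact h2 x.1 x.2
    have h3 : F (b l) = 0 := by rw [hF1]; rfl
    rw [hF] at h3
    simpa [Finsupp.single_apply] using h3

end FMO

namespace FMO

lemma ordU (U : ℚ[X]) (hU : U ≠ 0) (y : ℚ) (r : ℕ) (hr : 0 < r) :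
    ∃ (u : ℕ) (Q : ℚ[X]), (X - C y) ^ u ∣ U ∧ expand ℚ r (taylor y U) = X ^ (r * u) * Q ∧
      Q.coeff 0 ≠ 0 := by
  obtain ⟨q, h1, h2⟩ := exists_eq_pow_rootMultiplicity_mul_and_not_dvd U hU y
  refine ⟨rootMultiplicity y U, expand ℚ r (taylor y q), ⟨q, h1⟩, ?_, ?_⟩
  · conv_lhs => rw [h1]
    rw [taylor_mul, taylor_pow, map_mul, map_pow]
    simp [pow_mul]
  · rw [coeff_expand hr]
    simp only [dvd_zero, if_true, Nat.zero_div, taylor_coeff_zero]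
    rwa [dvd_iff_isRoot] at h2

noncomputable abbrev toQ : ℤ[X][X] →+* ℚ[X][X] := mapRingHom (mapRingHom (Int.castRingHom ℚ))

lemma hX_map {R S : Type*} [CommRing R] [CommRing S] (f : R →+* S) (i : ℕ) (P : R[X][X]) :
    hX i (P.map (mapRingHom f)) = (hX i P).map (mapRingHom f) := by
  ext1 b
  rw [hX_coeff, coeff_map, coeff_map, hX_coeff]
  ext1 a
  simp [hasseDeriv_coeff]

lemma hasse_map {R S : Type*} [CommRing R] [CommRing S] (f : R →+* S) (i : ℕ) (P : R[X]) :
    hasseDeriv i (P.map f) = (hasseDeriv i P).map f := by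
  ext1 b
  simp [hasseDeriv_coeff]

lemma V2core (W : ℤ[X][X]) (hW : W ≠ 0) (D1 D2 : ℕ) (h1 : ∀ b, (W.coeff b).natDegree ≤ D1)
    (h2 : W.natDegree ≤ D2) (y1 y2 : ℚ) (r1 r2 : ℕ) (hr1 : 0 < r1) (hr2 : 0 < r2) (N : ℝ)
    (hN : ∀ a b : ℕ, (a * r2 + b * r1 : ℝ) < N → ((tau y1 y2 (toQ W)).coeff b).coeff a = 0) :
    ∃ k u v : ℕ, 0 < k ∧ k ≤ D2 + 1 ∧
      (∀ e : Fin k → ℕ, (∀ (i j : Fin k) (a b : ℕ), a * r2 + b * r1 < e j →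
        ((a + (i : ℕ)) * r2 + (b + (j : ℕ)) * r1 : ℝ) < N) → ∑ j, e j ≤ r2 * u + r1 * v) ∧
      (y1.den : ℝ) ^ u ≤ k.factorial * (2 ^ (D1 + D2) * l1 (l1 (normRingSeminorm ℤ)) W) ^ k ∧
      (y2.den : ℝ) ^ v ≤ k.factorial * (2 ^ (D1 + D2) * l1 (l1 (normRingSeminorm ℤ)) W) ^ k := by
  have hinj : Function.Injective toQ := by
    apply map_injective
    apply map_injective
    exact RingHom.injective_int _
  have hWQ : toQ W ≠ 0 := by
    rwa [Ne, map_eq_zero_iff _ hinj]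
  have hWd : (toQ W).natDegree < D2 + 1 := by
    have : (toQ W).natDegree ≤ W.natDegree := natDegree_map_le
    omega
  obtain ⟨k, f, g, hk0, hkr, hf, hg, hdec⟩ := decomp (toQ W) (D2 + 1) hWQ hWd
  set U := (hmat f).det with hU
  set V := (hmat g).det with hV
  have hU0 : U ≠ 0 := wronskian_ne_zero f hf
  have hV0 : V ≠ 0 := wronskian_ne_zero g hg
  set M : Matrix (Fin k) (Fin k) ℤ[X][X] := Matrix.of fun i j => hX (i : ℕ) (hasseDeriv (j : ℕ) W) with hM
  have hMQ : toQ M.det = C U * V.map C := by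
    rw [RingHom.map_det]
    have : toQ.mapMatrix M = ((C : ℚ[X] →+* ℚ[X][X]).mapMatrix (hmat f)).transpose *
       ((mapRingHom (C : ℚ →+* ℚ[X])).mapMatrix (hmat g)) := by
      ext1 i j
      rw [Matrix.mul_apply]
      simp only [RingHom.mapMatrix_apply, Matrix.map_apply, hM, Matrix.of_apply,
        Matrix.transpose_apply, hmat]
      rw [coe_mapRingHom, ← hX_map, ← hasse_map]
      change hX i (hasseDeriv j (toQ W)) = _
      rw [hdec, map_sum, hX_sum]
      refine Finset.sum_congr rfl fun l _ => ?_
      rw [← smul_eq_C_mul, map_smul, coe_mapRingHom, ← hasse_map, smul_eq_C_mul]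
      ext1 b
      rw [hX_coeff, coeff_C_mul, coeff_C_mul, hasse_map, coeff_map, mul_comm, ← smul_eq_C_mul, map_smul,
        smul_eq_C_mul, mul_comm]
    rw [this, Matrix.det_mul, Matrix.det_transpose, ← RingHom.map_det, ← RingHom.map_det,
      coe_mapRingHom]
  obtain ⟨u, Q1, hu1, hu2, hu3⟩ := ordU U hU0 y1 r2 hr2
  obtain ⟨v, Q2, hv1, hv2, hv3⟩ := ordU V hV0 y2 r1 hr1
  have hl1 : l1 (l1 (normRingSeminorm ℤ)) M.det ≤
      k.factorial * (2 ^ (D1 + D2) * l1 (l1 (normRingSeminorm ℤ)) W) ^ k := by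
    have := sn_det_le (l1 (l1 (normRingSeminorm ℤ))) (by
      rw [← C_1, l1_C, ← C_1, l1_C]; show ‖(1:ℤ)‖ ≤ 1; simp) M (2 ^ (D1 + D2) * l1 (l1 (normRingSeminorm ℤ)) W) (by
      intro i j
      rw [hM, Matrix.of_apply]
      refine (l1_hX _ _ _ D1 ?_).trans ?_
      · intro b
        rw [hasseDeriv_coeff, ← nsmul_eq_mul]
        exact (natDegree_smul_le _ _).trans (h1 _)
      · rw [pow_add, mul_assoc]
        exact mul_le_mul_of_nonneg_left (l1_hasse _ _ _ _ h2) (by positivity))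
    simpa using this
  have hcoef : ∀ a b, ‖(M.det.coeff b).coeff a‖ ≤ l1 (l1 (normRingSeminorm ℤ)) M.det := fun a b =>
    (coeff_le_l1 (normRingSeminorm ℤ) _ a).trans (coeff_le_l1 (l1 (normRingSeminorm ℤ)) _ b)
  have hcc : ∀ a b, (((M.det.coeff b).coeff a : ℤ) : ℚ) = U.coeff a * V.coeff b := by
    intro a b
    have := congrArg (fun P => (P.coeff b).coeff a) hMQ
    simp only [coeff_C_mul, coeff_map, coeff_mul_C, coe_mapRingHom] at this
    exact this
  refine ⟨k, u, v, hk0, hkr, ?_, ?_, ?_⟩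
  · intro e he
    have hphi : psi r1 r2 (tau y1 y2 (toQ M.det)) = X ^ (r2 * u + r1 * v) * (Q1 * Q2) := by
      rw [hMQ, map_mul, tau_C, tau_mapC, map_mul, psi_C, psi_mapC, hu2, hv2, pow_add]; ring
    have hdvd : X ^ (∑ j, e j) ∣ psi r1 r2 (tau y1 y2 (toQ M.det)) := by
      have hd : ∀ i j : Fin k, ∃ c, psi r1 r2 (tau y1 y2 (toQ (M i j))) = X ^ (e j) * c := by
        intro i j
        apply psi_dvd r1 r2 hr2
        intro a b hab
        have hh := he i j a b hab
        rw [hM, Matrix.of_apply, coe_mapRingHom, ← hX_map, ← hasse_map, tau_hX_hasse]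
        have h0 := hN (a + i) (b + j) (by push_cast; exact hh)
        rw [coe_mapRingHom] at h0
        rw [h0, mul_zero]
      choose c hc using hd
      rw [RingHom.map_det, RingHom.map_det, RingHom.map_det]
      have : (psi r1 r2).mapMatrix ((tau y1 y2).mapMatrix (toQ.mapMatrix M)) =
          Matrix.of fun i j => X ^ (e j) * Matrix.of c i j := by
        ext1 i j
        simp only [RingHom.mapMatrix_apply, Matrix.map_apply, Matrix.of_apply]
        exact hc i j
      rw [this, Matrix.det_mul_row, Finset.prod_pow_eq_pow_sum]
      exact dvd_mul_right _ _
    rw [hphi] at hdvd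
    by_contra hlt
    push Not at hlt
    have h3 : X ^ (r2 * u + r1 * v) * X ∣ X ^ (r2 * u + r1 * v) * (Q1 * Q2) := by
      rw [← pow_succ]
      exact (pow_dvd_pow _ hlt).trans hdvd
    rw [mul_dvd_mul_iff_left (pow_ne_zero _ X_ne_zero), X_dvd_iff, mul_coeff_zero] at h3
    exact mul_ne_zero hu3 hv3 h3
  · have hb : V.coeff V.natDegree ≠ 0 := leadingCoeff_ne_zero.2 hV0
    have hm : (M.det.coeff V.natDegree).map (Int.castRingHom ℚ) = C (V.coeff V.natDegree) * U := by
      ext1 a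
      rw [coeff_map, coeff_C_mul, mul_comm, ← hcc]; rfl
    obtain ⟨i, hi⟩ := gauss_pow (M.det.coeff V.natDegree) (by
      intro h0
      rw [h0, Polynomial.map_zero] at hm
      exact mul_ne_zero (C_ne_zero.2 hb) hU0 hm.symm) y1 u (by
      rw [hm]; exact hu1.mul_left _)
    exact hi.trans ((hcoef i _).trans hl1)
  · have ha : U.coeff U.natDegree ≠ 0 := leadingCoeff_ne_zero.2 hU0
    set P : ℤ[X] := ∑ b ∈ Finset.range (M.det.natDegree + 1), monomial b ((M.det.coeff b).coeff U.natDegree) with hP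
    have hPc : ∀ b, P.coeff b = (M.det.coeff b).coeff U.natDegree := by
      intro b
      rw [hP]; simp only [finsetSum_coeff, coeff_monomial]
      rw [Finset.sum_ite_eq']
      split_ifs with h
      · rfl
      · rw [coeff_eq_zero_of_natDegree_lt (p := M.det) (by simpa using h)]; rfl
    have hm : P.map (Int.castRingHom ℚ) = C (U.coeff U.natDegree) * V := by
      ext1 a
      rw [coeff_map, coeff_C_mul, hPc, ← hcc]; rfl
    obtain ⟨i, hi⟩ := gauss_pow P (by
      intro h0
      rw [h0, Polynomial.map_zero] at hm
      exact mul_ne_zero (C_ne_zero.2 ha) hV0 hm.symm) y2 v (by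
      rw [hm]; exact hv1.mul_left _)
    rw [hPc] at hi
    exact hi.trans ((hcoef _ i).trans hl1)

end FMO

namespace FMO

lemma V2_B (k r1 r2 : ℕ) (hk : k ≤ 3 * r1) (hr : r2 ≤ r1) (c M : ℝ) (hM0 : 0 ≤ M)
    (hM : M ≤ Real.exp (c * r1)) :
    (k.factorial : ℝ) * (2 ^ (2 * r1 + 2 * r2) * M) ^ k ≤ Real.exp (k * (c + 7) * r1) := by
  have h1 : (k.factorial : ℝ) ≤ (Real.exp (3 * r1)) ^ k := by
    have : (k.factorial : ℝ) ≤ (k : ℝ) ^ k := by exact_mod_cast Nat.factorial_le_pow k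
    refine this.trans ?_
    gcongr
    have h2 := Real.add_one_le_exp (3 * (r1 : ℝ))
    have h3 : (k : ℝ) ≤ 3 * r1 := by exact_mod_cast hk
    linarith
  have h2 : (2 : ℝ) ^ (2 * r1 + 2 * r2) ≤ Real.exp (4 * r1) := by
    have he : (2 : ℝ) ≤ Real.exp 1 := by
      have := Real.add_one_le_exp (1 : ℝ); linarith
    calc (2 : ℝ) ^ (2 * r1 + 2 * r2) ≤ 2 ^ (4 * r1) := pow_le_pow_right₀ (by norm_num) (by omega)
      _ ≤ (Real.exp 1) ^ (4 * r1) := by gcongr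
      _ = _ := by rw [← Real.exp_nat_mul]; push_cast; ring_nf
  calc _ ≤ (Real.exp (3 * r1)) ^ k * (Real.exp (4 * r1) * Real.exp (c * r1)) ^ k := by gcongr
    _ = _ := by
      rw [← mul_pow, ← Real.exp_add, ← Real.exp_add, ← Real.exp_nat_mul]; ring_nf

lemma V2_sum (k r1 r2 : ℕ) (hk0 : 0 < k) (hk : k ≤ 3 * r2) (ε : ℝ) (hε : 0 < ε) (hε1 : ε ≤ 1) :
    k * ε ^ 2 * r1 * r2 / 24 ≤ ∑ j : Fin k, ((⌈3 / 4 * (ε * r1 * r2) - (j : ℕ) * r1⌉₊ : ℕ) : ℝ) := by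
  have hk' : (k : ℝ) ≤ 3 * r2 := by exact_mod_cast hk
  rw [Fin.sum_univ_eq_sum_range (fun j => ((⌈3 / 4 * (ε * r1 * r2) - (j : ℕ) * r1⌉₊ : ℕ) : ℝ))]
  set J := ⌈k * ε / 6⌉₊ with hJ
  have hJk : J ≤ k := by
    rw [hJ, Nat.ceil_le]; nlinarith [(Nat.cast_nonneg k : (0:ℝ) ≤ k)]
  have hJ1 : k * ε / 6 ≤ J := Nat.le_ceil _
  calc k * ε ^ 2 * r1 * r2 / 24 ≤ ∑ j ∈ Finset.range J, (ε * r1 * r2 / 4) := by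
        rw [Finset.sum_const, Finset.card_range, nsmul_eq_mul]
        have : (0:ℝ) ≤ ε * r1 * r2 / 4 := by positivity
        nlinarith [mul_le_mul_of_nonneg_right hJ1 this]
    _ ≤ ∑ j ∈ Finset.range J, ((⌈3 / 4 * (ε * r1 * r2) - (j : ℕ) * r1⌉₊ : ℕ) : ℝ) := by
        refine Finset.sum_le_sum fun j hj => ?_
        refine le_trans ?_ (Nat.le_ceil _)
        have h1 : (j : ℝ) < k * ε / 6 := Nat.lt_ceil.1 (Finset.mem_range.1 hj)
        have h2 : (j : ℝ) ≤ ε * r2 / 2 := by nlinarith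
        have h3 : (0 : ℝ) ≤ r1 := Nat.cast_nonneg _
        nlinarith [mul_le_mul_of_nonneg_right h2 h3]
    _ ≤ _ := Finset.sum_le_sum_of_subset_of_nonneg (Finset.range_mono hJk) fun _ _ _ => Nat.cast_nonneg _

theorem V2 (ε c : ℝ) (hε : 0 < ε) (hε1 : ε ≤ 1) (hc : 0 ≤ c) (r1 r2 : ℕ) (hr1 : 0 < r1)
    (hr2 : 0 < r2) (y1 y2 : ℚ) (hq : 48 * (c + 7) / ε ^ 2 < Real.log y1.den)
    (hr : 8 * (r2 : ℝ) ≤ ε * r1) (hqq : r1 * Real.log y1.den ≤ r2 * Real.log y2.den)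
    (W : ℤ[X][X]) (hW : W ≠ 0) (h1 : ∀ b, (W.coeff b).natDegree ≤ 2 * r1)
    (h2 : W.natDegree ≤ 2 * r2) (hl : l1 (l1 (normRingSeminorm ℤ)) W ≤ Real.exp (c * r1)) :
    ∃ a b : ℕ, (a * r2 + b * r1 : ℝ) < ε * r1 * r2 ∧ ((tau y1 y2 (toQ W)).coeff b).coeff a ≠ 0 := by
  by_contra hno
  push Not at hno
  obtain ⟨k, u, v, hk0, hk, he, hu, hv⟩ := V2core W hW (2 * r1) (2 * r2) h1 h2 y1 y2 r1 r2 hr1 hr2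
    (ε * r1 * r2) hno
  have hr1' : (0:ℝ) < r1 := by exact_mod_cast hr1
  have hr2' : (0:ℝ) < r2 := by exact_mod_cast hr2
  have hk0' : (0:ℝ) < k := by exact_mod_cast hk0
  have hrr : r2 ≤ r1 := by
    have : (r2 : ℝ) ≤ r1 := by nlinarith
    exact_mod_cast this
  have hB := V2_B k r1 r2 (by omega) hrr c _ (apply_nonneg _ _) hl
  have hE := he (fun j => ⌈3 / 4 * (ε * r1 * r2) - (j : ℕ) * r1⌉₊) (by
    intro i j a b hab
    have h3 := Nat.lt_ceil.1 hab
    push_cast at h3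
    have h4 : ((i : ℕ) : ℝ) ≤ 2 * r2 := by
      have : (i : ℕ) ≤ 2 * r2 := by have := i.2; omega
      exact_mod_cast this
    have h5 : ((i : ℕ) : ℝ) * r2 ≤ ε * r1 * r2 / 4 := by nlinarith
    nlinarith)
  have hS := V2_sum k r1 r2 hk0 (by omega) ε hε hε1
  have hE' : (∑ j : Fin k, ((⌈3 / 4 * (ε * r1 * r2) - (j : ℕ) * r1⌉₊ : ℕ) : ℝ)) ≤ r2 * u + r1 * v := by
    exact_mod_cast hE
  have hL1 : 0 < Real.log y1.den := lt_of_le_of_lt (by positivity) hq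
  have hL2 : 0 < Real.log y2.den := by
    by_contra h; push Not at h
    nlinarith [mul_pos hr1' hL1, mul_nonneg_of_nonpos_of_nonpos (neg_nonpos.2 hr2'.le) h]
  have hd1 : (0:ℝ) < y1.den := by exact_mod_cast y1.pos
  have hd2 : (0:ℝ) < y2.den := by exact_mod_cast y2.pos
  have hu' : u * Real.log y1.den ≤ k * (c + 7) * r1 := by
    rw [← Real.log_pow, Real.log_le_iff_le_exp (pow_pos hd1 _)]; exact hu.trans hB
  have hv' : v * Real.log y2.den ≤ k * (c + 7) * r1 := by
    rw [← Real.log_pow, Real.log_le_iff_le_exp (pow_pos hd2 _)]; exact hv.trans hB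
  generalize Real.log y1.den = L1 at *
  generalize Real.log y2.den = L2 at *
  have hmain : (k * ε ^ 2 * r1 * r2 / 24) * L1 ≤ 2 * (k * (c + 7) * r1) * r2 := by
    have ha : (k * ε ^ 2 * r1 * r2 / 24) * L1 ≤ (r2 * u + r1 * v) * L1 :=
      mul_le_mul_of_nonneg_right (hS.trans hE') hL1.le
    have hb : r1 * L1 * v ≤ r2 * L2 * v := mul_le_mul_of_nonneg_right hqq (Nat.cast_nonneg _)
    nlinarith [mul_le_mul_of_nonneg_left hu' hr2'.le, mul_le_mul_of_nonneg_left hv' hr2'.le]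
  have hpos : 0 < (k : ℝ) * r1 * r2 := by positivity
  have h6 : 48 * (c + 7) < L1 * ε ^ 2 := by rwa [div_lt_iff₀ (by positivity)] at hq
  nlinarith [mul_lt_mul_of_pos_left h6 hpos]

end FMO

namespace FMO

lemma F1deg {R : Type*} [CommRing R] [IsDomain R] [CharZero R] (A B : R[X]) (hA : A ≠ 0) (hB : B ≠ 0)
    (h : A * derivative B = derivative A * B) : A.natDegree = B.natDegree := by
  rcases Nat.eq_zero_or_pos B.natDegree with hb | hb
  · have : derivative B = 0 := by rw [eq_C_of_natDegree_eq_zero hb, derivative_C]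
    rw [this, mul_zero] at h
    have h2 : derivative A = 0 := by
      rcases mul_eq_zero.1 h.symm with h | h
      · exact h
      · exact absurd h hB
    rw [hb]; exact derivative_eq_zero.1 h2
  rcases Nat.eq_zero_or_pos A.natDegree with ha | ha
  · have : derivative A = 0 := by rw [eq_C_of_natDegree_eq_zero ha, derivative_C]
    rw [this, zero_mul] at h
    have h2 : derivative B = 0 := by
      rcases mul_eq_zero.1 h with h | h
      · exact absurd h hA
      · exact h
    rw [ha]; exact (derivative_eq_zero.1 h2).symm
  obtain ⟨n, hn⟩ : ∃ n, B.natDegree = n + 1 := ⟨B.natDegree - 1, by omega⟩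
  obtain ⟨m, hm⟩ : ∃ n, A.natDegree = n + 1 := ⟨A.natDegree - 1, by omega⟩
  have h1 : (A * derivative B).coeff ((m + 1) + n) = A.coeff (m + 1) * (derivative B).coeff n :=
    coeff_mul_add_eq_of_natDegree_le hm.le (by have := natDegree_derivative_le B; omega)
  have h2 : (derivative A * B).coeff (m + (n + 1)) = (derivative A).coeff m * B.coeff (n + 1) :=
    coeff_mul_add_eq_of_natDegree_le (by have := natDegree_derivative_le A; omega) hn.le
  have e : (m + 1) + n = m + (n + 1) := by omega
  rw [h, e, h2, coeff_derivative, coeff_derivative] at h1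
  have hAl : A.coeff (m + 1) ≠ 0 := by rw [← hm]; exact leadingCoeff_ne_zero.2 hA
  have hBl : B.coeff (n + 1) ≠ 0 := by rw [← hn]; exact leadingCoeff_ne_zero.2 hB
  have h3 : A.coeff (m + 1) * B.coeff (n + 1) * ((m : R) - n) = 0 := by linear_combination h1
  have h4 : (m : R) - n = 0 := by
    rcases mul_eq_zero.1 h3 with h | h
    · exact absurd h (mul_ne_zero hAl hBl)
    · exact h
  have : (m : R) = n := sub_eq_zero.1 h4
  have : m = n := by exact_mod_cast this
  omega

lemma F1 {R : Type*} [CommRing R] [IsDomain R] [CharZero R] (A B : R[X]) (hA : A ≠ 0) (hB : B ≠ 0)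
    (h : A * derivative B = derivative A * B) :
    C B.leadingCoeff * A = C A.leadingCoeff * B := by
  have hd := F1deg A B hA hB h
  by_contra hne
  set D := C B.leadingCoeff * A - C A.leadingCoeff * B with hD
  have hD0 : D ≠ 0 := sub_ne_zero.2 hne
  have h2 : D * derivative B = derivative D * B := by
    rw [hD]
    simp only [derivative_sub, derivative_mul, derivative_C, zero_mul, zero_add]
    linear_combination (C B.leadingCoeff) * h
  have h3 := F1deg D B hD0 hB h2
  have h4 : D.coeff B.natDegree = 0 := by
    rw [hD, coeff_sub, coeff_C_mul, coeff_C_mul]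
    conv_lhs => rw [← hd]
    simp only [coeff_natDegree]
    rw [hd, coeff_natDegree]; ring
  rw [← h3, coeff_natDegree] at h4
  exact hD0 (leadingCoeff_eq_zero.1 h4)

section Van
variable {R : Type*} [CommRing R]

def Van (y z : R) (r1 r2 : ℕ) (P : R[X][X]) (N : ℝ) : Prop :=
  ∀ a b : ℕ, (a * r2 + b * r1 : ℝ) < N → ((tau y z P).coeff b).coeff a = 0

lemma Van.mul {y z : R} {r1 r2 : ℕ} {P : R[X][X]} {N : ℝ} (h : Van y z r1 r2 P N) (Q : R[X][X]) :
    Van y z r1 r2 (P * Q) N := by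
  intro a b hab
  rw [map_mul, coeff_mul, finsetSum_coeff]
  refine Finset.sum_eq_zero fun x hx => ?_
  rw [coeff_mul]
  refine Finset.sum_eq_zero fun x' hx' => ?_
  have e1 := Finset.HasAntidiagonal.mem_antidiagonal.1 hx
  have e2 := Finset.HasAntidiagonal.mem_antidiagonal.1 hx'
  have l1 : (x.1 : ℝ) ≤ b := by exact_mod_cast (by omega : x.1 ≤ b)
  have l2 : (x'.1 : ℝ) ≤ a := by exact_mod_cast (by omega : x'.1 ≤ a)
  rw [h x'.1 x.1 (lt_of_le_of_lt (by gcongr) hab), zero_mul]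

lemma Van.sub {y z : R} {r1 r2 : ℕ} {P Q : R[X][X]} {N : ℝ} (h : Van y z r1 r2 P N)
    (h' : Van y z r1 r2 Q N) : Van y z r1 r2 (P - Q) N := by
  intro a b hab
  rw [map_sub, coeff_sub, coeff_sub, h a b hab, h' a b hab, sub_zero]

lemma Van.mono {y z : R} {r1 r2 : ℕ} {P : R[X][X]} {N N' : ℝ} (h : Van y z r1 r2 P N)
    (h' : N' ≤ N) : Van y z r1 r2 P N' := fun a b hab => h a b (hab.trans_le h')

lemma Van.deriv {y z : R} {r1 r2 : ℕ} {P : R[X][X]} {N N' : ℝ} (h : Van y z r1 r2 P N)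
    (h' : N' + r1 ≤ N) : Van y z r1 r2 (derivative P) N' := by
  intro a b hab
  have e : derivative P = hX 0 (hasseDeriv 1 P) := by
    rw [hasseDeriv_one']; ext1 n; rw [hX_coeff, hasseDeriv_zero']
  rw [e, tau_hX_hasse, h _ _ (by push_cast; linarith), mul_zero]

lemma Van.hX1 {y z : R} {r1 r2 : ℕ} {P : R[X][X]} {N N' : ℝ} (h : Van y z r1 r2 P N)
    (h' : N' + r2 ≤ N) : Van y z r1 r2 (hX 1 P) N' := by
  intro a b hab
  have e : hX 1 P = hX 1 (hasseDeriv 0 P) := by rw [hasseDeriv_zero']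
  rw [e, tau_hX_hasse, h _ _ (by push_cast; linarith), mul_zero]

lemma tau_CC (y z s : R) : tau y z (C (C s)) = C (C s) := by
  rw [tau_C, taylor_C]

lemma Van.of_smul [IsDomain R] {y z s : R} (hs : s ≠ 0) {r1 r2 : ℕ} {P : R[X][X]} {N : ℝ}
    (h : Van y z r1 r2 (C (C s) * P) N) : Van y z r1 r2 P N := by
  intro a b hab
  have := h a b hab
  rw [map_mul, tau_CC, coeff_C_mul, coeff_C_mul] at this
  exact (mul_eq_zero.1 this).resolve_left hs

lemma hX1_mul (P Q : R[X][X]) : hX 1 (P * Q) = hX 1 P * Q + P * hX 1 Q := by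
  ext1 n
  rw [hX_coeff, coeff_add, coeff_mul, coeff_mul, coeff_mul, map_sum, ← Finset.sum_add_distrib]
  refine Finset.sum_congr rfl fun x _ => ?_
  rw [hasseDeriv_one', derivative_mul, hX_coeff, hX_coeff, hasseDeriv_one', hasseDeriv_one']

lemma hX1_CC (s : R) (P : R[X][X]) : hX 1 (C (C s) * P) = C (C s) * hX 1 P := by
  ext1 n
  rw [hX_coeff, coeff_C_mul, coeff_C_mul, hX_coeff, hasseDeriv_one', derivative_C_mul, hasseDeriv_one']

end Van

lemma toQ_CC (s : ℤ) : toQ (C (C s)) = C (C (s : ℚ)) := by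
  simp [toQ]

lemma wr_l1 (A B A' B' : ℤ[X][X]) (c : ℝ) (r1 : ℕ) (hr1 : 0 < r1)
    (hA : l1 (l1 (normRingSeminorm ℤ)) A ≤ Real.exp (c * r1))
    (hB : l1 (l1 (normRingSeminorm ℤ)) B ≤ Real.exp (c * r1))
    (hA' : l1 (l1 (normRingSeminorm ℤ)) A' ≤ 2 ^ r1 * l1 (l1 (normRingSeminorm ℤ)) A)
    (hB' : l1 (l1 (normRingSeminorm ℤ)) B' ≤ 2 ^ r1 * l1 (l1 (normRingSeminorm ℤ)) B) :
    l1 (l1 (normRingSeminorm ℤ)) (A * B' - A' * B) ≤ Real.exp ((2 * c + 2) * r1) := by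
  set S := l1 (l1 (normRingSeminorm ℤ)) with hS
  have he : (2 : ℝ) ≤ Real.exp 1 := by
    have := Real.add_one_le_exp (1 : ℝ); linarith
  have h2 : (2:ℝ) * 2 ^ r1 ≤ Real.exp (2 * r1) := by
    calc (2:ℝ) * 2 ^ r1 ≤ 2 ^ r1 * 2 ^ r1 := by
          gcongr
          calc (2:ℝ) = 2 ^ 1 := by norm_num
            _ ≤ 2 ^ r1 := pow_le_pow_right₀ (by norm_num) hr1
      _ ≤ (Real.exp 1) ^ r1 * (Real.exp 1) ^ r1 := by gcongr
      _ = _ := by rw [← Real.exp_nat_mul, ← Real.exp_add]; ring_nf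
  have n1 := apply_nonneg S A
  have n2 := apply_nonneg S B
  have n3 := apply_nonneg S A'
  have n4 := apply_nonneg S B'
  calc S (A * B' - A' * B) ≤ S (A * B') + S (A' * B) := map_sub_le_add S _ _
    _ ≤ S A * S B' + S A' * S B := add_le_add (map_mul_le_mul S _ _) (map_mul_le_mul S _ _)
    _ ≤ S A * (2 ^ r1 * S B) + (2 ^ r1 * S A) * S B := by gcongr
    _ = (2 * 2 ^ r1) * (S A * S B) := by ring
    _ ≤ Real.exp (2 * r1) * (Real.exp (c * r1) * Real.exp (c * r1)) := by gcongr
    _ = _ := by rw [← Real.exp_add, ← Real.exp_add]; ring_nf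

theorem nonvan (ε c : ℝ) (hε : 0 < ε) (hε1 : ε ≤ 1) (hc : 0 ≤ c) (r1 r2 : ℕ) (hr1 : 0 < r1)
    (hr2 : 0 < r2) (y1 y2 : ℚ) (hq : 48 * (2 * c + 9) / (ε / 2) ^ 2 < Real.log y1.den)
    (hr : 8 * (r2 : ℝ) ≤ ε / 2 * r1) (hrε : 2 ≤ ε * r2)
    (hqq : r1 * Real.log y1.den ≤ r2 * Real.log y2.den)
    (A B : ℤ[X][X]) (hAB : A ≠ 0 ∨ B ≠ 0)
    (hA1 : ∀ b, (A.coeff b).natDegree ≤ r1) (hB1 : ∀ b, (B.coeff b).natDegree ≤ r1)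
    (hA2 : A.natDegree ≤ r2) (hB2 : B.natDegree ≤ r2)
    (hA : l1 (l1 (normRingSeminorm ℤ)) A ≤ Real.exp (c * r1))
    (hB : l1 (l1 (normRingSeminorm ℤ)) B ≤ Real.exp (c * r1))
    (y3 : ℚ) (hy3 : Real.exp (c * r1) < y3.den) :
    ∃ a b : ℕ, (a * r2 + b * r1 : ℝ) < ε * r1 * r2 ∧
      ((tau y1 y2 (toQ (C (C (y3.den : ℤ)) * A + C (C y3.num) * B))).coeff b).coeff a ≠ 0 := by
  by_contra hno
  push Not at hno
  have hr1' : (0:ℝ) < r1 := by exact_mod_cast hr1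
  have hr2' : (0:ℝ) < r2 := by exact_mod_cast hr2
  have hrr' : (r2 : ℝ) ≤ r1 := by nlinarith
  have hrr : r2 ≤ r1 := by exact_mod_cast hrr'
  set E := C (C (y3.den : ℤ)) * A + C (C y3.num) * B with hE
  have hEV : Van y1 y2 r1 r2 (toQ E) (ε * r1 * r2) := hno
  have hd : (y3.den : ℤ) ≠ 0 := by exact_mod_cast y3.den_nz
  -- V2 in convenient form
  have key : ∀ W : ℤ[X][X], (∀ b, (W.coeff b).natDegree ≤ 2 * r1) → W.natDegree ≤ 2 * r2 →
      l1 (l1 (normRingSeminorm ℤ)) W ≤ Real.exp ((2 * c + 2) * r1) →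
      Van y1 y2 r1 r2 (toQ W) (ε / 2 * r1 * r2) → W = 0 := by
    intro W w1 w2 w3 w4
    by_contra hW
    obtain ⟨a, b, hab, h⟩ := V2 (ε / 2) (2 * c + 2) (by positivity) (by linarith) (by positivity) r1 r2 hr1 hr2
      y1 y2 (by convert hq using 3; ring) hr hqq W hW w1 w2 w3
    exact h (w4 a b hab)
  have hexp : Real.exp (c * r1) ≤ Real.exp ((2 * c + 2) * r1) := by
    apply Real.exp_le_exp.2; nlinarith
  have hN2 : ε / 2 * r1 * r2 ≤ ε * r1 * r2 := by
    have : 0 < ε * r1 * r2 := by positivity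
    nlinarith
  by_cases hB0 : B = 0
  · have hA0 : A ≠ 0 := by
      rcases hAB with h | h
      · exact h
      · exact absurd hB0 h
    apply hA0
    refine key A (fun b => (hA1 b).trans (by omega)) (by omega) (hA.trans hexp) ?_
    rw [hE, hB0, mul_zero, add_zero, map_mul, toQ_CC] at hEV
    exact (hEV.of_smul (by exact_mod_cast hd)).mono hN2
  -- claim: u A = v B
  have huv : ∃ u v : ℤ, u ≠ 0 ∧ C (C u) * A = C (C v) * B := by
    by_cases hA0 : A = 0
    · exact ⟨1, 0, one_ne_zero, by simp [hA0]⟩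
    have hW1 : A * derivative B - derivative A * B = 0 := by
      refine key _ ?_ ?_ ?_ ?_
      · intro b
        rw [coeff_sub, coeff_mul, coeff_mul]
        refine (natDegree_sub_le _ _).trans (max_le ?_ ?_)
        · refine natDegree_sum_le_of_forall_le _ _ fun x _ => natDegree_mul_le.trans ?_
          have h1 := hA1 x.1
          have h2 : ((derivative B).coeff x.2).natDegree ≤ r1 := by
            rw [coeff_derivative]
            refine natDegree_mul_le.trans ?_
            have := hB1 (x.2 + 1)
            have h3 : ((x.2 : ℤ[X]) + 1).natDegree = 0 := by
              exact_mod_cast natDegree_natCast (R := ℤ) (x.2 + 1)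
            omega
          omega
        · refine natDegree_sum_le_of_forall_le _ _ fun x _ => natDegree_mul_le.trans ?_
          have h1 := hB1 x.2
          have h2 : ((derivative A).coeff x.1).natDegree ≤ r1 := by
            rw [coeff_derivative]
            refine natDegree_mul_le.trans ?_
            have := hA1 (x.1 + 1)
            have h3 : ((x.1 : ℤ[X]) + 1).natDegree = 0 := by
              exact_mod_cast natDegree_natCast (R := ℤ) (x.1 + 1)
            omega
          omega
      · refine (natDegree_sub_le _ _).trans (max_le ?_ ?_)
        · refine natDegree_mul_le.trans ?_
          have := natDegree_derivative_le B
          omega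
        · refine natDegree_mul_le.trans ?_
          have := natDegree_derivative_le A
          omega
      · refine wr_l1 A B _ _ c r1 hr1 hA hB ?_ ?_
        · rw [← hasseDeriv_one']; exact l1_hasse _ _ _ _ (by omega)
        · rw [← hasseDeriv_one']; exact l1_hasse _ _ _ _ (by omega)
      · have h1 : C (C (y3.den : ℤ)) * (A * derivative B - derivative A * B) =
            E * derivative B - derivative E * B := by
          rw [hE]; simp only [derivative_add, derivative_mul, derivative_C, zero_mul, zero_add]; ring
        refine Van.of_smul (s := (y3.den : ℚ)) (by exact_mod_cast hd) ?_
        have h2 : C (C (y3.den : ℚ)) * toQ (A * derivative B - derivative A * B) =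
          toQ E * toQ (derivative B) - derivative (toQ E) * toQ B := by
          have h3 : derivative (toQ E) = toQ (derivative E) := by
            rw [coe_mapRingHom, derivative_map]
          have := congrArg toQ h1
          rw [map_mul, toQ_CC] at this
          push_cast at this
          rw [this, map_sub, map_mul, map_mul, h3]
        rw [h2]
        refine ((hEV.mono hN2).mul _).sub ((hEV.deriv (N' := ε / 2 * r1 * r2) ?_).mul _)
        nlinarith
    have hW2 : A * hX 1 B - hX 1 A * B = 0 := by
      refine key _ ?_ ?_ ?_ ?_
      · intro b
        rw [coeff_sub, coeff_mul, coeff_mul]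
        refine (natDegree_sub_le _ _).trans (max_le ?_ ?_)
        · refine natDegree_sum_le_of_forall_le _ _ fun x _ => natDegree_mul_le.trans ?_
          have h1 := hA1 x.1
          have h2 : ((hX 1 B).coeff x.2).natDegree ≤ r1 := by
            rw [hX_coeff]
            have := natDegree_hasseDeriv_le (B.coeff x.2) 1
            have := hB1 x.2
            omega
          omega
        · refine natDegree_sum_le_of_forall_le _ _ fun x _ => natDegree_mul_le.trans ?_
          have h1 := hB1 x.2
          have h2 : ((hX 1 A).coeff x.1).natDegree ≤ r1 := by
            rw [hX_coeff]
            have := natDegree_hasseDeriv_le (A.coeff x.1) 1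
            have := hA1 x.1
            omega
          omega
      · refine (natDegree_sub_le _ _).trans (max_le ?_ ?_)
        · refine natDegree_mul_le.trans ?_
          have := hX_natDegree 1 B
          omega
        · refine natDegree_mul_le.trans ?_
          have := hX_natDegree 1 A
          omega
      · refine wr_l1 A B _ _ c r1 hr1 hA hB ?_ ?_
        · exact l1_hX _ _ _ _ hA1
        · exact l1_hX _ _ _ _ hB1
      · have h1 : C (C (y3.den : ℤ)) * (A * hX 1 B - hX 1 A * B) =
            E * hX 1 B - hX 1 E * B := by
          rw [hE, hX_add, hX1_CC, hX1_CC]; ring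
        refine Van.of_smul (s := (y3.den : ℚ)) (by exact_mod_cast hd) ?_
        have h2 : C (C (y3.den : ℚ)) * toQ (A * hX 1 B - hX 1 A * B) =
          toQ E * toQ (hX 1 B) - hX 1 (toQ E) * toQ B := by
          have h3 : hX 1 (toQ E) = toQ (hX 1 E) := by
            rw [coe_mapRingHom, hX_map]
          have := congrArg toQ h1
          rw [map_mul, toQ_CC] at this
          push_cast at this
          rw [this, map_sub, map_mul, map_mul, h3]
        rw [h2]
        refine ((hEV.mono hN2).mul _).sub ((hEV.hX1 (N' := ε / 2 * r1 * r2) ?_).mul _)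
        nlinarith
    have hdeg := F1deg A B hA0 hB0 (sub_eq_zero.1 hW1)
    have hF := F1 A B hA0 hB0 (sub_eq_zero.1 hW1)
    set a := A.leadingCoeff with ha
    set b := B.leadingCoeff with hb
    have ha0 : a ≠ 0 := leadingCoeff_ne_zero.2 hA0
    have hb0 : b ≠ 0 := leadingCoeff_ne_zero.2 hB0
    have hab : a * derivative b = derivative a * b := by
      have h1 := congrArg (fun P => P.coeff (A.natDegree + B.natDegree)) (sub_eq_zero.1 hW2)
      rw [coeff_mul_add_eq_of_natDegree_le le_rfl (hX_natDegree 1 B),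
        coeff_mul_add_eq_of_natDegree_le (hX_natDegree 1 A) le_rfl, hX_coeff, hX_coeff, hasseDeriv_one',
        hasseDeriv_one'] at h1
      exact h1
    have hG := F1 a b ha0 hb0 hab
    refine ⟨b.leadingCoeff, a.leadingCoeff, leadingCoeff_ne_zero.2 hb0, ?_⟩
    have hCb : (C b : ℤ[X][X]) ≠ 0 := C_ne_zero.2 hb0
    apply mul_left_cancel₀ hCb
    have hG' := congrArg (C : ℤ[X] → ℤ[X][X]) hG
    rw [C_mul, C_mul] at hG'
    linear_combination C (C b.leadingCoeff) * hF + B * hG'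
  obtain ⟨u, v, hu, huv⟩ := huv
  have hE2 : C (C u) * E = C (C (y3.den * v + u * y3.num)) * B := by
    rw [hE]; simp only [C_add, C_mul]
    linear_combination C (C (y3.den : ℤ)) * huv
  by_cases hs : (y3.den * v + u * y3.num : ℤ) = 0
  · rw [hs, C_0, C_0, zero_mul] at hE2
    have hE0 : E = 0 := (mul_eq_zero.1 hE2).resolve_left (C_ne_zero.2 (C_ne_zero.2 hu))
    obtain ⟨b, hb⟩ : ∃ b, B.coeff b ≠ 0 := by
      by_contra h; push Not at h; exact hB0 (by ext1 n; rw [h n]; rfl)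
    obtain ⟨a, ha⟩ : ∃ a, (B.coeff b).coeff a ≠ 0 := by
      by_contra h; push Not at h; exact hb (by ext1 n; rw [h n]; rfl)
    have h1 := congrArg (fun P => (P.coeff b).coeff a) hE0
    simp only [hE, coeff_add, coeff_C_mul, coeff_zero] at h1
    have h2 : (y3.den : ℤ) ∣ y3.num * (B.coeff b).coeff a := ⟨-(A.coeff b).coeff a, by linear_combination h1⟩
    have hcop : IsCoprime (y3.den : ℤ) y3.num := by
      rw [Int.isCoprime_iff_gcd_eq_one, Int.gcd_comm]; exact y3.reduced
    have h3 := hcop.dvd_of_dvd_mul_left h2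
    have h4 := Int.le_of_dvd (abs_pos.2 ha) ((dvd_abs _ _).2 h3)
    have h5 : ((y3.den : ℤ) : ℝ) ≤ ((|(B.coeff b).coeff a| : ℤ) : ℝ) := by exact_mod_cast h4
    have h6 : ‖(B.coeff b).coeff a‖ ≤ l1 (l1 (normRingSeminorm ℤ)) B :=
      (coeff_le_l1 (normRingSeminorm ℤ) _ a).trans (coeff_le_l1 (l1 (normRingSeminorm ℤ)) _ b)
    rw [Int.norm_eq_abs] at h6
    push_cast at h5
    linarith
  · apply hB0
    refine key B (fun b => (hB1 b).trans (by omega)) (by omega) (hB.trans hexp) ?_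
    refine Van.of_smul (s := ((y3.den * v + u * y3.num : ℤ) : ℚ)) (by exact_mod_cast hs) ?_
    have := congrArg toQ hE2
    rw [map_mul, map_mul, toQ_CC, toQ_CC] at this
    rw [← this, mul_comm]
    exact (hEV.mono hN2).mul _

end FMO

namespace FMO

lemma tau_monomial {R : Type*} [CommRing R] (y z p : R) (a b i j : ℕ) :
    ((tau y z (monomial b (monomial a p))).coeff j).coeff i =
      p * (a.choose i) * (b.choose j) * y ^ (a - i) * z ^ (b - j) := by
  rw [tau_coeff_coeff, hasseDeriv_monomial]
  have h1 : hX i (monomial (b - j) ((b.choose j : R[X]) * monomial a p)) =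
      monomial (b - j) (monomial (a - i) ((b.choose j : R) * ((a.choose i : R) * p))) := by
    ext1 n
    rw [hX_coeff, coeff_monomial, coeff_monomial]
    split_ifs
    · rw [← nsmul_eq_mul, map_nsmul, hasseDeriv_monomial, ← nsmul_eq_mul (b.choose j), map_nsmul]
    · exact map_zero _
  rw [h1, evalEval, eval_monomial, eval_mul, eval_monomial, eval_pow, eval_C]
  ring

lemma tau_expand {R : Type*} [CommRing R] (y z : R) (P : R[X][X]) (r1 r2 : ℕ)
    (h1 : ∀ b, (P.coeff b).natDegree ≤ r1) (h2 : P.natDegree ≤ r2) (i j : ℕ) :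
    ((tau y z P).coeff j).coeff i = ∑ b ∈ Finset.range (r2 + 1), ∑ a ∈ Finset.range (r1 + 1),
      (P.coeff b).coeff a * (a.choose i) * (b.choose j) * y ^ (a - i) * z ^ (b - j) := by
  have hP : P = ∑ b ∈ Finset.range (r2 + 1), ∑ a ∈ Finset.range (r1 + 1),
      monomial b (monomial a ((P.coeff b).coeff a)) := by
    conv_lhs => rw [P.as_sum_range' (r2 + 1) (by omega)]
    refine Finset.sum_congr rfl fun b _ => ?_
    rw [← map_sum, ← (P.coeff b).as_sum_range' (r1 + 1) (by have := h1 b; omega)]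
  conv_lhs => rw [hP]
  simp only [map_sum, finsetSum_coeff, tau_monomial]

lemma powred (d : ℕ) (f : ℤ[X]) (hf : f.Monic) (hd : f.natDegree = d) (hd0 : 0 < d) (c : ℝ)
    (hc : aeval c f = 0) : ∃ (M : ℝ) (e : ℕ → ℕ → ℤ), 1 ≤ M ∧
      (∀ k, c ^ k = ∑ l ∈ Finset.range d, (e k l : ℝ) * c ^ l) ∧ ∀ k l, |(e k l : ℝ)| ≤ M ^ k := by
  obtain ⟨d, rfl⟩ : ∃ d', d = d' + 1 := ⟨d - 1, by omega⟩
  have hcd : c ^ (d + 1) = ∑ l ∈ Finset.range (d + 1), (-(f.coeff l : ℝ)) * c ^ l := by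
    rw [aeval_eq_sum_range, hd, Finset.sum_range_succ] at hc
    have : f.coeff (d + 1) = 1 := by rw [← hd]; exact hf
    rw [this] at hc
    simp only [zsmul_eq_mul, Int.cast_one, one_mul] at hc
    simp only [neg_mul, Finset.sum_neg_distrib]
    linarith
  set e : ℕ → ℕ → ℤ := fun k => Nat.rec (fun l => if l = 0 then 1 else 0)
    (fun _ ek l => (if l = 0 then 0 else ek (l - 1)) - f.coeff l * ek d) k with he
  have he0 : ∀ l, e 0 l = if l = 0 then 1 else 0 := fun l => rfl
  have hes : ∀ k l, e (k + 1) l = (if l = 0 then 0 else e k (l - 1)) - f.coeff l * e k d := fun k l => rfl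
  set L := l1 (normRingSeminorm ℤ) f with hL
  have hfl : ∀ l, |(f.coeff l : ℝ)| ≤ L := fun l => by
    have := coeff_le_l1 (normRingSeminorm ℤ) f l
    have h2 : ‖f.coeff l‖ ≤ L := this
    rwa [Int.norm_eq_abs] at h2
  have hL0 : 0 ≤ L := apply_nonneg _ _
  refine ⟨1 + L, e, by linarith, ?_, ?_⟩
  · intro k
    induction k with
    | zero => 
      rw [Finset.sum_range_succ']
      simp [he0]
    | succ k ih => 
      rw [pow_succ, ih, Finset.sum_mul, Finset.sum_range_succ]
      have h3 : (e k d : ℝ) * c ^ d * c = (e k d : ℝ) * c ^ (d + 1) := by ring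
      rw [h3, hcd, Finset.mul_sum]
      have h4 : ∑ l ∈ Finset.range (d + 1), (e (k + 1) l : ℝ) * c ^ l =
        ∑ l ∈ Finset.range (d + 1), (((if l = 0 then 0 else e k (l - 1) : ℤ) : ℝ) * c ^ l) + 
        ∑ l ∈ Finset.range (d + 1), (e k d : ℝ) * (-(f.coeff l : ℝ) * c ^ l) := by
        rw [← Finset.sum_add_distrib]
        refine Finset.sum_congr rfl fun l _ => ?_
        rw [hes]; push_cast; ring
      rw [h4]
      congr 1
      rw [Finset.sum_range_succ']
      simp [pow_succ, mul_assoc]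
  · intro k
    induction k with
    | zero => intro l; rw [he0]; split_ifs <;> simp
    | succ k ih => 
      intro l
      rw [hes]; push_cast
      have h5 : |((if l = 0 then (0:ℝ) else (e k (l - 1) : ℝ)))| ≤ (1 + L) ^ k := by
        split_ifs
        · simp; positivity
        · exact ih _
      calc _ ≤ |((if l = 0 then (0:ℝ) else (e k (l - 1) : ℝ)))| + |(f.coeff l : ℝ) * e k d| := abs_sub _ _
        _ ≤ (1 + L) ^ k + L * (1 + L) ^ k := by
          rw [abs_mul]
          exact add_le_add h5 (mul_le_mul (hfl l) (ih d) (abs_nonneg _) hL0)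
        _ = _ := by ring

noncomputable def It (t : ℝ) (r1 r2 : ℕ) : Finset (ℕ × ℕ) :=
  (Finset.range (r1 + 1) ×ˢ Finset.range (r2 + 1)).filter fun x => (x.1 * r2 + x.2 * r1 : ℝ) < t * r1 * r2

lemma mem_It (t : ℝ) (ht : t ≤ 1) (r1 r2 : ℕ) (h1 : 0 < r1) (h2 : 0 < r2) (i j : ℕ)
    (h : (i * r2 + j * r1 : ℝ) < t * r1 * r2) : (i, j) ∈ It t r1 r2 := by
  have h1' : (0:ℝ) < r1 := by exact_mod_cast h1
  have h2' : (0:ℝ) < r2 := by exact_mod_cast h2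
  have hp : t * r1 * r2 ≤ r1 * r2 := by
    have := mul_le_mul_of_nonneg_right ht (mul_pos h1' h2').le
    linarith
  have hi : (i : ℝ) ≤ r1 := by
    have : (0:ℝ) ≤ j * r1 := by positivity
    by_contra hh; push Not at hh
    nlinarith
  have hj : (j : ℝ) ≤ r2 := by
    have : (0:ℝ) ≤ i * r2 := by positivity
    by_contra hh; push Not at hh
    nlinarith
  have hi' : i ≤ r1 := by exact_mod_cast hi
  have hj' : j ≤ r2 := by exact_mod_cast hj
  simp only [It, Finset.mem_filter, Finset.mem_product, Finset.mem_range]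
  exact ⟨⟨by omega, by omega⟩, h⟩

lemma card_It (t : ℝ) (ht0 : 0 ≤ t) (ht : t ≤ 1) (r1 r2 : ℕ) (h1 : 0 < r1) (h2 : 0 < r2) :
    ((It t r1 r2).card : ℝ) ≤ t ^ 2 / 2 * r1 * r2 + r1 + r2 + 1 := by
  have h1' : (0:ℝ) < r1 := by exact_mod_cast h1
  have h2' : (1:ℝ) ≤ r2 := by exact_mod_cast h2
  set J := ⌈t * r2⌉₊ with hJ
  have hsub : It t r1 r2 ⊆ ((Finset.range J).sigma fun j => Finset.range ⌈r1 * (t - j / r2)⌉₊).image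
      (fun x => (x.2, x.1)) := by
    rintro ⟨i, j⟩ hx
    simp only [It, Finset.mem_filter] at hx
    have hx := hx.2
    simp only [Finset.mem_image, Finset.mem_sigma, Finset.mem_range, Sigma.exists, Prod.mk.injEq]
    refine ⟨j, i, ⟨?_, ?_⟩, rfl, rfl⟩
    · rw [hJ, Nat.lt_ceil]
      have : (0:ℝ) ≤ i * r2 := by positivity
      by_contra hh; push Not at hh
      nlinarith
    · rw [Nat.lt_ceil]
      have : r1 * (t - (j:ℝ) / r2) = (t * r1 * r2 - j * r1) / r2 := by field_simp
      rw [this, lt_div_iff₀ (by linarith)]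
      linarith
  have hc1 : ((It t r1 r2).card : ℝ) ≤ ∑ j ∈ Finset.range J, ((⌈r1 * (t - (j:ℝ) / r2)⌉₊ : ℕ) : ℝ) := by
    have := (Finset.card_le_card hsub).trans Finset.card_image_le
    rw [Finset.card_sigma] at this
    simp only [Finset.card_range] at this
    exact_mod_cast this
  have hJ1 : (J : ℝ) < t * r2 + 1 := Nat.ceil_lt_add_one (by positivity)
  have hJ2 : t * r2 ≤ (J : ℝ) := Nat.le_ceil _
  have hgauss : ∀ n : ℕ, ∑ j ∈ Finset.range n, (j : ℝ) = n * (n - 1) / 2 := by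
    intro n
    induction n with
    | zero => simp
    | succ n ih => rw [Finset.sum_range_succ, ih]; push_cast; ring
  have hc2 : ∑ j ∈ Finset.range J, ((⌈r1 * (t - (j:ℝ) / r2)⌉₊ : ℕ) : ℝ) ≤
      ∑ j ∈ Finset.range J, (r1 * (t - (j:ℝ) / r2) + 1) := by
    refine Finset.sum_le_sum fun j hj => (Nat.ceil_lt_add_one ?_).le
    have h3 : (j : ℝ) < t * r2 := Nat.lt_ceil.1 (Finset.mem_range.1 hj)
    have : (j : ℝ) / r2 ≤ t := by rw [div_le_iff₀ (by linarith)]; exact h3.le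
    exact mul_nonneg h1'.le (by linarith)
  have hc3 : ∑ j ∈ Finset.range J, (r1 * (t - (j:ℝ) / r2) + 1) =
      r1 * (t * J - J * (J - 1) / 2 / r2) + J := by
    rw [Finset.sum_add_distrib, ← Finset.mul_sum, Finset.sum_sub_distrib, ← Finset.sum_div, hgauss]
    simp only [Finset.sum_const, Finset.card_range, nsmul_eq_mul]; ring
  refine hc1.trans (hc2.trans ?_)
  rw [hc3]
  have h5 : t * J - J * (J - 1) / 2 / r2 ≤ t ^ 2 / 2 * r2 + 1 := by
    obtain ⟨x, hx⟩ : ∃ x, (J : ℝ) = t * r2 + x := ⟨J - t * r2, by ring⟩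
    rw [hx] at hJ1 hJ2 ⊢
    have : t * (t * r2 + x) - (t * r2 + x) * (t * r2 + x - 1) / 2 / r2 =
      t ^ 2 / 2 * r2 + t / 2 + (x - x ^ 2) / 2 / r2 := by
      field_simp; ring
    rw [this]
    have h6 : (x - x ^ 2) / 2 / r2 ≤ 1 / 2 := by
      rw [div_le_iff₀ (by linarith)]; nlinarith
    linarith
  have h7 := mul_le_mul_of_nonneg_left h5 h1'.le
  have h8 : t * r2 ≤ r2 := by nlinarith
  nlinarith

end FMO

namespace FMO

noncomputable abbrev toR : ℤ[X][X] →+* ℝ[X][X] := mapRingHom (mapRingHom (Int.castRingHom ℝ))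

noncomputable def pol (r1 r2 : ℕ) (p : Fin (r1 + 1) × Fin (r2 + 1) → ℤ) : ℤ[X][X] :=
  ∑ x, monomial (x.2 : ℕ) (monomial (x.1 : ℕ) (p x))

lemma pol_coeff (r1 r2 : ℕ) (p : Fin (r1 + 1) × Fin (r2 + 1) → ℤ) (x : Fin (r1 + 1) × Fin (r2 + 1)) :
    ((pol r1 r2 p).coeff x.2).coeff x.1 = p x := by
  rw [pol, finsetSum_coeff, finsetSum_coeff, Finset.sum_eq_single x]
  · simp
  · intro y _ hy
    rw [coeff_monomial]
    split_ifs with h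
    · rw [coeff_monomial]
      split_ifs with h'
      · exact absurd (Prod.ext (Fin.ext h') (Fin.ext h)) hy
      · rfl
    · rfl
  · simp

lemma pol_deg1 (r1 r2 : ℕ) (p : Fin (r1 + 1) × Fin (r2 + 1) → ℤ) (b : ℕ) :
    ((pol r1 r2 p).coeff b).natDegree ≤ r1 := by
  rw [pol, finsetSum_coeff]
  refine natDegree_sum_le_of_forall_le _ _ fun x _ => ?_
  rw [coeff_monomial]
  split_ifs
  · refine (natDegree_monomial_le _).trans ?_
    have := x.1.2; omega
  · simp

lemma pol_deg2 (r1 r2 : ℕ) (p : Fin (r1 + 1) × Fin (r2 + 1) → ℤ) : (pol r1 r2 p).natDegree ≤ r2 := by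
  rw [pol]
  refine natDegree_sum_le_of_forall_le _ _ fun x _ => ?_
  refine (natDegree_monomial_le _).trans ?_
  have := x.2.2; omega

lemma pol_l1 (r1 r2 : ℕ) (p : Fin (r1 + 1) × Fin (r2 + 1) → ℤ) (T : ℝ) (h : ∀ x, ‖p x‖ ≤ T) :
    l1 (l1 (normRingSeminorm ℤ)) (pol r1 r2 p) ≤ (r1 + 1) * (r2 + 1) * T := by
  rw [pol]
  refine (sn_sum_le _ _ _).trans ?_
  refine (Finset.sum_le_sum (g := fun _ => T) fun x _ => ?_).trans ?_
  · rw [l1_monomial, l1_monomial]; exact h x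
  · simp

lemma pol_tau (r1 r2 : ℕ) (p : Fin (r1 + 1) × Fin (r2 + 1) → ℤ) (c : ℝ) (i j : ℕ) :
    ((tau c c (toR (pol r1 r2 p))).coeff j).coeff i =
     ∑ x, (p x : ℝ) * ((x.1 : ℕ).choose i) * ((x.2 : ℕ).choose j) * c ^ ((x.1 - i) + (x.2 - j) : ℕ) := by
  rw [pol, map_sum, map_sum, finsetSum_coeff, finsetSum_coeff]
  refine Finset.sum_congr rfl fun x _ => ?_
  have : toR (monomial (x.2 : ℕ) (monomial (x.1 : ℕ) (p x))) =
     monomial (x.2 : ℕ) (monomial (x.1 : ℕ) (p x : ℝ)) := by simp [toR]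
  rw [this, tau_monomial, pow_add]; ring

lemma siegel_num (r1 r2 : ℕ) (hr1 : 0 < r1) (hrr : r2 ≤ r1) (δ Mc : ℝ) (hδ : 0 < δ) (hMc : 1 ≤ Mc)
    (m n : ℝ) (hm : 0 ≤ m) (hn : n = 2 * ((r1 + 1) * (r2 + 1))) (hmn : m ≤ (1 - δ) * n) (nA T : ℝ)
    (hA : nA ≤ 2 ^ r1 * 2 ^ r2 * Mc ^ (3 * r1)) (hT : T ≤ (n * max 1 nA) ^ (m / (n - m))) :
    (r1 + 1) * (r2 + 1) * T ≤ Real.exp ((4 + (6 + 3 * Real.log Mc) / δ) * r1) := by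
  have he : (2 : ℝ) ≤ Real.exp 1 := by
    have := Real.add_one_le_exp (1 : ℝ); linarith
  have hr1' : (1:ℝ) ≤ r1 := by exact_mod_cast hr1
  have hrr' : (r2:ℝ) ≤ r1 := by exact_mod_cast hrr
  have hr2' : (0:ℝ) ≤ r2 := Nat.cast_nonneg _
  have hn1 : n ≤ Real.exp (4 * r1) := by
    have h1 : (r1 + 1 : ℝ) ≤ Real.exp r1 := Real.add_one_le_exp _
    have h2 : (2 : ℝ) ≤ Real.exp (2 * r1) := by
      have := Real.add_one_le_exp (2 * r1 : ℝ); linarith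
    calc n = 2 * ((r1 + 1) * (r2 + 1)) := hn
      _ ≤ 2 * ((r1 + 1) * (r1 + 1)) := by gcongr
      _ ≤ Real.exp (2 * r1) * (Real.exp r1 * Real.exp r1) := by gcongr
      _ = _ := by rw [← Real.exp_add, ← Real.exp_add]; ring_nf
  have hn2 : 2 ≤ n := by rw [hn]; nlinarith
  have hlog : 0 ≤ Real.log Mc := Real.log_nonneg hMc
  have hmax : max 1 nA ≤ Real.exp ((2 + 3 * Real.log Mc) * r1) := by
    apply max_le
    · apply Real.one_le_exp; positivity
    · refine hA.trans ?_
      have e1 : (2:ℝ) ^ r2 ≤ 2 ^ r1 := pow_le_pow_right₀ (by norm_num) hrr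
      have e2 : Mc ^ (3 * r1) = Real.exp (3 * Real.log Mc * r1) := by
        rw [← Real.exp_log (show 0 < Mc by linarith), ← Real.exp_nat_mul, Real.exp_log (by linarith)]
        push_cast; ring_nf
      calc (2:ℝ) ^ r1 * 2 ^ r2 * Mc ^ (3 * r1) ≤ (Real.exp 1) ^ r1 * (Real.exp 1) ^ r1 * Mc ^ (3 * r1) := by
            gcongr
            exact e1.trans (by gcongr)
        _ = _ := by rw [e2, ← Real.exp_nat_mul, ← Real.exp_add, ← Real.exp_add]; ring_nf
  have hbase : n * max 1 nA ≤ Real.exp ((6 + 3 * Real.log Mc) * r1) := by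
    calc _ ≤ Real.exp (4 * r1) * Real.exp ((2 + 3 * Real.log Mc) * r1) := by gcongr
      _ = _ := by rw [← Real.exp_add]; ring_nf
  have hbase1 : 1 ≤ n * max 1 nA := by
    have := le_max_left 1 nA
    nlinarith
  have hpos : 0 < n - m := by nlinarith
  have hexp : m / (n - m) ≤ 1 / δ := by
    rw [div_le_div_iff₀ hpos hδ]; nlinarith
  have hT2 : T ≤ Real.exp ((6 + 3 * Real.log Mc) / δ * r1) := by
    refine hT.trans ((Real.rpow_le_rpow_of_exponent_le hbase1 hexp).trans ?_)
    refine (Real.rpow_le_rpow (by linarith) hbase (by positivity)).trans ?_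
    rw [← Real.exp_mul]
    apply le_of_eq; congr 1; ring
  calc (r1 + 1) * (r2 + 1) * T ≤ n * Real.exp ((6 + 3 * Real.log Mc) / δ * r1) := by
        rw [hn]
        have : (0:ℝ) ≤ (r1 + 1) * (r2 + 1) := by positivity
        have e0 := Real.exp_pos ((6 + 3 * Real.log Mc) / δ * r1)
        calc _ ≤ (r1 + 1) * (r2 + 1) * Real.exp ((6 + 3 * Real.log Mc) / δ * r1) := by gcongr
          _ ≤ _ := by nlinarith [mul_nonneg this e0.le]
    _ ≤ Real.exp (4 * r1) * Real.exp ((6 + 3 * Real.log Mc) / δ * r1) := by gcongr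
    _ = _ := by rw [← Real.exp_add]; ring_nf

theorem siegel (d : ℕ) (f : ℤ[X]) (hf : f.Monic) (hd : f.natDegree = d) (hd0 : 0 < d) (c : ℝ)
    (hc : aeval c f = 0) (t s : ℝ) (ht0 : 0 < t) (ht : t ≤ 1) (hs0 : 0 ≤ s) (hs : s ≤ 1)
    (hts : d * (t ^ 2 + s ^ 2) < 4) :
    ∃ K R0 : ℝ, 0 ≤ K ∧ ∀ r1 r2 : ℕ, 0 < r2 → R0 ≤ r2 → r2 ≤ r1 → ∃ A B : ℤ[X][X], (A ≠ 0 ∨ B ≠ 0) ∧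
      (∀ b, (A.coeff b).natDegree ≤ r1) ∧ (∀ b, (B.coeff b).natDegree ≤ r1) ∧
      A.natDegree ≤ r2 ∧ B.natDegree ≤ r2 ∧
      l1 (l1 (normRingSeminorm ℤ)) A ≤ Real.exp (K * r1) ∧
      l1 (l1 (normRingSeminorm ℤ)) B ≤ Real.exp (K * r1) ∧
      Van c c r1 r2 (toR A + C (C c) * toR B) (t * r1 * r2) ∧ Van c c r1 r2 (toR B) (s * r1 * r2) := by
  obtain ⟨Mc, e, hMc, he1, he2⟩ := powred d f hf hd hd0 c hc
  obtain ⟨δ, hδ, hδ'⟩ : ∃ δ : ℝ, 0 < δ ∧ d * (t ^ 2 + s ^ 2) / 2 = 2 - 4 * δ :=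
    ⟨(4 - d * (t ^ 2 + s ^ 2)) / 8, by linarith, by ring⟩
  have hlog : 0 ≤ Real.log Mc := Real.log_nonneg hMc
  refine ⟨4 + (6 + 3 * Real.log Mc) / δ, 3 * d / δ, by positivity, ?_⟩
  intro r1 r2 hr2 hR hrr
  have hr1 : 0 < r1 := by omega
  have hr1' : (1:ℝ) ≤ r1 := by exact_mod_cast hr1
  have hr2' : (1:ℝ) ≤ r2 := by exact_mod_cast hr2
  have hrr' : (r2:ℝ) ≤ r1 := by exact_mod_cast hrr
  have hd' : (0:ℝ) < d := by exact_mod_cast hd0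
  let α := (↥(It t r1 r2) × Fin d) ⊕ (↥(It s r1 r2) × Fin d)
  let β := (Fin (r1 + 1) × Fin (r2 + 1)) ⊕ (Fin (r1 + 1) × Fin (r2 + 1))
  let F : (ℕ × ℕ) → Fin (r1 + 1) × Fin (r2 + 1) → ℕ → ℕ → ℤ := fun ij x o l =>
    ((x.1 : ℕ).choose ij.1) * ((x.2 : ℕ).choose ij.2) * e ((x.1 - ij.1) + (x.2 - ij.2) + o : ℕ) l
  have hF : ∀ ij x o l, o ≤ 1 → ‖F ij x o l‖ ≤ 2 ^ r1 * 2 ^ r2 * Mc ^ (3 * r1) := by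
    intro ij x o l ho
    simp only [F]
    rw [Int.norm_eq_abs]; push_cast
    rw [abs_mul, abs_mul, Nat.abs_cast, Nat.abs_cast]
    have b1 : (((x.1 : ℕ).choose ij.1 : ℕ) : ℝ) ≤ 2 ^ r1 := by
      have h1 := Nat.choose_le_two_pow (x.1 : ℕ) ij.1
      have h2 : (2:ℕ) ^ (x.1 : ℕ) ≤ 2 ^ r1 := Nat.pow_le_pow_right (by norm_num) (by have := x.1.2; omega)
      exact_mod_cast h1.trans h2
    have b2 : (((x.2 : ℕ).choose ij.2 : ℕ) : ℝ) ≤ 2 ^ r2 := by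
      have h1 := Nat.choose_le_two_pow (x.2 : ℕ) ij.2
      have h2 : (2:ℕ) ^ (x.2 : ℕ) ≤ 2 ^ r2 := Nat.pow_le_pow_right (by norm_num) (by have := x.2.2; omega)
      exact_mod_cast h1.trans h2
    have b3 : |(e ((x.1 - ij.1) + (x.2 - ij.2) + o : ℕ) l : ℝ)| ≤ Mc ^ (3 * r1) := by
      refine (he2 _ _).trans (pow_le_pow_right₀ hMc ?_)
      have := x.1.2; have := x.2.2; omega
    gcongr
  let M : Matrix α β ℤ := Matrix.fromBlocks
    (Matrix.of fun (r : ↥(It t r1 r2) × Fin d) x => F r.1 x 0 r.2)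
    (Matrix.of fun (r : ↥(It t r1 r2) × Fin d) x => F r.1 x 1 r.2) 0
    (Matrix.of fun (r : ↥(It s r1 r2) × Fin d) x => F r.1 x 0 r.2)
  have hcα : (Fintype.card α : ℝ) = d * ((It t r1 r2).card + (It s r1 r2).card) := by
    simp [α]; ring
  have hcβ : (Fintype.card β : ℝ) = 2 * ((r1 + 1) * (r2 + 1)) := by
    simp [β]; ring
  have hmn : (Fintype.card α : ℝ) ≤ (1 - δ) * Fintype.card β := by
    rw [hcα, hcβ]
    have c1 := card_It t ht0.le ht r1 r2 hr1 hr2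
    have c2 := card_It s hs0 hs r1 r2 hr1 hr2
    have hR' : 3 * d ≤ r2 * δ := by rwa [div_le_iff₀ hδ] at hR
    have c3 : (d:ℝ) * ((It t r1 r2).card + (It s r1 r2).card) ≤
      d * ((t ^ 2 / 2 * r1 * r2 + r1 + r2 + 1) + (s ^ 2 / 2 * r1 * r2 + r1 + r2 + 1)) := by gcongr
    refine c3.trans ?_
    have c4 : (d:ℝ) * ((t ^ 2 / 2 * r1 * r2 + r1 + r2 + 1) + (s ^ 2 / 2 * r1 * r2 + r1 + r2 + 1)) =
      (d * (t ^ 2 + s ^ 2) / 2) * (r1 * r2) + 2 * d * (r1 + r2 + 1) := by ring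
    rw [c4, hδ']
    have c5 : 2 * d * (r1 + r2 + 1) ≤ 2 * δ * (r1 * r2) := by
      calc 2 * d * (r1 + r2 + 1 : ℝ) ≤ 2 * d * (r1 + r1 + r1) := by gcongr
        _ = 2 * r1 * (3 * d) := by ring
        _ ≤ 2 * r1 * (r2 * δ) := by gcongr
        _ = _ := by ring
    have hδ1 : δ ≤ 1 / 2 := by
      have : 0 ≤ d * (t ^ 2 + s ^ 2) / 2 := by positivity
      linarith
    nlinarith [mul_pos (show (0:ℝ) < r1 by linarith) (show (0:ℝ) < r2 by linarith)]
  have hαpos : 0 < Fintype.card α := by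
    have h00 : (0, 0) ∈ It t r1 r2 := mem_It t ht r1 r2 hr1 hr2 0 0 (by
      simp; positivity)
    rw [Fintype.card_pos_iff]
    exact ⟨Sum.inl (⟨_, h00⟩, ⟨0, hd0⟩)⟩
  have hlt : Fintype.card α < Fintype.card β := by
    have h1 : (0:ℝ) < Fintype.card β := by rw [hcβ]; positivity
    have : (Fintype.card α : ℝ) < Fintype.card β := by nlinarith
    exact_mod_cast this
  letI : SeminormedAddCommGroup (Matrix α β ℤ) := Matrix.seminormedAddCommGroup
  obtain ⟨x, hx0, hxM, hxn⟩ := Int.Matrix.exists_ne_zero_int_vec_norm_le M hlt hαpos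
  have hMn : ‖M‖ ≤ 2 ^ r1 * 2 ^ r2 * Mc ^ (3 * r1) := by
    rw [Matrix.norm_le_iff (by positivity)]
    rintro (i | i) (j | j)
    · exact hF _ _ _ _ (by omega)
    · exact hF _ _ _ _ (by omega)
    · simp only [M, Matrix.fromBlocks_apply₂₁, Matrix.zero_apply, norm_zero]; positivity
    · exact hF _ _ _ _ (by omega)
  have hfin := siegel_num r1 r2 hr1 hrr δ Mc hδ hMc (Fintype.card α) (Fintype.card β) (Nat.cast_nonneg _)
    hcβ hmn ‖M‖ ‖x‖ hMn hxn
  set p : Fin (r1 + 1) × Fin (r2 + 1) → ℤ := fun y => x (Sum.inl y) with hp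
  set q : Fin (r1 + 1) × Fin (r2 + 1) → ℤ := fun y => x (Sum.inr y) with hq
  -- the equations
  have eq1 : ∀ ij ∈ It t r1 r2, ∀ l : Fin d, ∑ y, F ij y 0 l * p y + ∑ y, F ij y 1 l * q y = 0 := by
    intro ij hij l
    have := congrFun hxM (Sum.inl (⟨ij, hij⟩, l))
    rw [Matrix.mulVec, dotProduct, Fintype.sum_sum_type] at this
    exact this
  have eq2 : ∀ ij ∈ It s r1 r2, ∀ l : Fin d, ∑ y, F ij y 0 l * q y = 0 := by
    intro ij hij l
    have := congrFun hxM (Sum.inr (⟨ij, hij⟩, l))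
    rw [Matrix.mulVec, dotProduct, Fintype.sum_sum_type] at this
    simpa [M] using this
  have hsum : ∀ (w : Fin (r1 + 1) × Fin (r2 + 1) → ℤ) (ij : ℕ × ℕ) (o : ℕ),
      ∑ y, (w y : ℝ) * ((y.1 : ℕ).choose ij.1) * ((y.2 : ℕ).choose ij.2) * c ^ ((y.1 - ij.1) + (y.2 - ij.2) + o : ℕ) =
      ∑ l : Fin d, ((∑ y, F ij y o l * w y : ℤ) : ℝ) * c ^ (l : ℕ) := by
    intro w ij o
    push_cast
    simp_rw [Finset.sum_mul]
    rw [Finset.sum_comm]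
    refine Finset.sum_congr rfl fun y _ => ?_
    rw [he1, ← Fin.sum_univ_eq_sum_range (fun l => (e ((y.1 - ij.1) + (y.2 - ij.2) + o : ℕ) l : ℝ) * c ^ l), Finset.mul_sum]
    refine Finset.sum_congr rfl fun l _ => ?_
    simp only [F]; push_cast; ring
  refine ⟨pol r1 r2 p, pol r1 r2 q, ?_, pol_deg1 _ _ _, pol_deg1 _ _ _, pol_deg2 _ _ _, pol_deg2 _ _ _,
    (pol_l1 _ _ _ _ fun y => norm_le_pi_norm x _).trans hfin,
    (pol_l1 _ _ _ _ fun y => norm_le_pi_norm x _).trans hfin, ?_, ?_⟩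
  · by_contra hno
    push Not at hno
    apply hx0
    ext1 y
    rcases y with y | y
    · have := pol_coeff r1 r2 p y
      rw [hno.1] at this; exact this.symm
    · have := pol_coeff r1 r2 q y
      rw [hno.2] at this; exact this.symm
  · intro i j hij
    have hmem := mem_It t ht r1 r2 hr1 hr2 i j hij
    rw [map_add, map_mul, tau_CC, coeff_add, coeff_add, coeff_C_mul, coeff_C_mul, pol_tau, pol_tau]
    have h1 := hsum p (i, j) 0
    have h2 := hsum q (i, j) 1
    simp only [add_zero] at h1
    rw [h1, Finset.mul_sum]
    have h3 : ∑ y, c * ((q y : ℝ) * ((y.1 : ℕ).choose i) * ((y.2 : ℕ).choose j) * c ^ ((y.1 - i) + (y.2 - j) : ℕ)) = 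
      ∑ l : Fin d, ((∑ y, F (i, j) y 1 l * q y : ℤ) : ℝ) * c ^ (l : ℕ) := by
      rw [← h2]
      refine Finset.sum_congr rfl fun y _ => ?_
      rw [pow_succ]; ring
    rw [h3, ← Finset.sum_add_distrib]
    refine Finset.sum_eq_zero fun l _ => ?_
    rw [← add_mul, ← Int.cast_add, eq1 _ hmem l]; simp
  · intro i j hij
    have hmem := mem_It s hs r1 r2 hr1 hr2 i j hij
    rw [pol_tau]
    have h1 := hsum q (i, j) 0
    simp only [add_zero] at h1
    rw [h1]
    refine Finset.sum_eq_zero fun l _ => ?_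
    rw [eq2 _ hmem l]; simp

end FMO

namespace FMO

lemma choose_le_real (n k r : ℕ) (h : n ≤ r) : ((n.choose k : ℕ) : ℝ) ≤ 2 ^ r := by
  have h1 := Nat.choose_le_two_pow n k
  have h2 : (2:ℕ) ^ n ≤ 2 ^ r := Nat.pow_le_pow_right (by norm_num) h
  exact_mod_cast h1.trans h2

lemma dsum_le (r1 r2 : ℕ) (g : ℕ → ℕ → ℝ) (B : ℝ)
    (h : ∀ a b, a ≤ r1 → b ≤ r2 → |g a b| ≤ B) :
    |∑ b ∈ Finset.range (r2 + 1), ∑ a ∈ Finset.range (r1 + 1), g a b| ≤ (r1 + 1) * (r2 + 1) * B := by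
  refine (Finset.abs_sum_le_sum_abs _ _).trans ?_
  refine (Finset.sum_le_sum (g := fun _ => (r1 + 1) * B) fun b hb => ?_).trans ?_
  · refine (Finset.abs_sum_le_sum_abs _ _).trans ?_
    refine (Finset.sum_le_sum (g := fun _ => B) fun a ha => ?_).trans ?_
    · exact h a b (by have := Finset.mem_range.1 ha; omega) (by have := Finset.mem_range.1 hb; omega)
    · simp
  · simp; apply le_of_eq; ring

lemma TB (P : ℝ[X][X]) (r1 r2 : ℕ) (hr1 : 0 < r1) (hr2 : 0 < r2) (hrr : r2 ≤ r1)
    (h1 : ∀ b, (P.coeff b).natDegree ≤ r1) (h2 : P.natDegree ≤ r2) (H : ℝ) (hH0 : 0 ≤ H)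
    (hH : ∀ a b, |(P.coeff b).coeff a| ≤ H) (c T ε κ x1 x2 : ℝ)
    (hV : Van c c r1 r2 P (T * r1 * r2)) (hκ : 0 ≤ κ) (hx1 : 0 ≤ x1)
    (hxx : r1 * x1 ≤ r2 * x2) (y1 y2 : ℝ) (hy1 : |y1 - c| ≤ Real.exp (-(κ * x1)))
    (hy2 : |y2 - c| ≤ Real.exp (-(κ * x2))) (i j : ℕ) (hij : (i * r2 + j * r1 : ℝ) < ε * r1 * r2) :
    |((tau y1 y2 P).coeff j).coeff i| ≤
      H * Real.exp ((8 + 2 * Real.log (max 1 |c|)) * r1) * Real.exp (-(κ * (T - ε) * (r1 * x1))) := by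
  have hr1' : (0:ℝ) < r1 := by exact_mod_cast hr1
  have hr2' : (0:ℝ) < r2 := by exact_mod_cast hr2
  have hrr' : (r2:ℝ) ≤ r1 := by exact_mod_cast hrr
  set m := max 1 |c| with hm
  have hm1 : 1 ≤ m := le_max_left _ _
  have he : (2 : ℝ) ≤ Real.exp 1 := by
    have := Real.add_one_le_exp (1 : ℝ); linarith
  set Q := tau c c P with hQ
  set G := (r1 + 1) * (r2 + 1) * (H * 2 ^ r1 * 2 ^ r2 * m ^ (2 * r1)) with hG
  have hQc : ∀ a b, |(Q.coeff b).coeff a| ≤ G := by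
    intro a b
    rw [hQ, tau_expand c c P r1 r2 h1 h2]
    refine dsum_le _ _ (fun a' b' => (P.coeff b').coeff a' * (a'.choose a) * (b'.choose b) * c ^ (a' - a) * c ^ (b' - b)) _ ?_
    intro a' b' ha hb
    rw [mul_assoc _ (c ^ _), ← pow_add, abs_mul, abs_mul, abs_mul, Nat.abs_cast, Nat.abs_cast, abs_pow]
    have e1 := choose_le_real a' a r1 ha
    have e2 := choose_le_real b' b r2 hb
    have e3 : |c| ^ ((a' - a) + (b' - b)) ≤ m ^ (2 * r1) := 
      (pow_le_pow_left₀ (abs_nonneg _) (le_max_right _ _) _).trans (pow_le_pow_right₀ hm1 (by omega))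
    have e4 := hH a' b'
    gcongr
  have hQz : ∀ a b, r1 < a ∨ r2 < b → (Q.coeff b).coeff a = 0 := by
    intro a b hab
    rw [hQ, tau_expand c c P r1 r2 h1 h2]
    refine Finset.sum_eq_zero fun b' hb => Finset.sum_eq_zero fun a' ha => ?_
    rw [Finset.mem_range] at ha hb
    rcases hab with h | h
    · rw [Nat.choose_eq_zero_of_lt (show a' < a by omega)]; simp
    · rw [Nat.choose_eq_zero_of_lt (show b' < b by omega)]; simp
  have hQ1 : ∀ b, (Q.coeff b).natDegree ≤ r1 := by
    intro b
    rw [natDegree_le_iff_coeff_eq_zero]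
    intro N hN
    exact hQz _ _ (Or.inl hN)
  have hQ2 : Q.natDegree ≤ r2 := by
    rw [natDegree_le_iff_coeff_eq_zero]
    intro N hN
    ext1 a
    exact hQz _ _ (Or.inr hN)
  have htt : tau y1 y2 P = tau (y1 - c) (y2 - c) Q := by
    rw [hQ, tau_tau]; congr 2 <;> ring
  have hG0 : 0 ≤ G := (abs_nonneg _).trans (hQc 0 0)
  rw [htt, tau_expand _ _ Q r1 r2 hQ1 hQ2]
  set D := Real.exp (-(κ * (T - ε) * (r1 * x1))) with hD
  have hmain : |∑ b ∈ Finset.range (r2 + 1), ∑ a ∈ Finset.range (r1 + 1),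
      (Q.coeff b).coeff a * (a.choose i) * (b.choose j) * (y1 - c) ^ (a - i) * (y2 - c) ^ (b - j)| ≤
      (r1 + 1) * (r2 + 1) * (G * 2 ^ r1 * 2 ^ r2 * D) := by
    refine dsum_le _ _ (fun a b => (Q.coeff b).coeff a * (a.choose i) * (b.choose j) * (y1 - c) ^ (a - i) * (y2 - c) ^ (b - j)) _ ?_
    intro a b ha hb
    by_cases hab : (a * r2 + b * r1 : ℝ) < T * r1 * r2
    · rw [hQ, hV a b hab]; simp; positivity
    push Not at hab
    have e1 := choose_le_real a i r1 ha
    have e2 := choose_le_real b j r2 hb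
    have e3 : |(y1 - c) ^ (a - i) * (y2 - c) ^ (b - j)| ≤ D := by
      rw [abs_mul, abs_pow, abs_pow]
      calc _ ≤ Real.exp (-(κ * x1)) ^ (a - i) * Real.exp (-(κ * x2)) ^ (b - j) := by gcongr
        _ = Real.exp (-(κ * (x1 * (a - i : ℕ) + x2 * (b - j : ℕ)))) := by
          rw [← Real.exp_nat_mul, ← Real.exp_nat_mul, ← Real.exp_add]; ring_nf
        _ ≤ _ := by
          rw [hD, Real.exp_le_exp, neg_le_neg_iff, mul_assoc]
          refine mul_le_mul_of_nonneg_left ?_ hκ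
          have f1 : (a : ℝ) - i ≤ (a - i : ℕ) := by
            rw [sub_le_iff_le_add]; exact_mod_cast (by omega : a ≤ (a - i) + i)
          have f2 : (b : ℝ) - j ≤ (b - j : ℕ) := by
            rw [sub_le_iff_le_add]; exact_mod_cast (by omega : b ≤ (b - j) + j)
          set A' : ℝ := ((a - i : ℕ) : ℝ)
          set B' : ℝ := ((b - j : ℕ) : ℝ)
          have hB' : 0 ≤ B' := Nat.cast_nonneg _
          have f3 : (T - ε) * r1 * r2 ≤ A' * r2 + B' * r1 := by nlinarith
          have f4 : r1 * x1 * B' ≤ r2 * x2 * B' := mul_le_mul_of_nonneg_right hxx hB'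
          have f5 : (T - ε) * (r1 * x1) * r2 ≤ (x1 * A' + x2 * B') * r2 := by
            nlinarith [mul_le_mul_of_nonneg_left f3 hx1]
          exact le_of_mul_le_mul_right f5 hr2'
    rw [mul_assoc _ ((y1 - c) ^ _), abs_mul, abs_mul, abs_mul, Nat.abs_cast, Nat.abs_cast]
    have e4 := hQc a b
    gcongr
  refine hmain.trans ?_
  have g1 : (r1 + 1 : ℝ) ≤ Real.exp r1 := Real.add_one_le_exp _
  have g2 : (r2 + 1 : ℝ) ≤ Real.exp r1 := by linarith
  have g3 : (2:ℝ) ^ r1 ≤ Real.exp r1 := by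
    calc (2:ℝ) ^ r1 ≤ (Real.exp 1) ^ r1 := by gcongr
      _ = _ := by rw [← Real.exp_nat_mul]; ring_nf
  have g4 : (2:ℝ) ^ r2 ≤ Real.exp r1 := (pow_le_pow_right₀ (by norm_num) hrr).trans g3
  have g5 : m ^ (2 * r1) = Real.exp (2 * Real.log m * r1) := by
    have : 0 < m := by linarith
    rw [← Real.exp_log this, ← Real.exp_nat_mul, Real.exp_log this]
    push_cast; ring_nf
  have hD0 : 0 < D := Real.exp_pos _
  calc (r1 + 1) * (r2 + 1) * (G * 2 ^ r1 * 2 ^ r2 * D) 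
      ≤ Real.exp r1 * Real.exp r1 * ((Real.exp r1 * Real.exp r1 * (H * Real.exp r1 * Real.exp r1 * Real.exp (2 * Real.log m * r1))) * Real.exp r1 * Real.exp r1 * D) := by
        rw [hG, ← g5]; gcongr
    _ = H * (Real.exp r1 * Real.exp r1 * Real.exp r1 * Real.exp r1 * Real.exp r1 * Real.exp r1 * Real.exp r1 * Real.exp r1 * Real.exp (2 * Real.log m * r1)) * D := by ring
    _ = _ := by
      simp only [← Real.exp_add]
      ring_nf

lemma lowerb (E : ℤ[X][X]) (r1 r2 : ℕ) (h1 : ∀ b, (E.coeff b).natDegree ≤ r1) (h2 : E.natDegree ≤ r2)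
    (y1 y2 : ℚ) (i j : ℕ) (h : ((tau y1 y2 (toQ E)).coeff j).coeff i ≠ 0) :
    1 ≤ (y1.den : ℝ) ^ r1 * (y2.den : ℝ) ^ r2 * |((tau (y1 : ℝ) (y2 : ℝ) (toR E)).coeff j).coeff i| := by
  have e1 : ((tau (y1 : ℝ) (y2 : ℝ) (toR E)).coeff j).coeff i =
      ((((tau y1 y2 (toQ E)).coeff j).coeff i : ℚ) : ℝ) := by
    have := tau_map (Rat.castHom ℝ) y1 y2 (toQ E) i j
    rw [← Rat.coe_castHom, ← this]
    congr 3
    simp only [toQ, toR, coe_mapRingHom]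
    rw [Polynomial.map_map, mapRingHom_comp]
    rfl
  have e2 : ∃ n : ℤ, (y1.den : ℚ) ^ r1 * (y2.den : ℚ) ^ r2 * ((tau y1 y2 (toQ E)).coeff j).coeff i = n := by
    rw [tau_expand y1 y2 (toQ E) r1 r2 ?_ ?_]
    · have hint : ∀ (y : ℚ) (r a : ℕ), a ≤ r → ∃ n : ℤ, (y.den : ℚ) ^ r * y ^ a = n := by
        intro y r a har
        refine ⟨y.den ^ (r - a) * y.num ^ a, ?_⟩
        have : (y.den : ℚ) ^ r = y.den ^ (r - a) * y.den ^ a := by rw [← pow_add]; congr 1; omega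
        rw [this, mul_assoc, ← mul_pow, mul_comm (y.den : ℚ) y, Rat.mul_den_eq_num]; push_cast; rfl
      rw [Finset.mul_sum]
      have : ∀ b a, ∃ n : ℤ, b ∈ Finset.range (r2 + 1) → a ∈ Finset.range (r1 + 1) →
          (y1.den : ℚ) ^ r1 * (y2.den : ℚ) ^ r2 * (((toQ E).coeff b).coeff a * (a.choose i) * (b.choose j) * y1 ^ (a - i) * y2 ^ (b - j)) = n := by
        intro b a
        by_cases hb : b ≤ r2
        · by_cases ha : a ≤ r1
          · obtain ⟨n1, hn1⟩ := hint y1 r1 (a - i) (by omega)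
            obtain ⟨n2, hn2⟩ := hint y2 r2 (b - j) (by omega)
            refine ⟨(E.coeff b).coeff a * (a.choose i) * (b.choose j) * n1 * n2, fun _ _ => ?_⟩
            push_cast
            rw [← hn1, ← hn2]
            simp only [toQ, coe_mapRingHom, coeff_map, eq_intCast]
            ring
          · exact ⟨0, fun _ h => absurd (Finset.mem_range.1 h) (by omega)⟩
        · exact ⟨0, fun h _ => absurd (Finset.mem_range.1 h) (by omega)⟩
      choose n hn using this
      refine ⟨∑ b ∈ Finset.range (r2 + 1), ∑ a ∈ Finset.range (r1 + 1), n b a, ?_⟩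
      push_cast
      refine Finset.sum_congr rfl fun b hb => ?_
      rw [Finset.mul_sum]
      exact Finset.sum_congr rfl fun a ha => hn b a hb ha
    · intro b
      simp only [toQ, coe_mapRingHom, coeff_map]
      exact natDegree_map_le.trans (h1 b)
    · exact natDegree_map_le.trans h2
  obtain ⟨n, hn⟩ := e2
  have hd1 : (y1.den : ℚ) ≠ 0 := by exact_mod_cast y1.den_nz
  have hd2 : (y2.den : ℚ) ≠ 0 := by exact_mod_cast y2.den_nz
  have hn0 : n ≠ 0 := by
    rintro rfl
    rw [Int.cast_zero] at hn
    exact mul_ne_zero (mul_ne_zero (pow_ne_zero _ hd1) (pow_ne_zero _ hd2)) h hn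
  have h3 : (1:ℝ) ≤ |(n : ℝ)| := by exact_mod_cast Int.one_le_abs hn0
  have h4 : (y1.den : ℝ) ^ r1 * (y2.den : ℝ) ^ r2 * ((((tau y1 y2 (toQ E)).coeff j).coeff i : ℚ) : ℝ) = n := by
    exact_mod_cast congrArg (fun q : ℚ => (q : ℝ)) hn
  rw [e1, ← abs_of_nonneg (show (0:ℝ) ≤ (y1.den : ℝ) ^ r1 * (y2.den : ℝ) ^ r2 by positivity), ← abs_mul, h4]
  exact h3

end FMO

namespace FMO

lemma coeff_le_l1R (A : ℤ[X][X]) (a b : ℕ) :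
    |(((toR A).coeff b).coeff a)| ≤ l1 (l1 (normRingSeminorm ℤ)) A := by
  have h1 := coeff_le_l1 (l1 (normRingSeminorm ℤ)) A b
  have h2 := coeff_le_l1 (normRingSeminorm ℤ) (A.coeff b) a
  have h3 : |(((toR A).coeff b).coeff a)| = normRingSeminorm ℤ ((A.coeff b).coeff a) := by
    simp only [toR, coe_mapRingHom, coeff_map, eq_intCast]
    rfl
  rw [h3]; exact h2.trans h1

lemma upperE (K c t w ε κ x1 x2 x3 : ℝ) (r1 r2 : ℕ) (hr1 : 0 < r1) (hr2 : 0 < r2) (hrr : r2 ≤ r1)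
    (A B : ℤ[X][X])
    (hA1 : ∀ b, (A.coeff b).natDegree ≤ r1) (hB1 : ∀ b, (B.coeff b).natDegree ≤ r1)
    (hA2 : A.natDegree ≤ r2) (hB2 : B.natDegree ≤ r2)
    (hA : l1 (l1 (normRingSeminorm ℤ)) A ≤ Real.exp (K*r1))
    (hB : l1 (l1 (normRingSeminorm ℤ)) B ≤ Real.exp (K*r1))
    (hV : Van c c r1 r2 (toR A + C (C c) * toR B) (t*r1*r2))
    (hW : Van c c r1 r2 (toR B) ((t-w)*r1*r2))
    (hκ : 0 ≤ κ) (hx1 : 0 ≤ x1) (hxx : r1 * x1 ≤ r2 * x2) (hx3 : w * (r1 * x1) ≤ x3)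
    (y1 y2 : ℝ) (y3 : ℚ) (hy1 : |y1 - c| ≤ Real.exp (-(κ * x1)))
    (hy2 : |y2 - c| ≤ Real.exp (-(κ * x2))) (hy3 : |(y3:ℝ) - c| ≤ Real.exp (-(κ * x3)))
    (i j : ℕ) (hij : (i * r2 + j * r1 : ℝ) < ε * r1 * r2) :
    |((tau y1 y2 (toR (C (C (y3.den:ℤ))*A + C (C y3.num)*B))).coeff j).coeff i| ≤
      y3.den * ((2 + |c|) * (Real.exp (K*r1) * Real.exp ((8 + 2 * Real.log (max 1 |c|)) * r1) *
        Real.exp (-(κ * (t - ε) * (r1 * x1))))) := by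
  have mapdeg : ∀ (A : ℤ[X][X]) b, (A.coeff b).natDegree ≤ r1 → ((toR A).coeff b).natDegree ≤ r1 := by
    intro A b h
    simp only [toR, coe_mapRingHom, coeff_map]
    exact natDegree_map_le.trans h
  have hE : toR (C (C (y3.den:ℤ))*A + C (C y3.num)*B) =
      C (C (y3.den : ℝ)) * ((toR A + C (C c) * toR B) + C (C ((y3:ℝ) - c)) * toR B) := by
    have hnum : (y3.num : ℝ) = y3.den * (y3 : ℝ) := by
      exact_mod_cast (Rat.den_mul_eq_num y3).symm
    rw [map_add, map_mul, map_mul]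
    have e1 : toR (C (C (y3.den:ℤ))) = C (C (y3.den : ℝ)) := by
      simp [toR]
    have e2 : toR (C (C y3.num)) = C (C (y3.den : ℝ)) * C (C (y3 : ℝ)) := by
      rw [← C_mul, ← C_mul, ← hnum]; simp [toR]
    rw [e1, e2, C_sub, C_sub]; ring
  have b1 := TB (toR A + C (C c) * toR B) r1 r2 hr1 hr2 hrr ?_ ?_ ((1 + |c|) * Real.exp (K*r1))
    (by positivity) ?_ c t ε κ x1 x2 hV hκ hx1 hxx y1 y2 hy1 hy2 i j hij
  · have b2 := TB (toR B) r1 r2 hr1 hr2 hrr (fun b => mapdeg _ _ (hB1 b)) (natDegree_map_le.trans hB2) (Real.exp (K*r1))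
      (by positivity) (fun a b => (coeff_le_l1R B a b).trans hB) c (t-w) ε κ x1 x2 hW hκ hx1 hxx y1 y2 hy1 hy2 i j hij
    rw [hE, map_mul, tau_CC, coeff_C_mul, coeff_C_mul, map_add, map_mul (tau y1 y2) (C (C ((y3:ℝ)-c))), tau_CC, coeff_add, coeff_add, coeff_C_mul, coeff_C_mul, abs_mul, Nat.abs_cast]
    refine mul_le_mul_of_nonneg_left ?_ (Nat.cast_nonneg _)
    refine (abs_add_le _ _).trans ?_
    rw [abs_mul]
    have b3 : |(y3:ℝ) - c| * |((tau y1 y2 (toR B)).coeff j).coeff i| ≤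
        Real.exp (-(κ * (w * (r1*x1)))) * (Real.exp (K*r1) * Real.exp ((8 + 2 * Real.log (max 1 |c|)) * r1) * Real.exp (-(κ * (t - w - ε) * (r1 * x1)))) := by
      refine mul_le_mul (hy3.trans ?_) b2 (abs_nonneg _) (Real.exp_pos _).le
      rw [Real.exp_le_exp, neg_le_neg_iff]
      exact mul_le_mul_of_nonneg_left hx3 hκ
    have b4 : Real.exp (-(κ * (w * (r1*x1)))) * (Real.exp (K*r1) * Real.exp ((8 + 2 * Real.log (max 1 |c|)) * r1) * Real.exp (-(κ * (t - w - ε) * (r1 * x1)))) = Real.exp (K*r1) * Real.exp ((8 + 2 * Real.log (max 1 |c|)) * r1) *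
        Real.exp (-(κ * (t - ε) * (r1 * x1))) := by
      simp only [← Real.exp_add]; ring_nf
    rw [b4] at b3
    calc _ ≤ _ := add_le_add b1 b3
      _ = _ := by ring
  · intro b
    rw [coeff_add, coeff_C_mul]
    exact natDegree_add_le_of_degree_le (mapdeg _ _ (hA1 b)) ((natDegree_C_mul_le _ _).trans (mapdeg _ _ (hB1 b)))
  · exact natDegree_add_le_of_degree_le (natDegree_map_le.trans hA2) ((natDegree_C_mul_le _ _).trans (natDegree_map_le.trans hB2))
  · intro a b
    rw [coeff_add, coeff_add, coeff_C_mul, coeff_C_mul]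
    refine (abs_add_le _ _).trans ?_
    rw [abs_mul]
    have h1 := (coeff_le_l1R A a b).trans hA
    have h2 := mul_le_mul_of_nonneg_left ((coeff_le_l1R B a b).trans hB) (abs_nonneg c)
    linarith

lemma rat_fin (c : ℝ) (M : ℕ) : {y : ℚ | |(y:ℝ) - c| ≤ 1 ∧ y.den ≤ M}.Finite := by
  obtain ⟨L, hL⟩ := exists_nat_ge ((|c| + 1) * M)
  refine Set.Finite.subset (((Set.finite_Icc (-(L:ℤ)) L).prod (Set.finite_Iic M)).image
    (fun p : ℤ × ℕ => (p.1 : ℚ) / p.2)) ?_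
  rintro y ⟨h1, h2⟩
  refine ⟨(y.num, y.den), ⟨?_, h2⟩, Rat.num_div_den y⟩
  have hnum : (y.num : ℝ) = y.den * (y : ℝ) := by
    exact_mod_cast (Rat.den_mul_eq_num y).symm
  have h3 : |(y.num : ℝ)| ≤ L := by
    rw [hnum, abs_mul, Nat.abs_cast]
    have h4 : |(y:ℝ)| ≤ |c| + 1 := by
      have := abs_add_le ((y:ℝ) - c) c
      rw [sub_add_cancel] at this; linarith
    have h5 : (y.den : ℝ) ≤ M := by exact_mod_cast h2
    calc _ ≤ (M:ℝ) * (|c| + 1) := by gcongr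
      _ ≤ L := by linarith
  have h6 : |y.num| ≤ (L:ℤ) := by exact_mod_cast h3
  exact abs_le.1 h6

set_option maxHeartbeats 2000000 in
theorem roth (d : ℕ) (f : ℤ[X]) (hf : f.Monic) (hd : f.natDegree = d) (hd0 : 0 < d) (c : ℝ)
    (hc : aeval c f = 0) (t w κ : ℝ) (hw : 0 < w) (hwt : w ≤ t) (ht : t ≤ 1)
    (hts : d * (t^2 + (t-w)^2) < 4) (hκ : 0 < κ) (hκt : 2 + w < κ * t) :
    {y : ℚ | |(y:ℝ) - c| ≤ Real.exp (-(κ * Real.log y.den))}.Finite := by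
  by_contra hinf
  set S := {y : ℚ | |(y:ℝ) - c| ≤ Real.exp (-(κ * Real.log y.den))} with hS
  have hlog : ∀ y : ℚ, 0 ≤ Real.log y.den := fun y => Real.log_natCast_nonneg _
  have hex : ∀ N : ℝ, ∃ y ∈ S, N < Real.log y.den := by
    intro N
    by_contra! hcon
    apply hinf
    obtain ⟨M, hM⟩ := exists_nat_ge (Real.exp N)
    refine (rat_fin c M).subset fun y hy => ⟨?_, ?_⟩
    · refine le_trans hy ?_
      rw [Real.exp_le_one_iff]
      have := mul_nonneg hκ.le (hlog y); linarith
    · have h1 := Real.exp_le_exp.2 (hcon y hy)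
      rw [Real.exp_log (by exact_mod_cast y.den_pos)] at h1
      exact_mod_cast h1.trans hM
  obtain ⟨K, R0, hK, hsie⟩ := siegel d f hf hd hd0 c hc t (t-w) (hw.trans_le hwt) ht (by linarith) (by linarith) hts
  set γ := κ * t - 2 - w with hγ
  have hγ0 : 0 < γ := by rw [hγ]; linarith
  set ε := min 1 (γ / (4*κ)) with hεd
  have hε0 : 0 < ε := lt_min one_pos (by positivity)
  have hε1 : ε ≤ 1 := min_le_left _ _
  have hεγ : κ * ε ≤ γ / 4 := by
    calc κ * ε ≤ κ * (γ / (4*κ)) := by gcongr; exact min_le_right _ _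
      _ = _ := by field_simp
  set c' := 8 + 2 * Real.log (max 1 |c|) with hc'
  have hc'0 : 0 ≤ c' := by
    have := Real.log_nonneg (le_max_left 1 |c|); rw [hc']; linarith
  set C1 := K + c' + (1 + |c|) with hC1
  have hC10 : 0 ≤ C1 := by have := abs_nonneg c; rw [hC1]; linarith
  obtain ⟨y1, hy1, hl1⟩ := hex (48*(2*K+9)/(ε/2)^2 + 8*C1/γ + K/w)
  set x1 := Real.log y1.den with hx1
  have g1 : 0 ≤ 48*(2*K+9)/(ε/2)^2 := by positivity
  have g2 : 0 ≤ 8*C1/γ := by positivity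
  have g3 : 0 ≤ K/w := by positivity
  have hx10 : 0 < x1 := by linarith
  obtain ⟨y2, hy2, hl2⟩ := hex ((16/ε+1)*x1)
  set x2 := Real.log y2.den with hx2
  have g4 : 0 < 16/ε := by positivity
  have hx12 : x1 < x2 := by
    have := mul_pos g4 hx10
    linarith
  have hx20 : 0 < x2 := hx10.trans hx12
  set R := max R0 0 + 2/ε + 6/γ + 2 with hR
  have g5 : 0 < 2/ε := by positivity
  have g6 : 0 < 6/γ := by positivity
  have g7 := le_max_left R0 0
  have g8 := le_max_right R0 0
  obtain ⟨y3, hy3, hl3⟩ := hex (w*x2*(R+1))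
  set x3 := Real.log y3.den with hx3
  have hwx : 0 < w * x2 := by positivity
  have hx30 : 0 ≤ x3 := hlog y3
  set r2 := ⌊x3/(w*x2)⌋₊ with hr2
  have a1 : (r2:ℝ) ≤ x3/(w*x2) := Nat.floor_le (by positivity)
  have a2 : x3/(w*x2) < r2 + 1 := Nat.lt_floor_add_one _
  rw [le_div_iff₀ hwx] at a1
  rw [div_lt_iff₀ hwx] at a2
  have hr2R : R < r2 := by
    have : w*x2*(R+1) < w*x2*(r2+1) := by linarith
    have := lt_of_mul_lt_mul_left this hwx.le
    linarith
  have hr20' : (0:ℝ) < r2 := by linarith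
  have hr20 : 0 < r2 := by exact_mod_cast hr20'
  set r1 := ⌊r2*x2/x1⌋₊ with hr1
  have a3 : (r1:ℝ) ≤ r2*x2/x1 := Nat.floor_le (by positivity)
  have a4 : r2*x2/x1 < r1 + 1 := Nat.lt_floor_add_one _
  rw [le_div_iff₀ hx10] at a3
  rw [div_lt_iff₀ hx10] at a4
  have a5 : 16/ε * r2 ≤ r1 := by
    have h1 : r2 * ((16/ε+1)*x1) ≤ r2 * x2 := by gcongr
    have h2 : (r2 * (16/ε+1)) * x1 < (r1 + 1) * x1 := by linarith
    have h3 := lt_of_mul_lt_mul_right h2 hx10.le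
    linarith
  have a6 : 8 * (r2:ℝ) ≤ ε/2*r1 := by
    have := mul_le_mul_of_nonneg_left a5 (show 0 ≤ ε/2 by positivity)
    calc 8 * (r2:ℝ) = ε/2 * (16/ε*r2) := by field_simp; ring
      _ ≤ _ := this
  have a7 : (r2:ℝ) ≤ r1 := by
    have := mul_le_mul_of_nonneg_right hε1 (Nat.cast_nonneg (α := ℝ) r1)
    linarith
  have hrr : r2 ≤ r1 := by exact_mod_cast a7
  have hr10' : (0:ℝ) < r1 := by linarith
  have hr10 : 0 < r1 := by exact_mod_cast hr10'
  obtain ⟨A, B, hAB, hA1, hB1, hA2, hB2, hA, hB, hV, hW⟩ := hsie r1 r2 hr20 (by linarith) hrr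
  have hden : ∀ y : ℚ, (0:ℝ) < y.den := fun y => by exact_mod_cast y.den_pos
  have hwΛ : w * (r1 * x1) ≤ x3 := by
    have := mul_le_mul_of_nonneg_left a3 hw.le
    linarith
  have hKr : K * r1 < x3 := by
    have h1 : K < x1 * w := by rw [← div_lt_iff₀ hw]; linarith
    have := mul_lt_mul_of_pos_right h1 hr10'
    linarith
  obtain ⟨i, j, hij, hnz⟩ := nonvan ε K hε0 hε1 hK r1 r2 hr10 hr20 y1 y2 (by linarith) a6
    (by
      have : 2/ε ≤ r2 := by linarith
      rw [div_le_iff₀ hε0] at this; linarith) a3 A B hAB hA1 hB1 hA2 hB2 hA hB y3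
    (by
      have := Real.exp_lt_exp.2 hKr
      rwa [hx3, Real.exp_log (hden y3)] at this)
  have hlow := lowerb (C (C (y3.den:ℤ))*A + C (C y3.num)*B) r1 r2 ?_ ?_ y1 y2 i j hnz
  · have hup := upperE K c t w ε κ x1 x2 x3 r1 r2 hr10 hr20 hrr A B hA1 hB1 hA2 hB2 hA hB hV hW hκ.le hx10.le a3 hwΛ y1 y2 y3 hy1 hy2 hy3 i j hij
    have h1 : (1:ℝ) ≤ (y1.den : ℝ) ^ r1 * (y2.den : ℝ) ^ r2 * (y3.den * ((2 + |c|) * (Real.exp (K*r1) * Real.exp (c' * r1) *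
        Real.exp (-(κ * (t - ε) * (r1 * x1)))))) :=
      hlow.trans (mul_le_mul_of_nonneg_left hup (by positivity))
    have e1 : (y1.den : ℝ) ^ r1 = Real.exp (r1 * x1) := by
      rw [Real.exp_nat_mul, hx1, Real.exp_log (hden y1)]
    have e2 : (y2.den : ℝ) ^ r2 = Real.exp (r2 * x2) := by
      rw [Real.exp_nat_mul, hx2, Real.exp_log (hden y2)]
    have e3 : (y3.den : ℝ) = Real.exp x3 := by rw [hx3, Real.exp_log (hden y3)]
    have hc0 := abs_nonneg c
    have e4 : 2 + |c| ≤ Real.exp ((1+|c|) * r1) := by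
      have h1 : 1 + |c| ≤ (1+|c|) * r1 := by
        have : (1:ℝ) ≤ r1 := by exact_mod_cast hr10
        exact le_mul_of_one_le_right (by linarith) this
      have h2 := Real.add_one_le_exp ((1+|c|) * (r1:ℝ))
      linarith
    have h2 : (1:ℝ) ≤ Real.exp (r1 * x1) * Real.exp (r2 * x2) * (Real.exp x3 * (Real.exp ((1+|c|) * r1) * (Real.exp (K*r1) * Real.exp (c' * r1) *
        Real.exp (-(κ * (t - ε) * (r1 * x1)))))) := by
      rw [e1, e2, e3] at h1
      refine h1.trans ?_
      gcongr
    simp only [← Real.exp_add] at h2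
    rw [Real.one_le_exp_iff] at h2
    set Λ := (r1:ℝ) * x1 with hΛ
    have hΛ0 : 0 < Λ := by positivity
    have k1 : C1 * r1 ≤ γ/8 * Λ := by
      have h1 : 8*C1/γ ≤ x1 := by linarith
      rw [div_le_iff₀ hγ0] at h1
      have := mul_le_mul_of_nonneg_right h1 hr10'.le
      rw [hΛ]; linarith
    have k2 : κ * ε * Λ ≤ γ/4 * Λ := by gcongr
    have hw1 : w ≤ 1 := hwt.trans ht
    have k3 : r2 * x2 ≤ Λ + x1 := by rw [hΛ]; linarith
    have k4 : x3 ≤ w * Λ + w * x1 + w * x2 := by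
      have := mul_le_mul_of_nonneg_left k3 hw.le
      linarith
    have k5 : w * x1 ≤ x2 := (mul_le_of_le_one_left hx10.le hw1).trans hx12.le
    have k6 : w * x2 ≤ x2 := mul_le_of_le_one_left hx20.le hw1
    have k7 : 3 * x2 < γ/2 * Λ := by
      have h1 : (6/γ) * x2 < (r2 - 1) * x2 := by
        apply mul_lt_mul_of_pos_right _ hx20; linarith
      have h2 : (6/γ) * x2 < Λ := by linarith
      have h3 := mul_lt_mul_of_pos_left h2 (show 0 < γ/2 by positivity)
      have h4 : γ/2 * (6/γ * x2) = 3 * x2 := by field_simp; ring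
      linarith
    have k8 : κ * (t - ε) * Λ = (γ + 2 + w) * Λ - κ * ε * Λ := by rw [hγ]; ring
    have k9 : C1 * r1 = K * r1 + c' * r1 + (1+|c|)*r1 := by rw [hC1]; ring
    have k10 : (γ + 2 + w) * Λ = γ * Λ + 2 * Λ + w * Λ := by ring
    have k11 : 0 < γ * Λ := by positivity
    linarith
  · intro b
    rw [coeff_add, coeff_C_mul, coeff_C_mul]
    exact natDegree_add_le_of_degree_le ((natDegree_C_mul_le _ _).trans (hA1 b)) ((natDegree_C_mul_le _ _).trans (hB1 b))
  · exact natDegree_add_le_of_degree_le ((natDegree_C_mul_le _ _).trans hA2) ((natDegree_C_mul_le _ _).trans hB2)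

end FMO

namespace FMO

noncomputable def pk : ℕ → ℤ[X]
  | 0 => 1
  | 1 => X + 1
  | (k+2) => X * pk (k+1) - pk k

lemma pk_deg (k : ℕ) : ((pk k).Monic ∧ (pk k).natDegree = k) ∧
    ((pk (k+1)).Monic ∧ (pk (k+1)).natDegree = k+1) := by
  induction k with
  | zero =>
    refine ⟨⟨by simp [pk], by simp [pk]⟩, ?_, ?_⟩
    · show (X + 1 : ℤ[X]).Monic
      exact monic_X_add_C 1
    · show (X + 1 : ℤ[X]).natDegree = 0 + 1
      exact natDegree_X_add_C 1
  | succ k ih =>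
    refine ⟨ih.2, ?_⟩
    have e : pk (k+1+1) = X * pk (k+1) - pk k := rfl
    have hm : (X * pk (k+1)).Monic := monic_X.mul ih.2.1
    have hn : (X * pk (k+1)).natDegree = k + 2 := by
      rw [natDegree_X_mul ih.2.1.ne_zero, ih.2.2]
    have hlt : (pk k).natDegree < (X * pk (k+1)).natDegree := by rw [hn, ih.1.2]; omega
    rw [e]
    refine ⟨hm.sub_of_left (degree_lt_degree hlt), ?_⟩
    rw [natDegree_sub_eq_left_of_natDegree_lt hlt, hn]

lemma pk_eval (ω : ℂ) (hω : ω ≠ 0) (k : ℕ) :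
    (ω - 1) * ω ^ k * aeval (ω + ω⁻¹) (pk k) = ω ^ (2*k+1) - 1 ∧
    (ω - 1) * ω ^ (k+1) * aeval (ω + ω⁻¹) (pk (k+1)) = ω ^ (2*(k+1)+1) - 1 := by
  induction k with
  | zero =>
    refine ⟨by simp [pk], ?_⟩
    simp [pk]
    field_simp
    ring
  | succ k ih =>
    refine ⟨ih.2, ?_⟩
    have e : pk (k+1+1) = X * pk (k+1) - pk k := rfl
    rw [e, map_sub, map_mul, aeval_X]
    have h1 : ω * (ω + ω⁻¹) = ω^2 + 1 := by field_simp
    calc _ = ω * (ω + ω⁻¹) * ((ω - 1) * ω ^ (k+1) * aeval (ω + ω⁻¹) (pk (k+1)))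
          - ω^2 * ((ω - 1) * ω ^ k * aeval (ω + ω⁻¹) (pk k)) := by ring
      _ = _ := by rw [ih.1, ih.2, h1]; ring

lemma rootpoly (d : ℕ) (hd : 0 < d) (ω : ℂ) (h : ω ^ (2*d+1) = 1) (c : ℝ) (hc : (c:ℂ) = ω + ω⁻¹) :
    ∃ f : ℤ[X], f.Monic ∧ f.natDegree = d ∧ aeval c f = 0 := by
  have h0 : ω ≠ 0 := by rintro rfl; simp at h
  by_cases h1 : ω = 1
  · subst h1
    refine ⟨(X - C 2) * X ^ (d-1), (monic_X_sub_C 2).mul (monic_X_pow _), ?_, ?_⟩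
    · rw [(monic_X_sub_C (2:ℤ)).natDegree_mul (monic_X_pow _), natDegree_X_sub_C, natDegree_X_pow]; omega
    · have : c = 2 := by
        have h2 : (c:ℂ) = ((2:ℝ):ℂ) := by rw [hc]; push_cast; norm_num
        exact_mod_cast h2
      subst this; rw [map_mul, map_sub, aeval_X, aeval_C]; simp
  · refine ⟨pk d, (pk_deg d).1.1, (pk_deg d).1.2, ?_⟩
    have h2 := (pk_eval ω h0 d).1
    rw [h, sub_self, ← hc] at h2
    have h3 : aeval (c:ℂ) (pk d) = 0 := by
      rcases mul_eq_zero.1 h2 with h3 | h3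
      · rcases mul_eq_zero.1 h3 with h4 | h4
        · exact absurd (sub_eq_zero.1 h4) h1
        · exact absurd (pow_eq_zero_iff (by omega) |>.1 h4) h0
      · exact h3
    have h4 : aeval (c:ℂ) (pk d) = ((aeval c (pk d) : ℝ) : ℂ) := 
      aeval_algebraMap_apply ℂ c (pk d)
    rw [h4] at h3
    exact_mod_cast h3

lemma params (d : ℕ) (hd : 6 ≤ d) : ∃ t w κ : ℝ, 0 < w ∧ w ≤ t ∧ t ≤ 1 ∧
    d * (t^2 + (t-w)^2) < 4 ∧ 0 < κ ∧ 4 * κ < 2*d+1 ∧ 2 + w < κ * t := by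
  rcases hd.eq_or_lt with h | h
  · refine ⟨37/50, 2/5, 3.245, by norm_num, by norm_num, by norm_num, ?_, by norm_num, ?_, by norm_num⟩
    · rw [← h]; norm_num
    · rw [← h]; norm_num
  · have h7 : (7:ℝ) ≤ d := by exact_mod_cast h
    have hs : 0 < Real.sqrt d := Real.sqrt_pos.2 (by linarith)
    have hss : Real.sqrt d ^ 2 = d := Real.sq_sqrt (by linarith)
    have h1 : 8 / (2*(d:ℝ)-3) < 2 / Real.sqrt d := by
      rw [div_lt_div_iff₀ (by linarith) hs]
      apply lt_of_pow_lt_pow_left₀ 2 (by linarith)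
      rw [mul_pow, hss]; nlinarith
    obtain ⟨t, ht1, ht2⟩ := exists_between h1
    have ht0 : 0 < t := lt_trans (by apply div_pos <;> linarith) ht1
    have ht3 : d * t^2 < 4 := by
      rw [lt_div_iff₀ hs] at ht2
      have := pow_lt_pow_left₀ ht2 (by positivity) (two_ne_zero)
      rw [mul_pow, hss] at this; linarith
    have h2 : 2/t + 1 < (2*d+1)/4 := by
      rw [div_lt_iff₀ (by linarith)] at ht1
      have : 2/t < (2*d-3)/4 := by rw [div_lt_iff₀ ht0]; linarith
      linarith
    obtain ⟨κ, hk1, hk2⟩ := exists_between h2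
    have : 0 < 2/t := by positivity
    refine ⟨t, t, κ, ht0, le_rfl, ?_, by simpa using ht3, by linarith, by linarith, ?_⟩
    · nlinarith
    · have h3 : 2/t < κ - 1 := by linarith
      rw [div_lt_iff₀ ht0] at h3; linarith

lemma qbound (d : ℕ) (hd : 6 ≤ d) (c : ℝ) (ω : ℂ) (h : ω ^ (2*d+1) = 1) (hc : (c:ℂ) = ω + ω⁻¹) :
    ∃ U : ℝ, ∀ q a : ℤ, 2 ≤ q → ((a:ℝ)^2/q - 2 ≠ c) → 
      |(a:ℝ)^2/q - 2 - c| ^ 4 * (q:ℝ)^(2*d+1) ≤ 16 → (q:ℝ) ≤ U := by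
  obtain ⟨f, hf, hfd, hfc⟩ := rootpoly d (by omega) ω h c hc
  obtain ⟨t, w, κ, hw, hwt, ht, hts, hκ, hκ4, hκt⟩ := params d hd
  have hfin := roth d f hf hfd (by omega) c hfc t w κ hw hwt ht hts hκ hκt
  obtain ⟨U, hU⟩ := (hfin.image (fun y : ℚ => 16 / |(y:ℝ) - c|^4)).bddAbove
  refine ⟨max U (Real.exp (Real.log 16 / (2*d+1-4*κ))), fun q a hq hne hle => ?_⟩
  by_contra! hlt
  rw [max_lt_iff] at hlt
  obtain ⟨hq1, hq2⟩ := hlt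
  have hq0 : (2:ℝ) ≤ q := by exact_mod_cast hq
  set y : ℚ := (a:ℚ)^2/q - 2 with hy
  have hyR : (y:ℝ) = (a:ℝ)^2/q - 2 := by rw [hy]; push_cast; rfl
  rw [← hyR] at hne hle
  have hpos : 0 < |(y:ℝ) - c| := abs_pos.2 (sub_ne_zero.2 hne)
  have hden : (y.den : ℝ) ≤ q := by
    have h1 : y = Rat.divInt (a^2 - 2*q) q := by
      rw [hy, Rat.divInt_eq_div]; push_cast
      have : (q:ℚ) ≠ 0 := by exact_mod_cast (by omega : q ≠ 0)
      field_simp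
    have h2 : (y.den : ℤ) ∣ q := by rw [h1]; exact Rat.den_dvd _ _
    have h3 := Int.le_of_dvd (by omega) h2
    exact_mod_cast h3
  have hden0 : (0:ℝ) < y.den := by exact_mod_cast y.den_pos
  have hl1 : 4 * Real.log |(y:ℝ) - c| + (2*d+1) * Real.log q ≤ Real.log 16 := by
    have := Real.log_le_log (by positivity) hle
    rw [Real.log_mul (by positivity) (by positivity), Real.log_pow, Real.log_pow] at this
    push_cast at this; linarith
  have hl2 : Real.log 16 < Real.log q * (2*d+1-4*κ) := by
    rw [← div_lt_iff₀ (by linarith), ← Real.exp_lt_exp, Real.exp_log (by linarith)]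
    exact hq2
  have hl3 : Real.log y.den ≤ Real.log q := Real.log_le_log hden0 hden
  have hmem : |(y:ℝ) - c| ≤ Real.exp (-(κ * Real.log y.den)) := by
    rw [← Real.log_le_iff_le_exp hpos]
    have := mul_le_mul_of_nonneg_left hl3 hκ.le
    linarith
  have hU1 : 16 / |(y:ℝ) - c|^4 ≤ U := hU ⟨y, hmem, rfl⟩
  have : (q:ℝ) ≤ 16 / |(y:ℝ) - c|^4 := by
    rw [le_div_iff₀ (by positivity)]
    have h1 : (q:ℝ) ≤ (q:ℝ)^(2*d+1) := le_self_pow₀ (by linarith) (by omega)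
    have h2 : |(y:ℝ) - c|^4 * q ≤ |(y:ℝ) - c|^4 * (q:ℝ)^(2*d+1) := by gcongr
    linarith
  linarith

end FMO

namespace FMO

lemma conj_facts (q a : ℤ) (hqa : a^2 ≤ 4*q) (α : ℂ) (h : α ^ 2 - a * α + q = 0) :
    α + (starRingEnd ℂ) α = a ∧ α * (starRingEnd ℂ) α = q := by
  have hqa' : (a:ℝ)^2 ≤ 4*q := by exact_mod_cast hqa
  have h1 := congrArg Complex.re h
  have h2 := congrArg Complex.im h
  simp [pow_two] at h1 h2
  have hx : 2 * α.re = a := by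
    have h3 : α.im * (2 * α.re - a) = 0 := by linarith
    rcases mul_eq_zero.1 h3 with h4 | h4
    · rw [h4] at h1
      have : (2 * α.re - a)^2 ≤ 0 := by nlinarith
      have := pow_eq_zero_iff (two_ne_zero) |>.1 (le_antisymm this (sq_nonneg _))
      linarith
    · linarith
  constructor
  · rw [Complex.add_conj]; exact_mod_cast congrArg (fun r : ℝ => (r:ℂ)) hx
  · rw [Complex.mul_conj, Complex.normSq_apply]
    have : α.re * α.re + α.im * α.im = q := by rw [← hx] at h1; linarith
    exact_mod_cast congrArg (fun r : ℝ => (r:ℂ)) this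

lemma trace_int (q a : ℤ) (α β : ℂ) (h1 : α + β = a) (h2 : α * β = q) (k : ℕ) :
    (∃ b : ℤ, α^k + β^k = b) ∧ ∃ b : ℤ, α^(k+1) + β^(k+1) = b := by
  induction k with
  | zero => exact ⟨⟨2, by norm_num⟩, ⟨a, by simpa using h1⟩⟩
  | succ k ih =>
    refine ⟨ih.2, ?_⟩
    obtain ⟨⟨b, hb⟩, ⟨c, hc⟩⟩ := ih
    refine ⟨a*c - q*b, ?_⟩
    push_cast
    rw [← hb, ← hc, ← h1, ← h2]; ring

lemma even_case (q a : ℤ) (hq : 2 ≤ q) (α : ℂ) (h1 : α + (starRingEnd ℂ) α = a)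
    (h2 : α * (starRingEnd ℂ) α = q) (k : ℕ) (hk : 0 < k)
    (h : α ^ (2*k) + (starRingEnd ℂ) α ^ (2*k) = -((⌊2 * Real.sqrt q ^ (2*k)⌋ : ℤ) : ℂ)) :
    (α / (Real.sqrt q : ℂ)) ^ (4*k) = 1 := by
  have hq0 : (0:ℝ) ≤ q := by exact_mod_cast (by omega : (0:ℤ) ≤ q)
  have hs : Real.sqrt q ^ 2 = q := Real.sq_sqrt hq0
  have hfl : ⌊2 * Real.sqrt q ^ (2*k)⌋ = 2 * q^k := by
    rw [pow_mul, hs]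
    have : (2 * (q:ℝ)^k) = ((2*q^k : ℤ) : ℝ) := by push_cast; rfl
    rw [this, Int.floor_intCast]
  rw [hfl] at h
  obtain ⟨b, hb⟩ := (trace_int q a α _ h1 h2 k).1
  have hqk : α^k * (starRingEnd ℂ) α^k = (q:ℂ)^k := by rw [← mul_pow, h2]
  push_cast at h
  have hz : (α^k + (starRingEnd ℂ) α^k)^2 = 0 := by
    have : (α^k + (starRingEnd ℂ) α^k)^2 = α ^ (2*k) + (starRingEnd ℂ) α ^ (2*k) + 2 * (α^k * (starRingEnd ℂ) α^k) := by ring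
    rw [this, hqk, h]; ring
  have hz' := pow_eq_zero_iff (two_ne_zero) |>.1 hz
  have h3 : (starRingEnd ℂ) α^k = - α^k := by linear_combination hz'
  rw [h3] at hqk
  have h4 : α^(4*k) = (q:ℂ)^(2*k) := by
    have : (q:ℂ)^(2*k) = ((q:ℂ)^k)^2 := by ring
    rw [this, ← hqk]; ring
  have hsC : ((Real.sqrt q : ℝ) : ℂ)^2 = q := by exact_mod_cast congrArg (fun r : ℝ => (r:ℂ)) hs
  have h5 : ((Real.sqrt q : ℝ) : ℂ)^(4*k) = (q:ℂ)^(2*k) := by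
    rw [← hsC, ← pow_mul]; congr 1; ring
  have hqC : (q:ℂ) ≠ 0 := by exact_mod_cast (by omega : q ≠ 0)
  rw [div_pow, h4, h5, div_self (pow_ne_zero _ hqC)]

lemma exp_diff (u v : ℝ) : ‖Complex.exp (Complex.I * u) - Complex.exp (Complex.I * v)‖ ≤ |u - v| := by
  have h : Complex.exp (Complex.I * u) - Complex.exp (Complex.I * v) =
      Complex.exp (Complex.I * v) * (Complex.exp (Complex.I * (u - v : ℝ)) - 1) := by
    rw [mul_sub, ← Complex.exp_add]; push_cast; ring_nf
  have h2 : ‖Complex.exp (Complex.I * v)‖ = 1 := by rw [mul_comm]; exact Complex.norm_exp_ofReal_mul_I v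
  rw [h, norm_mul, h2, one_mul]
  exact Real.norm_exp_I_mul_ofReal_sub_one_le

lemma odd_case (q : ℤ) (hq : 2 ≤ q) (α : ℂ) (him : 0 ≤ α.im)
    (h2 : α * (starRingEnd ℂ) α = q) (n : ℕ) (hn : 13 ≤ n) (hodd : Odd n)
    (h : α ^ n + (starRingEnd ℂ) α ^ n = -((⌊2 * Real.sqrt q ^ n⌋ : ℤ) : ℂ)) :
    ∃ m : ℕ, m ≤ n ∧ ‖α ^ 2 / q - Complex.exp (2 * Real.pi * Complex.I * m / n)‖ ^ 4 * (q : ℝ) ^ n ≤ 1 := by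
  have hq0 : (2:ℝ) ≤ q := by exact_mod_cast hq
  set s := Real.sqrt q with hsd
  have hs : s ^ 2 = q := Real.sq_sqrt (by linarith)
  have hs0 : 0 < s := Real.sqrt_pos.2 (by linarith)
  have hnorm : ‖α‖ = s := by
    have h3 : ((‖α‖^2 : ℝ) : ℂ) = (q:ℝ) := by
      rw [← Complex.normSq_eq_norm_sq, ← Complex.mul_conj, h2]; simp
    have h4 : ‖α‖^2 = q := by exact_mod_cast h3
    rw [← hs] at h4
    exact (pow_left_inj₀ (norm_nonneg _) hs0.le two_ne_zero).1 h4
  set θ := Complex.arg α with hθ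
  have hθ0 : 0 ≤ θ := Complex.arg_nonneg_iff.2 him
  have hθπ : θ ≤ Real.pi := Complex.arg_le_pi α
  have hα : α = s * Complex.exp (Complex.I * θ) := by
    rw [← hnorm, mul_comm Complex.I, Complex.norm_mul_exp_arg_mul_I]
  have hpi := Real.pi_pos
  set φ := n * θ / 2 with hφ
  have hn0 : (13:ℝ) ≤ n := by exact_mod_cast hn
  have hφ0 : 0 ≤ φ := by positivity
  have hcos : 4 * s^n * Real.cos φ ^ 2 < 1 := by
    have h3 : α ^ n = (s^n : ℝ) * Complex.exp ((n * θ : ℝ) * Complex.I) := by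
      rw [hα, mul_pow, ← Complex.exp_nat_mul]; push_cast; ring_nf
    have h4 := congrArg Complex.re h
    rw [← map_pow, Complex.add_conj, h3, Complex.re_ofReal_mul, Complex.exp_ofReal_mul_I_re] at h4
    simp only [Complex.ofReal_re, Complex.neg_re, Complex.intCast_re] at h4
    have h5 := Int.lt_floor_add_one (2 * s^n)
    have h6 : Real.cos (n*θ) = 2 * Real.cos φ^2 - 1 := by
      rw [← Real.cos_two_mul, hφ]; congr 1; ring
    rw [h6] at h4
    nlinarith
  set j := ⌊φ / Real.pi⌋₊ with hj
  have a1 : (j:ℝ) ≤ φ / Real.pi := Nat.floor_le (by positivity)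
  have a2 : φ / Real.pi < j + 1 := Nat.lt_floor_add_one _
  rw [le_div_iff₀ hpi] at a1
  rw [div_lt_iff₀ hpi] at a2
  set δ := φ - j * Real.pi - Real.pi/2 with hδ
  have hδ1 : |δ| ≤ Real.pi/2 := by rw [abs_le]; constructor <;> rw [hδ] <;> linarith
  have hsin := Real.mul_abs_le_abs_sin hδ1
  have hsc : |Real.sin δ| = |Real.cos φ| := by
    have e : φ = (δ + Real.pi/2) + j * Real.pi := by rw [hδ]; ring
    rw [e, Real.cos_add_nat_mul_pi, Real.cos_add_pi_div_two, abs_mul, abs_pow, abs_neg, abs_neg, abs_one, one_pow, one_mul]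
  rw [hsc] at hsin
  refine ⟨2*j+1, ?_, ?_⟩
  · have h3 : φ ≤ n * Real.pi / 2 := by rw [hφ]; gcongr
    have h4 : (2*j:ℝ) * Real.pi ≤ n * Real.pi := by linarith
    have h5 : (2*j:ℝ) ≤ n := le_of_mul_le_mul_right h4 hpi
    have h6 : 2*j ≤ n := by exact_mod_cast h5
    obtain ⟨k, rfl⟩ := hodd
    omega
  · have hqC : (q:ℂ) = (s:ℂ)^2 := by rw [← Complex.ofReal_pow, hs]; simp
    have hsC : (s:ℂ) ≠ 0 := by exact_mod_cast hs0.ne'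
    have e1 : α^2/q = Complex.exp (Complex.I * (2*θ : ℝ)) := by
      rw [hα, hqC, mul_pow, mul_div_cancel_left₀ _ (pow_ne_zero _ hsC), ← Complex.exp_nat_mul]
      push_cast; ring_nf
    have e2 : Complex.exp (2 * Real.pi * Complex.I * (2*j+1:ℕ) / n) =
        Complex.exp (Complex.I * (2 * Real.pi * (2*j+1) / n : ℝ)) := by
      congr 1; push_cast; ring
    rw [e1, e2]
    have h3 := exp_diff (2*θ) (2 * Real.pi * (2*j+1) / n)
    have h4 : 2*θ - 2 * Real.pi * (2*j+1) / n = (4/n) * δ := by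
      rw [hδ, hφ]; field_simp; ring
    have h5 : |(4/n) * δ| ≤ |Real.cos φ| := by
      rw [abs_mul, abs_of_pos (by positivity)]
      refine le_trans ?_ hsin
      refine mul_le_mul_of_nonneg_right ?_ (abs_nonneg _)
      rw [div_le_div_iff₀ (by linarith) hpi]
      have := Real.pi_lt_four; linarith
    rw [h4] at h3
    have h6 := pow_le_pow_left₀ (norm_nonneg _) (h3.trans h5) 4
    have h7 : |Real.cos φ|^4 = (Real.cos φ^2)^2 := by
      rw [← sq_abs (Real.cos φ)]; ring
    rw [h7] at h6
    have h8 : (q:ℝ)^n = (s^n)^2 := by rw [← hs]; ring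
    rw [h8]
    refine (mul_le_mul_of_nonneg_right h6 (by positivity)).trans ?_
    rw [← mul_pow]
    have h9 : 0 ≤ Real.cos φ^2 * s^n := by positivity
    have h10 : Real.cos φ^2 * s^n ≤ 1 := by linarith
    exact pow_le_one₀ h9 h10

lemma c_facts (q a : ℤ) (hq : 2 ≤ q) (α : ℂ) (h1 : α + (starRingEnd ℂ) α = a)
    (h2 : α * (starRingEnd ℂ) α = q) (ω : ℂ) (hω : ω * (starRingEnd ℂ) ω = 1) (n : ℕ) (hn : 0 < n)
    (hωn : ω^n = 1) (hx : (α^2/q)^n ≠ 1)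
    (hle : ‖α ^ 2 / q - ω‖ ^ 4 * (q : ℝ) ^ n ≤ 1) :
    ((a:ℝ)^2/q - 2 ≠ 2 * ω.re) ∧ |(a:ℝ)^2/q - 2 - 2 * ω.re| ^ 4 * (q:ℝ)^n ≤ 16 := by
  have hqC : (q:ℂ) ≠ 0 := by exact_mod_cast (by omega : q ≠ 0)
  have hq0 : (2:ℝ) ≤ q := by exact_mod_cast hq
  set x := α^2/q with hxd
  have hcx : (starRingEnd ℂ) x = (starRingEnd ℂ) α^2/q := by rw [hxd]; simp
  have e1 : x + (starRingEnd ℂ) x = (((a:ℝ)^2/q - 2 : ℝ) : ℂ) := by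
    rw [hcx, hxd]; push_cast; rw [← h1]; field_simp; rw [← h2]; ring
  have e2 : x * (starRingEnd ℂ) x = 1 := by
    rw [hcx, hxd, div_mul_div_comm, ← mul_pow, h2, pow_two, div_self (mul_ne_zero hqC hqC)]
  have e3 : (a:ℝ)^2/q - 2 = 2 * x.re := by
    rw [Complex.add_conj] at e1; exact_mod_cast e1.symm
  constructor
  · intro heq
    have e4 : x + (starRingEnd ℂ) x = ω + (starRingEnd ℂ) ω := by
      rw [Complex.add_conj, Complex.add_conj, ← e3, heq]
    have e5 : (x - ω) * (x - (starRingEnd ℂ) ω) = 0 := by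
      linear_combination x * e4 - e2 + hω
    rcases mul_eq_zero.1 e5 with h | h
    · exact hx (by rw [sub_eq_zero.1 h, hωn])
    · exact hx (by rw [sub_eq_zero.1 h, ← map_pow, hωn, map_one])
  · have h3 : |(a:ℝ)^2/q - 2 - 2 * ω.re| ≤ 2 * ‖x - ω‖ := by
      have := Complex.abs_re_le_norm (x - ω)
      rw [e3, ← mul_sub, abs_mul, ← Complex.sub_re, abs_two]; linarith
    have h4 := pow_le_pow_left₀ (abs_nonneg _) h3 4
    have h5 := mul_le_mul_of_nonneg_right h4 (show 0 ≤ (q:ℝ)^n by positivity)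
    have h6 : (2 * ‖x - ω‖)^4 * (q:ℝ)^n = 16 * (‖x - ω‖^4 * (q:ℝ)^n) := by ring
    linarith

theorem qb : ∃ U : ℝ, ∀ (q a : ℤ) (α : ℂ) (n : ℕ), 2 ≤ q → a^2 ≤ 4*q → α ^ 2 - a * α + q = 0 → 0 ≤ α.im →
    (¬ ∃ k : ℕ, 0 < k ∧ (α / (Real.sqrt q : ℂ)) ^ k = 1) → 13 ≤ n →
    α ^ n + (starRingEnd ℂ) α ^ n = -((⌊2 * Real.sqrt q ^ n⌋ : ℤ) : ℂ) → (q:ℝ) ≤ U := by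
  obtain ⟨N0, hT1⟩ := T1
  have hω : ∀ n m : ℕ, 0 < n → (Complex.exp (2 * Real.pi * Complex.I * m / n))^n = 1 := by
    intro n m hn
    have : (n:ℂ) ≠ 0 := by exact_mod_cast hn.ne'
    rw [← Complex.exp_nat_mul, Complex.exp_eq_one_iff]
    refine ⟨m, ?_⟩
    push_cast; field_simp
  have hω2 : ∀ n m : ℕ, Complex.exp (2 * Real.pi * Complex.I * m / n) * (starRingEnd ℂ) (Complex.exp (2 * Real.pi * Complex.I * m / n)) = 1 := by
    intro n m
    rw [← Complex.exp_conj, ← Complex.exp_add, Complex.exp_eq_one_iff]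
    refine ⟨0, ?_⟩
    have h2 : (starRingEnd ℂ) (2:ℂ) = 2 := Complex.conj_ofNat 2
    simp [h2]; ring
  have hB : ∀ n m : ℕ, ∃ U : ℝ, Odd n → 13 ≤ n → ∀ q a : ℤ, 2 ≤ q →
      ((a:ℝ)^2/q - 2 ≠ 2 * (Complex.exp (2 * Real.pi * Complex.I * m / n)).re) → 
      |(a:ℝ)^2/q - 2 - 2 * (Complex.exp (2 * Real.pi * Complex.I * m / n)).re| ^ 4 * (q:ℝ)^n ≤ 16 → (q:ℝ) ≤ U := by
    intro n m
    by_cases ho : Odd n ∧ 13 ≤ n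
    · obtain ⟨⟨d, hd⟩, hn⟩ := ho
      obtain ⟨U, hU⟩ := qbound d (by omega) (2 * (Complex.exp (2 * Real.pi * Complex.I * m / n)).re)
        (Complex.exp (2 * Real.pi * Complex.I * m / n)) (by rw [← hd]; exact hω n m (by omega))
        (by rw [← Complex.add_conj, eq_inv_of_mul_eq_one_right (hω2 n m)])
      refine ⟨U, fun _ _ => ?_⟩
      rw [← hd] at hU
      exact hU
    · exact ⟨0, fun h1 h2 => absurd ⟨h1, h2⟩ ho⟩
  choose U hU using hB
  refine ⟨∑ n ∈ Finset.range N0, ∑ m ∈ Finset.range N0, |U n m|, ?_⟩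
  intro q a α n hq hqa hα him hord hn h
  obtain ⟨h1, h2⟩ := conj_facts q a hqa α hα
  have hq0 : (0:ℝ) ≤ q := by exact_mod_cast (by omega : (0:ℤ) ≤ q)
  have hsC : ((Real.sqrt q : ℝ) : ℂ)^2 = q := by
    exact_mod_cast congrArg (fun r : ℝ => (r:ℂ)) (Real.sq_sqrt hq0)
  have hxk : ∀ k : ℕ, 0 < k → (α^2/q)^k ≠ 1 := by
    intro k hk hk1
    refine hord ⟨2*k, by omega, ?_⟩
    rw [pow_mul, div_pow, hsC, hk1]
  rcases Nat.even_or_odd n with he | ho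
  · obtain ⟨k, rfl⟩ := he
    rw [← two_mul] at h
    exact absurd ⟨4*k, by omega, even_case q a hq α h1 h2 k (by omega) h⟩ hord
  · obtain ⟨m, hm, hle⟩ := odd_case q hq α him h2 n hn ho h
    have hnN : n < N0 := by
      by_contra! hN
      exact hT1 q a α n m hq h1 h2 hN hm hxk hle
    obtain ⟨hne, hle2⟩ := c_facts q a hq α h1 h2 _ (hω2 n m) n (by omega) (hω n m (by omega)) (hxk n (by omega)) hle
    have h3 : (q:ℝ) ≤ |U n m| := (hU n m ho hn q a hq hne hle2).trans (le_abs_self _)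
    have hmN : m < N0 ∨ m = N0 := by omega
    refine h3.trans ?_
    refine le_trans ?_ (Finset.single_le_sum (f := fun n => ∑ m ∈ Finset.range N0, |U n m|) (fun i _ => Finset.sum_nonneg fun _ _ => abs_nonneg _) (Finset.mem_range.2 hnN))
    exact Finset.single_le_sum (f := fun m => |U n m|) (fun i _ => abs_nonneg _) (Finset.mem_range.2 (by omega))

end FMO

/-- There are only finitely many ordinary pairs `(q, a₁)` (with `q ≥ 2`,
`a₁² ≤ 4q`) such that `−aₙ = ⌊2·q^{n/2}⌋` for some integer `n ≥ 13`. -/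
theorem finitely_many_ordinary_pairs :
    {p : ℤ × ℤ | 2 ≤ p.1 ∧ p.2 ^ 2 ≤ 4 * p.1 ∧
      ∃ α : ℂ, α ^ 2 - p.2 * α + p.1 = 0 ∧ 0 ≤ α.im ∧
        (¬ ∃ k : ℕ, 0 < k ∧ (α / (Real.sqrt p.1 : ℂ)) ^ k = 1) ∧
        ∃ n : ℕ, 13 ≤ n ∧
          α ^ n + (starRingEnd ℂ) α ^ n = -((⌊2 * Real.sqrt p.1 ^ n⌋ : ℤ) : ℂ)}.Finite := by
  obtain ⟨U, hU⟩ := FMO.qb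
  refine ((Set.finite_Icc (2:ℤ) ⌊U⌋).prod (Set.finite_Icc (-(4*⌊U⌋)) (4*⌊U⌋))).subset ?_
  rintro ⟨q, a⟩ ⟨hq, hqa, α, hα, him, hord, n, hn, h⟩
  have h1 : q ≤ ⌊U⌋ := Int.le_floor.2 (hU q a α n hq hqa hα him hord hn h)
  simp only at hq hqa
  refine ⟨⟨hq, h1⟩, ?_⟩
  simp only [Set.mem_Icc]
  constructor <;> nlinarith
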